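/- arXiv:0810.1195 — 5 statements merged into one kernel-verified Lean document; each statement's English description precedes it below -/
import Mathlib

section
/- Let E ≠ 0, σ ∈ ℝ, μ² ∈ ℝ, and let φ: ℝ² → ℂ be a Schwartz function. Then the free duality-covariant action is invariant under the symplectic Fourier transform: ∫_{ℝ²} conj(φ̃(t,x))·(σ (D²φ̃)(t,x) + (1−σ)(D̃²φ̃)(t,x) + μ² φ̃(t,x)) dt dx = ∫_{ℝ²} conj(φ(t,x))·(σ (D²φ)(t,x) + (1−σ)(D̃²φ)(t,x) + μ² φ(t,x)) dt dx. -/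
open MeasureTheory Filter Complex

/-- Partial derivative in the first ("time") variable of a curried function. -/
noncomputable def dT (f : ℝ → ℝ → ℂ) (t x : ℝ) : ℂ := deriv (fun s => f s x) t

/-- Partial derivative in the second ("space") variable of a curried function. -/
noncomputable def dX (f : ℝ → ℝ → ℂ) (t x : ℝ) : ℂ := deriv (fun s => f t s) x

/-- The Klein–Gordon operator `D²` in a constant electric background `E`:
`D²f = ½[−(∂_t²f − ∂_x²f) − 2iE(x ∂_t f + t ∂_x f) − E²(t² − x²)f]`. -/
noncomputable def D2 (E : ℝ) (f : ℝ → ℝ → ℂ) (t x : ℝ) : ℂ :=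
  (1 / 2 : ℂ) *
    (-(dT (dT f) t x - dX (dX f) t x)
      - 2 * Complex.I * (E : ℂ) * ((x : ℂ) * dT f t x + (t : ℂ) * dX f t x)
      - (E : ℂ) ^ 2 * ((t : ℂ) ^ 2 - (x : ℂ) ^ 2) * f t x)

/-- The dual operator `D̃²`:
`D̃²f = ½[−(∂_t²f − ∂_x²f) + 2iE(x ∂_t f + t ∂_x f) − E²(t² − x²)f]`. -/
noncomputable def Dt2 (E : ℝ) (f : ℝ → ℝ → ℂ) (t x : ℝ) : ℂ :=
  (1 / 2 : ℂ) *
    (-(dT (dT f) t x - dX (dX f) t x)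
      + 2 * Complex.I * (E : ℂ) * ((x : ℂ) * dT f t x + (t : ℂ) * dX f t x)
      - (E : ℂ) ^ 2 * ((t : ℂ) ^ 2 - (x : ℂ) ^ 2) * f t x)

/-- The symplectic Fourier transform
`φ̃(t,x) := (|E|/2π) ∫_{ℝ²} e^{−iE(x t′ − t x′)} φ(t′,x′) dt′ dx′`. -/
noncomputable def sympFT (E : ℝ) (f : ℝ → ℝ → ℂ) (t x : ℝ) : ℂ :=
  ((|E| / (2 * Real.pi) : ℝ) : ℂ) *
    ∫ q : ℝ × ℝ,
      Complex.exp (-Complex.I * (E : ℂ) * ((x : ℂ) * (q.1 : ℂ) - (t : ℂ) * (q.2 : ℂ))) *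
        f q.1 q.2

namespace FreeActionAux

open SchwartzMap LineDeriv FourierTransform

/-- The linear change of variables `(t,x) ↦ (E/2π)(x - i t)`. -/
noncomputable def rotEquiv (E : ℝ) (hE : E ≠ 0) : (ℝ × ℝ) ≃L[ℝ] ℂ :=
  (LinearEquiv.ofLinearMap
    (M := ℝ × ℝ) (M₂ := ℂ)
    { toFun := fun p => (E / (2 * Real.pi)) • (-Complex.I * equivRealProdCLM.symm p)
      map_add' := fun p q => by rw [map_add, mul_add, smul_add]
      map_smul' := fun r p => by
        rw [map_smul, mul_smul_comm, smul_comm, RingHom.id_apply] }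
    { toFun := fun z => equivRealProdCLM ((E / (2 * Real.pi))⁻¹ • (Complex.I * z))
      map_add' := fun p q => by rw [mul_add, smul_add, map_add]
      map_smul' := fun r p => by
        rw [mul_smul_comm, smul_comm, map_smul, RingHom.id_apply] }
    (by
      have hr : E / (2 * Real.pi) ≠ 0 := div_ne_zero hE (by positivity)
      ext z
      all_goals
        simp only [LinearMap.comp_apply, LinearMap.coe_mk, AddHom.coe_mk,
          ContinuousLinearEquiv.symm_apply_apply, mul_smul_comm, smul_smul, mul_inv_cancel₀ hr,
          one_smul, LinearMap.id_apply, ← mul_assoc]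
        simp)
    (by
      have hr : E / (2 * Real.pi) ≠ 0 := div_ne_zero hE (by positivity)
      refine LinearMap.ext fun z => ?_
      simp only [LinearMap.comp_apply, LinearMap.coe_mk, AddHom.coe_mk,
          mul_smul_comm, smul_smul, inv_mul_cancel₀ hr,
          one_smul, LinearMap.id_apply, ← mul_assoc]
      simp)).toContinuousLinearEquiv

lemma rotEquiv_apply (E : ℝ) (hE : E ≠ 0) (p : ℝ × ℝ) :
    rotEquiv E hE p = (E / (2 * Real.pi)) • (-Complex.I * equivRealProdCLM.symm p) := rfl

lemma rotEquiv_re (E : ℝ) (hE : E ≠ 0) (p : ℝ × ℝ) :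
    (rotEquiv E hE p).re = E / (2 * Real.pi) * p.2 := by
  rw [rotEquiv_apply]
  change ((E / (2 * Real.pi)) • (-Complex.I * (⟨p.1, p.2⟩ : ℂ))).re = _
  simp [Complex.smul_re, Complex.smul_im, -Complex.real_smul]

lemma rotEquiv_im (E : ℝ) (hE : E ≠ 0) (p : ℝ × ℝ) :
    (rotEquiv E hE p).im = -(E / (2 * Real.pi) * p.1) := by
  rw [rotEquiv_apply]
  change ((E / (2 * Real.pi)) • (-Complex.I * (⟨p.1, p.2⟩ : ℂ))).im = _
  simp [Complex.smul_re, Complex.smul_im, -Complex.real_smul]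

/-- The symplectic Fourier transform on Schwartz space. -/
noncomputable def S (E : ℝ) (hE : E ≠ 0) : 𝓢(ℝ × ℝ, ℂ) →L[ℂ] 𝓢(ℝ × ℝ, ℂ) :=
  ((|E| / (2 * Real.pi) : ℝ) : ℂ) •
    ((compCLMOfContinuousLinearEquiv ℂ (rotEquiv E hE)) ∘L
      (fourierCLM ℂ 𝓢(ℂ, ℂ)) ∘L (compCLMOfContinuousLinearEquiv ℂ equivRealProdCLM))

lemma S_eq (E : ℝ) (hE : E ≠ 0) (f : 𝓢(ℝ × ℝ, ℂ)) :
    S E hE f = ((|E| / (2 * Real.pi) : ℝ) : ℂ) •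
      compCLMOfContinuousLinearEquiv ℂ (rotEquiv E hE)
        (𝓕 (compCLMOfContinuousLinearEquiv ℂ equivRealProdCLM f)) := rfl

lemma S_apply' (E : ℝ) (hE : E ≠ 0) (f : 𝓢(ℝ × ℝ, ℂ)) (p : ℝ × ℝ) :
    S E hE f p = ((|E| / (2 * Real.pi) : ℝ) : ℂ) *
        (𝓕 (compCLMOfContinuousLinearEquiv ℂ equivRealProdCLM f)) (rotEquiv E hE p) := rfl

lemma S_apply (E : ℝ) (hE : E ≠ 0) (f : 𝓢(ℝ × ℝ, ℂ)) (t x : ℝ) :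
    S E hE f (t, x) = sympFT E (fun t x => f (t, x)) t x := by
  rw [S_apply', sympFT, fourier_coe, Real.fourier_eq']
  congr 1
  rw [← (Complex.volume_preserving_equiv_real_prod).integral_comp
    measurableEquivRealProd.measurableEmbedding]
  congr 1
  ext z
  simp only [compCLMOfContinuousLinearEquiv_apply, Function.comp_apply, smul_eq_mul,
    measurableEquivRealProd_apply, Complex.inner, Complex.mul_re, Complex.conj_re,
    Complex.conj_im, rotEquiv_re, rotEquiv_im]
  congr 2
  have : (Real.pi : ℂ) ≠ 0 := by exact_mod_cast Real.pi_ne_zero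
  push_cast
  field_simp

lemma dT_eq (f : 𝓢(ℝ × ℝ, ℂ)) :
    dT (fun t x => f (t, x)) = fun t x => (∂_{((1 : ℝ), (0 : ℝ))} f) (t, x) := by
  ext t x
  rw [dT, lineDerivOp_apply_eq_fderiv]
  have h := (f.hasFDerivAt (t, x)).comp_hasDerivAt t
    ((hasDerivAt_id t).prodMk (hasDerivAt_const t x))
  exact h.deriv

lemma dX_eq (f : 𝓢(ℝ × ℝ, ℂ)) :
    dX (fun t x => f (t, x)) = fun t x => (∂_{((0 : ℝ), (1 : ℝ))} f) (t, x) := by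
  ext t x
  rw [dX, lineDerivOp_apply_eq_fderiv]
  have h := (f.hasFDerivAt (t, x)).comp_hasDerivAt x
    ((hasDerivAt_const x t).prodMk (hasDerivAt_id x))
  exact h.deriv

lemma tg1 : Function.HasTemperateGrowth (fun p : ℝ × ℝ => p.1) :=
  (ContinuousLinearMap.fst ℝ ℝ ℝ).hasTemperateGrowth

lemma tg2 : Function.HasTemperateGrowth (fun p : ℝ × ℝ => p.2) :=
  (ContinuousLinearMap.snd ℝ ℝ ℝ).hasTemperateGrowth

lemma tgT : Function.HasTemperateGrowth (fun p : ℝ × ℝ => (p.1 : ℂ)) :=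
  Function.Complex.hasTemperateGrowth_ofReal.comp tg1

lemma tgX : Function.HasTemperateGrowth (fun p : ℝ × ℝ => (p.2 : ℂ)) :=
  Function.Complex.hasTemperateGrowth_ofReal.comp tg2

/-- Multiplication by `t`. -/
noncomputable def mT : 𝓢(ℝ × ℝ, ℂ) →L[ℂ] 𝓢(ℝ × ℝ, ℂ) :=
  smulLeftCLM ℂ (fun p : ℝ × ℝ => (p.1 : ℂ))

/-- Multiplication by `x`. -/
noncomputable def mX : 𝓢(ℝ × ℝ, ℂ) →L[ℂ] 𝓢(ℝ × ℝ, ℂ) :=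
  smulLeftCLM ℂ (fun p : ℝ × ℝ => (p.2 : ℂ))

/-- Derivative in `t`. -/
noncomputable def pT : 𝓢(ℝ × ℝ, ℂ) →L[ℂ] 𝓢(ℝ × ℝ, ℂ) :=
  lineDerivOpCLM ℂ 𝓢(ℝ × ℝ, ℂ) ((1 : ℝ), (0 : ℝ))

/-- Derivative in `x`. -/
noncomputable def pX : 𝓢(ℝ × ℝ, ℂ) →L[ℂ] 𝓢(ℝ × ℝ, ℂ) :=
  lineDerivOpCLM ℂ 𝓢(ℝ × ℝ, ℂ) ((0 : ℝ), (1 : ℝ))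

lemma mT_apply (f : 𝓢(ℝ × ℝ, ℂ)) (p : ℝ × ℝ) : mT f p = p.1 * f p := by
  rw [mT, smulLeftCLM_apply_apply tgT, smul_eq_mul]

lemma mX_apply (f : 𝓢(ℝ × ℝ, ℂ)) (p : ℝ × ℝ) : mX f p = p.2 * f p := by
  rw [mX, smulLeftCLM_apply_apply tgX, smul_eq_mul]

lemma dT_eq' (f : 𝓢(ℝ × ℝ, ℂ)) :
    dT (fun t x => f (t, x)) = fun t x => pT f (t, x) := dT_eq f

lemma dX_eq' (f : 𝓢(ℝ × ℝ, ℂ)) :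
    dX (fun t x => f (t, x)) = fun t x => pX f (t, x) := dX_eq f

lemma pT_mX (f : 𝓢(ℝ × ℝ, ℂ)) : pT (mX f) = mX (pT f) := by
  ext ⟨t, x⟩
  have h := congrFun (congrFun (dT_eq' (mX f)) t) x
  have h2 := congrFun (congrFun (dT_eq' f) t) x
  simp only [dT, mX_apply, deriv_const_mul_field'] at h h2 ⊢
  rw [← h, h2]

lemma pX_mT (f : 𝓢(ℝ × ℝ, ℂ)) : pX (mT f) = mT (pX f) := by
  ext ⟨t, x⟩
  have h := congrFun (congrFun (dX_eq' (mT f)) t) x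
  have h2 := congrFun (congrFun (dX_eq' f) t) x
  simp only [dX, mT_apply, deriv_const_mul_field'] at h h2 ⊢
  rw [← h, h2]

lemma pi_ne : (Real.pi : ℂ) ≠ 0 := by exact_mod_cast Real.pi_ne_zero

lemma lineDeriv_S (E : ℝ) (hE : E ≠ 0) (f g : 𝓢(ℝ × ℝ, ℂ)) (m : ℝ × ℝ)
    (hg : ∀ p, g p = -(Complex.I * E) * ((m.2 : ℂ) * p.1 - m.1 * p.2) * f p) :
    ∂_{m} (S E hE f) = S E hE g := by
  rw [S_eq, lineDerivOp_smul, lineDerivOp_compCLMOfContinuousLinearEquiv, lineDerivOp_fourier_eq,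
    S_eq]
  congr 3
  ext z
  have h : (fun w : ℂ => inner ℝ w (rotEquiv E hE m)).HasTemperateGrowth := by fun_prop
  have := pi_ne
  rw [smul_apply, smulLeftCLM_apply_apply h]
  simp only [compCLMOfContinuousLinearEquiv_apply,
    Function.comp_apply, hg, Complex.inner, Complex.mul_re, Complex.conj_re,
    Complex.conj_im, rotEquiv_re, rotEquiv_im, Complex.real_smul, smul_eq_mul,
    equivRealProdCLM_apply]
  push_cast
  field_simp

lemma pT_S (E : ℝ) (hE : E ≠ 0) (f : 𝓢(ℝ × ℝ, ℂ)) :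
    pT (S E hE f) = (Complex.I * E) • S E hE (mX f) := by
  rw [← map_smul]
  refine lineDeriv_S E hE _ _ _ fun p => ?_
  simp [mX_apply]
  ring

lemma pX_S (E : ℝ) (hE : E ≠ 0) (f : 𝓢(ℝ × ℝ, ℂ)) :
    pX (S E hE f) = (-(Complex.I * E)) • S E hE (mT f) := by
  rw [← map_smul]
  refine lineDeriv_S E hE _ _ _ fun p => ?_
  simp [mT_apply]
  ring

lemma S_lineDeriv (E : ℝ) (hE : E ≠ 0) (f : 𝓢(ℝ × ℝ, ℂ)) (m p : ℝ × ℝ) :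
    S E hE (∂_{m} f) p = (Complex.I * E) * ((p.2 : ℂ) * m.1 - p.1 * m.2) * S E hE f p := by
  have h0 : compCLMOfContinuousLinearEquiv ℂ equivRealProdCLM (∂_{m} f)
      = ∂_{equivRealProdCLM.symm m} (compCLMOfContinuousLinearEquiv ℂ equivRealProdCLM f) := by
    rw [lineDerivOp_compCLMOfContinuousLinearEquiv, ContinuousLinearEquiv.apply_symm_apply]
  have h : (fun w : ℂ => inner ℝ w (equivRealProdCLM.symm m)).HasTemperateGrowth := by fun_prop
  have := pi_ne
  rw [S_apply', h0, fourier_lineDerivOp_eq, S_apply']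
  rw [smul_apply, smulLeftCLM_apply_apply h]
  simp only [Complex.inner, Complex.mul_re, Complex.conj_re,
    Complex.conj_im, rotEquiv_re, rotEquiv_im, Complex.real_smul, smul_eq_mul]
  have h1 : (equivRealProdCLM.symm m).re = m.1 := rfl
  have h2 : (equivRealProdCLM.symm m).im = m.2 := rfl
  rw [h1, h2]
  push_cast
  field_simp

lemma S_pT (E : ℝ) (hE : E ≠ 0) (f : 𝓢(ℝ × ℝ, ℂ)) :
    S E hE (pT f) = (Complex.I * E) • mX (S E hE f) := by
  ext p
  refine (S_lineDeriv E hE _ _ p).trans ?_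
  simp [mX_apply]
  ring

lemma S_pX (E : ℝ) (hE : E ≠ 0) (f : 𝓢(ℝ × ℝ, ℂ)) :
    S E hE (pX f) = (-(Complex.I * E)) • mT (S E hE f) := by
  ext p
  refine (S_lineDeriv E hE _ _ p).trans ?_
  simp [mT_apply]
  ring

lemma plancherel (E : ℝ) (hE : E ≠ 0) (f g : 𝓢(ℝ × ℝ, ℂ)) :
    ∫ p, (starRingEnd ℂ) (S E hE f p) * S E hE g p = ∫ p, (starRingEnd ℂ) (f p) * g p := by
  set F := compCLMOfContinuousLinearEquiv ℂ equivRealProdCLM f with hF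
  set G := compCLMOfContinuousLinearEquiv ℂ equivRealProdCLM g with hG
  have h1 := integral_inner_fourier_fourier F G
  have h2 : ∫ x, inner ℂ (F x) (G x) = ∫ p, (starRingEnd ℂ) (f p) * g p := by
    rw [← (Complex.volume_preserving_equiv_real_prod).integral_comp
      measurableEquivRealProd.measurableEmbedding]
    congr 1
    ext z
    rw [RCLike.inner_apply, mul_comm]
    rfl
  rw [← h2, ← h1, ← (Complex.volume_preserving_equiv_real_prod).integral_comp
      measurableEquivRealProd.measurableEmbedding]
  set H : ℂ → ℂ := fun z => inner ℂ ((𝓕 F) z) ((𝓕 G) z) with hH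
  have h3 : ∀ z : ℂ, (starRingEnd ℂ) (S E hE f (measurableEquivRealProd z)) *
      S E hE g (measurableEquivRealProd z) =
      ((|E| / (2 * Real.pi) : ℝ) : ℂ) ^ 2 *
        H (-Complex.I * ((E / (2 * Real.pi)) • z)) := by
    intro z
    have : rotEquiv E hE (measurableEquivRealProd z)
        = -Complex.I * ((E / (2 * Real.pi)) • z) := by
      rw [rotEquiv_apply, mul_smul_comm]
      rfl
    rw [S_apply', S_apply', this, hH]
    simp only [RCLike.inner_apply, map_mul, Complex.conj_ofReal]
    ring
  simp_rw [h3]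
  rw [integral_const_mul, Measure.integral_comp_smul volume (fun z => H (-Complex.I * z))]
  have h4 : ∫ z : ℂ, H (-Complex.I * z) = ∫ z, H z := by
    have hI : -Complex.I ∈ Submonoid.unitSphere ℂ := by
      simp [Submonoid.unitSphere]
    exact (rotation ⟨-Complex.I, hI⟩).measurePreserving.integral_comp
      (rotation ⟨-Complex.I, hI⟩).toHomeomorph.measurableEmbedding H
  rw [h4, Complex.finrank_real_complex, Complex.real_smul, ← mul_assoc, ← Complex.ofReal_pow,
    ← Complex.ofReal_mul]
  have : (|E| / (2 * Real.pi)) ^ 2 * |((E / (2 * Real.pi)) ^ 2)⁻¹| = 1 := by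
    rw [abs_of_nonneg (inv_nonneg.2 (sq_nonneg (E / (2 * Real.pi)))), div_pow, sq_abs, div_pow]
    have := Real.pi_ne_zero
    field_simp
  rw [this, Complex.ofReal_one, one_mul]

/-- Both operators (`s = ∓1`) as maps on Schwartz space. -/
noncomputable def DD (E : ℝ) (s : ℂ) (f : 𝓢(ℝ × ℝ, ℂ)) : 𝓢(ℝ × ℝ, ℂ) :=
  (1 / 2 : ℂ) • (-(pT (pT f) - pX (pX f))
    + (s * (2 * Complex.I * E)) • (mX (pT f) + mT (pX f))
    - ((E : ℂ) ^ 2) • (mT (mT f) - mX (mX f)))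

lemma D2_eq (E : ℝ) (f : 𝓢(ℝ × ℝ, ℂ)) (p : ℝ × ℝ) :
    D2 E (fun t x => f (t, x)) p.1 p.2 = DD E (-1) f p := by
  simp only [D2, dT_eq', dX_eq', DD, smul_apply, sub_apply, add_apply, neg_apply, mT_apply,
    mX_apply, smul_eq_mul]
  ring

lemma Dt2_eq (E : ℝ) (f : 𝓢(ℝ × ℝ, ℂ)) (p : ℝ × ℝ) :
    Dt2 E (fun t x => f (t, x)) p.1 p.2 = DD E 1 f p := by
  simp only [Dt2, dT_eq', dX_eq', DD, smul_apply, sub_apply, add_apply, neg_apply, mT_apply,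
    mX_apply, smul_eq_mul]
  ring

lemma S_DD (E : ℝ) (hE : E ≠ 0) (s : ℂ) (f : 𝓢(ℝ × ℝ, ℂ)) :
    S E hE (DD E s f) = DD E s (S E hE f) := by
  have hI : Complex.I * E ≠ 0 := mul_ne_zero Complex.I_ne_zero (by exact_mod_cast hE)
  have a1 : S E hE (mX (pT f)) = mX (pT (S E hE f)) := by
    rw [← pT_mX, S_pT, pT_S, map_smul]
  have a2 : S E hE (mT (pX f)) = mT (pX (S E hE f)) := by
    rw [← pX_mT, S_pX, pX_S, map_smul]
  have b1 : pT (pT (S E hE f)) = (-(E : ℂ) ^ 2) • S E hE (mX (mX f)) := by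
    rw [pT_S, map_smul, pT_S, smul_smul]
    congr 1
    linear_combination (E : ℂ) ^ 2 * Complex.I_sq
  have b2 : pX (pX (S E hE f)) = (-(E : ℂ) ^ 2) • S E hE (mT (mT f)) := by
    rw [pX_S, map_smul, pX_S, smul_smul]
    congr 1
    linear_combination (E : ℂ) ^ 2 * Complex.I_sq
  have c1 : S E hE (pT (pT f)) = (-(E : ℂ) ^ 2) • mX (mX (S E hE f)) := by
    rw [S_pT, S_pT, map_smul, smul_smul]
    congr 1
    linear_combination (E : ℂ) ^ 2 * Complex.I_sq
  have c2 : S E hE (pX (pX f)) = (-(E : ℂ) ^ 2) • mT (mT (S E hE f)) := by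
    rw [S_pX, S_pX, map_smul, smul_smul]
    congr 1
    linear_combination (E : ℂ) ^ 2 * Complex.I_sq
  simp only [DD, map_smul, map_add, map_sub, map_neg, a1, a2, b1, b2, c1, c2]
  module

end FreeActionAux

/-- the free duality-covariant action is invariant under the
symplectic Fourier transform. -/
theorem free_action_duality_invariant (E : ℝ) (hE : E ≠ 0) (σ μ2 : ℝ)
    (φ : SchwartzMap (ℝ × ℝ) ℂ) :
    (∫ p : ℝ × ℝ,
        (starRingEnd ℂ) (sympFT E (fun t x => φ (t, x)) p.1 p.2) *
          ((σ : ℂ) * D2 E (sympFT E (fun t x => φ (t, x))) p.1 p.2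
            + ((1 - σ : ℝ) : ℂ) * Dt2 E (sympFT E (fun t x => φ (t, x))) p.1 p.2
            + (μ2 : ℂ) * sympFT E (fun t x => φ (t, x)) p.1 p.2))
      = ∫ p : ℝ × ℝ,
          (starRingEnd ℂ) (φ p) *
            ((σ : ℂ) * D2 E (fun t x => φ (t, x)) p.1 p.2
              + ((1 - σ : ℝ) : ℂ) * Dt2 E (fun t x => φ (t, x)) p.1 p.2
              + (μ2 : ℂ) * φ p) := by
  open FreeActionAux in
  have hS : sympFT E (fun t x => φ (t, x)) = fun t x => S E hE φ (t, x) := by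
    ext t x
    exact (S_apply E hE φ t x).symm
  rw [hS]
  have key := plancherel E hE φ
    ((σ : ℂ) • DD E (-1) φ + ((1 - σ : ℝ) : ℂ) • DD E 1 φ + (μ2 : ℂ) • φ)
  simp only [map_add, map_smul, S_DD] at key
  simp only [D2_eq, Dt2_eq]
  exact key
end

section
/- Let E > 0, θ := 2/E, and H(t,x) := ½(x² − t²). For every Schwartz function f: ℝ² → ℂ and every (t,x) ∈ ℝ², the regularized twisted-convolution limits defining (H ⋆_θ f)(t,x) and (f ⋆_θ H)(t,x) exist, and (H ⋆_θ f)(t,x) = (1/E²)(D²f)(t,x) while (f ⋆_θ H)(t,x) = (1/E²)(D̃²f)(t,x). -/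
open MeasureTheory Filter Complex

/-- The `δ`-regularized twisted-convolution integral defining the Moyal star
product `(f ⋆_θ g)(t,x)` (before taking the limit `δ → 0⁺`). -/
noncomputable def starInt (θ δ : ℝ) (f g : ℝ × ℝ → ℂ) (t x : ℝ) : ℂ :=
  ((1 / (Real.pi ^ 2 * θ ^ 2) : ℝ) : ℂ) *
    ∫ q : (ℝ × ℝ) × (ℝ × ℝ),
      ((Real.exp (-δ * (q.1.1 ^ 2 + q.1.2 ^ 2 + q.2.1 ^ 2 + q.2.2 ^ 2)) : ℝ) : ℂ) *
        f q.1 * g q.2 *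
        Complex.exp ((2 * Complex.I / (θ : ℂ)) *
          (((q.1.1 - t : ℝ) : ℂ) * ((q.2.2 - x : ℝ) : ℂ)
            - ((q.1.2 - x : ℝ) : ℂ) * ((q.2.1 - t : ℝ) : ℂ)))

/-- The classical Hamiltonian `H(t,x) = ½(x² − t²)`. -/
noncomputable def Hfun : ℝ × ℝ → ℂ := fun p => (1 / 2 : ℂ) * ((p.2 : ℂ) ^ 2 - (p.1 : ℂ) ^ 2)

/-- Gaussian moments with a phase. -/
noncomputable def JJ (c k : ℝ) (n : ℕ) : ℂ :=
  ∫ a : ℝ, (a : ℂ) ^ n * Complex.exp (-(c : ℂ) * (a : ℂ) ^ 2 + Complex.I * (k : ℂ) * (a : ℂ))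

lemma JJ_int (c k : ℝ) (hc : 0 < c) (n : ℕ) : Integrable (fun a : ℝ =>
    (a : ℂ) ^ n * Complex.exp (-(c : ℂ) * (a : ℂ) ^ 2 + Complex.I * (k : ℂ) * (a : ℂ))) := by
  have h := integrable_rpow_mul_exp_neg_mul_sq hc (s := (n : ℝ))
    (by have : (0 : ℝ) ≤ n := Nat.cast_nonneg n
        linarith)
  refine h.mono (by fun_prop) (Eventually.of_forall fun a => ?_)
  simp only [norm_mul, norm_pow, Complex.norm_exp, Real.rpow_natCast]
  have e : ((-(c : ℂ) * (a : ℂ) ^ 2 + Complex.I * (k : ℂ) * (a : ℂ))).re = -c * a ^ 2 := by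
    simp [pow_two]
  rw [e]
  simp

lemma JJ_rec (c k : ℝ) (hc : 0 < c) (n : ℕ) :
    (n : ℂ) * JJ c k (n - 1) - 2 * c * JJ c k (n + 1) + Complex.I * k * JJ c k n = 0 := by
  have h1 := (JJ_int c k hc (n - 1)).const_mul (n : ℂ)
  have h2 := (JJ_int c k hc (n + 1)).const_mul (2 * c : ℂ)
  have h3 := (JJ_int c k hc n).const_mul (Complex.I * k)
  have := integral_eq_zero_of_hasDerivAt_of_integrable (f := fun a : ℝ =>
    (a : ℂ) ^ n * Complex.exp (-(c : ℂ) * (a : ℂ) ^ 2 + Complex.I * (k : ℂ) * (a : ℂ))) ?_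
    ((h1.sub h2).add h3) (JJ_int c k hc n)
  · simp only [Pi.add_apply, Pi.sub_apply] at this
    have h12 := h1.sub h2
    simp only [Pi.sub_def] at h12
    rw [integral_add h12 h3, integral_sub h1 h2] at this
    simp only [integral_const_mul] at this
    exact this
  · intro a
    have ha : HasDerivAt (fun a : ℝ => (a : ℂ)) 1 a := Complex.ofRealCLM.hasDerivAt
    have := (ha.pow n).mul (((ha.pow 2).const_mul (-(c : ℂ))).add
      (ha.const_mul (Complex.I * k))).cexp
    refine this.congr_deriv ?_
    simp
    ring

lemma JJ_zero (c k : ℝ) (hc : 0 < c) :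
    JJ c k 0 = ((Real.sqrt (Real.pi / c) : ℝ) : ℂ) * Complex.exp (-(k : ℂ) ^ 2 / (4 * c)) := by
  have := fourierIntegral_gaussian (b := (c : ℂ)) (by simpa using hc) (k : ℂ)
  rw [Real.sqrt_eq_rpow, Complex.ofReal_cpow (by positivity)]
  push_cast
  rw [← this, JJ]
  congr 1
  ext a
  rw [← Complex.exp_add]
  simp only [pow_zero, one_mul]
  congr 1
  ring

lemma JJ_one (c k : ℝ) (hc : 0 < c) : JJ c k 1 = Complex.I * k / (2 * c) * JJ c k 0 := by
  have h := JJ_rec c k hc 0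
  have : (c : ℂ) ≠ 0 := by exact_mod_cast hc.ne'
  simp at h
  field_simp
  linear_combination -h

lemma JJ_two (c k : ℝ) (hc : 0 < c) :
    JJ c k 2 = (1 / (2 * c) - k ^ 2 / (4 * c ^ 2)) * JJ c k 0 := by
  have h := JJ_rec c k hc 1
  have : (c : ℂ) ≠ 0 := by exact_mod_cast hc.ne'
  rw [JJ_one c k hc] at h
  simp at h
  field_simp at h ⊢
  linear_combination (-2 : ℂ) * h + 2 * k ^ 2 * JJ c k 0 * Complex.I_sq

lemma JJ_three (c : ℝ) (hc : 0 < c) : JJ c 0 3 = 0 := by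
  have h := JJ_rec c 0 hc 2
  have : (c : ℂ) ≠ 0 := by exact_mod_cast hc.ne'
  simp [JJ_one c 0 hc] at h
  tauto

lemma JJ_four (c : ℝ) (hc : 0 < c) : JJ c 0 4 = 3 / (4 * c ^ 2) * JJ c 0 0 := by
  have h := JJ_rec c 0 hc 3
  have : (c : ℂ) ≠ 0 := by exact_mod_cast hc.ne'
  simp [JJ_two c 0 hc] at h
  field_simp at h ⊢
  linear_combination -h

lemma peano (φ : ℝ × ℝ → ℂ) (h : ContDiff ℝ 2 φ) (ε : ℝ) (hε : 0 < ε) :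
    ∃ η > 0, ∀ w : ℝ × ℝ, ‖w‖ < η →
      ‖φ w - φ 0 - fderiv ℝ φ 0 w - (1 / 2 : ℝ) • fderiv ℝ (fderiv ℝ φ) 0 w w‖ ≤ ε * ‖w‖ ^ 2 := by
  have hd : Differentiable ℝ φ := h.differentiable (by norm_num)
  have hd2 : Differentiable ℝ (fderiv ℝ φ) :=
    (h.fderiv_right (m := 1) (by norm_num)).differentiable (by norm_num)
  have hsym : IsSymmSndFDerivAt ℝ φ 0 := h.contDiffAt.isSymmSndFDerivAt (by simp)
  have hlo := (hd2 0).hasFDerivAt.isLittleO.def hε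
  simp only [sub_zero] at hlo
  obtain ⟨η, hη, hb⟩ := Metric.eventually_nhds_iff.1 hlo
  refine ⟨η, hη, fun w hw => ?_⟩
  set B := fderiv ℝ (fderiv ℝ φ) 0 with hB
  have key := Convex.norm_image_sub_le_of_norm_hasFDerivWithin_le (𝕜 := ℝ)
    (f := fun w => φ w - φ 0 - fderiv ℝ φ 0 w - (1 / 2 : ℝ) • B w w)
    (f' := fun w => fderiv ℝ φ w - fderiv ℝ φ 0 - B w) (C := ε * ‖w‖)
    (s := Metric.closedBall (0 : ℝ × ℝ) ‖w‖) (x := 0) (y := w) ?_ ?_ (convex_closedBall _ _)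
    (by simp) (by simp)
  · simp at key
    simpa [pow_two, mul_assoc] using key
  · intro v _
    have h1 := (hd v).hasFDerivAt
    have h2 := (fderiv ℝ φ 0).hasFDerivAt (x := v)
    have h3 := ((B.hasFDerivAt (x := v)).clm_apply (hasFDerivAt_id v)).const_smul (1 / 2 : ℝ)
    have h4 := ((h1.sub_const (φ 0)).sub h2).sub h3
    refine HasFDerivAt.hasFDerivWithinAt ?_
    refine h4.congr_fderiv ?_
    ext <;> simp <;> (try rw [hsym.eq]) <;> ring
  · intro v hv
    simp at hv
    refine (hb (y := v) (by simpa using hv.trans_lt hw)).trans ?_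
    gcongr

lemma second_dir (φ : ℝ × ℝ → ℂ) (h : ContDiff ℝ 2 φ) (e : ℝ × ℝ) :
    fderiv ℝ (fderiv ℝ φ) 0 e e = deriv (deriv (fun v : ℝ => φ (v • e))) 0 := by
  have hd : Differentiable ℝ φ := h.differentiable (by norm_num)
  have hd2 : Differentiable ℝ (fderiv ℝ φ) :=
    (h.fderiv_right (m := 1) (by norm_num)).differentiable (by norm_num)
  have hl : ∀ v : ℝ, HasDerivAt (fun v : ℝ => v • e) e v := fun v => by
    simpa using (hasDerivAt_id v).smul_const e
  have h1 : deriv (fun v : ℝ => φ (v • e)) = fun v => fderiv ℝ φ (v • e) e := by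
    ext v
    exact ((hd (v • e)).hasFDerivAt.comp_hasDerivAt v (hl v)).deriv
  have h2 : HasDerivAt (fun v : ℝ => fderiv ℝ φ (v • e))
      (fderiv ℝ (fderiv ℝ φ) ((0 : ℝ) • e) e) 0 :=
    (hd2 ((0 : ℝ) • e)).hasFDerivAt.comp_hasDerivAt 0 (hl 0)
  have h3 := h2.clm_apply (hasDerivAt_const (0 : ℝ) e)
  rw [h1, h3.deriv, zero_smul, map_zero, add_zero]

lemma second_exp (g : ℝ → ℂ) (hg : ContDiff ℝ 2 g) (t : ℝ) (κ : ℂ) :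
    deriv (deriv (fun v : ℝ => g (t + v) * Complex.exp (κ * v))) 0 =
      deriv (deriv g) t + 2 * κ * deriv g t + κ ^ 2 * g t := by
  have hd : Differentiable ℝ g := hg.differentiable (by norm_num)
  have hd2 : Differentiable ℝ (deriv g) :=
    ((contDiff_succ_iff_deriv (n := 1)).1 hg).2.2.differentiable (by norm_num)
  have he : ∀ v : ℝ, HasDerivAt (fun v : ℝ => Complex.exp (κ * v)) (κ * Complex.exp (κ * v)) v := by
    intro v
    have ha : HasDerivAt (fun a : ℝ => (a : ℂ)) 1 v := Complex.ofRealCLM.hasDerivAt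
    have := (ha.const_mul κ).cexp
    convert this using 1
    ring
  have hs : ∀ v : ℝ, HasDerivAt (fun v => g (t + v)) (deriv g (t + v)) v := fun v => by
    simpa using (hd (t + v)).hasDerivAt.comp_const_add t v
  have hs2 : ∀ v : ℝ, HasDerivAt (fun v => deriv g (t + v)) (deriv (deriv g) (t + v)) v := fun v => by
    simpa using (hd2 (t + v)).hasDerivAt.comp_const_add t v
  have h1 : deriv (fun v : ℝ => g (t + v) * Complex.exp (κ * v)) = fun v =>
      deriv g (t + v) * Complex.exp (κ * v) + g (t + v) * (κ * Complex.exp (κ * v)) := by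
    ext v
    exact ((hs v).mul (he v)).deriv
  rw [h1]
  have h2 := ((hs2 0).mul (he 0)).add ((hs 0).mul ((he 0).const_mul κ))
  refine h2.deriv.trans ?_
  simp
  ring

/-- Two-dimensional Gaussian monomials. -/
noncomputable def gW (c : ℝ) (m n : ℕ) (w : ℝ × ℝ) : ℂ :=
  (w.1 : ℂ) ^ m * (w.2 : ℂ) ^ n * Complex.exp (-(c : ℂ) * ((w.1 : ℂ) ^ 2 + (w.2 : ℂ) ^ 2))

lemma gW_eq (c : ℝ) (m n : ℕ) : gW c m n = fun w : ℝ × ℝ =>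
    ((w.1 : ℂ) ^ m * Complex.exp (-(c : ℂ) * (w.1 : ℂ) ^ 2 + Complex.I * ((0 : ℝ) : ℂ) * (w.1 : ℂ))) *
    ((w.2 : ℂ) ^ n *
      Complex.exp (-(c : ℂ) * (w.2 : ℂ) ^ 2 + Complex.I * ((0 : ℝ) : ℂ) * (w.2 : ℂ))) := by
  ext w
  rw [gW, show -(c : ℂ) * ((w.1 : ℂ) ^ 2 + (w.2 : ℂ) ^ 2) =
    (-(c : ℂ) * (w.1 : ℂ) ^ 2 + Complex.I * ((0 : ℝ) : ℂ) * (w.1 : ℂ)) +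
    (-(c : ℂ) * (w.2 : ℂ) ^ 2 + Complex.I * ((0 : ℝ) : ℂ) * (w.2 : ℂ)) by push_cast; ring,
    Complex.exp_add]
  ring

lemma gW_int (c : ℝ) (hc : 0 < c) (m n : ℕ) : Integrable (gW c m n) := by
  rw [gW_eq]
  exact (JJ_int c 0 hc m).mul_prod (JJ_int c 0 hc n)

lemma gW_integral (c : ℝ) (m n : ℕ) : ∫ w, gW c m n w = JJ c 0 m * JJ c 0 n := by
  rw [gW_eq]
  exact integral_prod_mul (μ := (volume : Measure ℝ)) (ν := (volume : Measure ℝ))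
    (fun a : ℝ => (a : ℂ) ^ m * Complex.exp (-(c : ℂ) * (a : ℂ) ^ 2 + Complex.I * ((0 : ℝ) : ℂ) * (a : ℂ)))
    (fun a : ℝ => (a : ℂ) ^ n * Complex.exp (-(c : ℂ) * (a : ℂ) ^ 2 + Complex.I * ((0 : ℝ) : ℂ) * (a : ℂ)))

lemma quot_lim (φ : ℝ × ℝ → ℂ) (h : ContDiff ℝ 2 φ) (w : ℝ × ℝ) :
    Tendsto (fun δ : ℝ => (1 / (δ : ℂ)) *
      (φ (Real.sqrt δ • w) - φ 0 - (Real.sqrt δ : ℂ) * fderiv ℝ φ 0 w))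
      (nhdsWithin (0 : ℝ) (Set.Ioi 0)) (nhds ((1 / 2 : ℂ) * fderiv ℝ (fderiv ℝ φ) 0 w w)) := by
  rw [Metric.tendsto_nhds]
  intro ε hε
  obtain ⟨η, hη, hp⟩ := peano φ h (ε / (‖w‖ ^ 2 + 1)) (by positivity)
  have hs : Tendsto (fun δ : ℝ => ‖Real.sqrt δ • w‖) (nhdsWithin (0 : ℝ) (Set.Ioi 0)) (nhds 0) := by
    have : Continuous (fun δ : ℝ => ‖Real.sqrt δ • w‖) := by fun_prop
    have := this.tendsto 0
    simp only [Real.sqrt_zero, zero_smul, norm_zero] at this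
    exact this.mono_left nhdsWithin_le_nhds
  filter_upwards [hs.eventually_lt_const hη, self_mem_nhdsWithin] with δ h1 h2
  have hδ : (0 : ℝ) < δ := h2
  have h3 := hp _ h1
  have hδc : (δ : ℂ) ≠ 0 := by exact_mod_cast hδ.ne'
  have hsq : (Real.sqrt δ : ℂ) * (Real.sqrt δ : ℂ) = δ := by
    exact_mod_cast Real.mul_self_sqrt hδ.le
  rw [dist_eq_norm]
  have e : (1 / (δ : ℂ)) * (φ (Real.sqrt δ • w) - φ 0 - (Real.sqrt δ : ℂ) * fderiv ℝ φ 0 w)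
      - (1 / 2 : ℂ) * fderiv ℝ (fderiv ℝ φ) 0 w w = (1 / (δ : ℂ)) *
      (φ (Real.sqrt δ • w) - φ 0 - fderiv ℝ φ 0 (Real.sqrt δ • w) - (1 / 2 : ℝ) •
        fderiv ℝ (fderiv ℝ φ) 0 (Real.sqrt δ • w) (Real.sqrt δ • w)) := by
    simp only [map_smul, _root_.smul_apply, Complex.real_smul]
    push_cast
    rw [← mul_assoc (Real.sqrt δ : ℂ), hsq]
    field_simp
  rw [e, norm_mul]
  have e2 : ‖Real.sqrt δ • w‖ ^ 2 = δ * ‖w‖ ^ 2 := by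
    rw [norm_smul, mul_pow, Real.norm_eq_abs, sq_abs, Real.sq_sqrt hδ.le]
  rw [e2] at h3
  have e3 : ‖(1 / (δ : ℂ))‖ = 1 / δ := by simp [abs_of_pos hδ]
  rw [e3]
  calc _ ≤ 1 / δ * (ε / (‖w‖ ^ 2 + 1) * (δ * ‖w‖ ^ 2)) := by gcongr
    _ = ε * (‖w‖ ^ 2 / (‖w‖ ^ 2 + 1)) := by field_simp
    _ < ε * 1 := by
      gcongr
      rw [div_lt_one (by positivity)]
      linarith
    _ = ε := mul_one _

lemma quot_bound (φ : ℝ × ℝ → ℂ) (h : ContDiff ℝ 2 φ) (M : ℝ) (hM : ∀ w, ‖φ w‖ ≤ M) :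
    ∃ C : ℝ, 0 ≤ C ∧ ∀ w, ‖φ w - φ 0 - fderiv ℝ φ 0 w‖ ≤ C * ‖w‖ ^ 2 := by
  obtain ⟨η, hη, hp⟩ := peano φ h 1 one_pos
  have hM0 : 0 ≤ M := (norm_nonneg _).trans (hM 0)
  set L := fderiv ℝ φ 0
  set B := fderiv ℝ (fderiv ℝ φ) 0
  refine ⟨(1 + ‖B‖) + (2 * M / η ^ 2 + ‖L‖ / η), by positivity, fun w => ?_⟩
  rw [add_mul]
  rcases lt_or_ge ‖w‖ η with hw | hw
  · have h1 := hp w hw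
    have h2 : ‖B w w‖ ≤ ‖B‖ * ‖w‖ * ‖w‖ := B.le_opNorm₂ w w
    have h3 : ‖φ w - φ 0 - L w‖ ≤ ‖φ w - φ 0 - L w - (1 / 2 : ℝ) • B w w‖ + ‖(1 / 2 : ℝ) • B w w‖ := by
      simpa using norm_add_le (φ w - φ 0 - L w - (1 / 2 : ℝ) • B w w) ((1 / 2 : ℝ) • B w w)
    have h4 : ‖(1 / 2 : ℝ) • B w w‖ = 1 / 2 * ‖B w w‖ := by rw [norm_smul]; norm_num
    have h5 : 0 ≤ (2 * M / η ^ 2 + ‖L‖ / η) * ‖w‖ ^ 2 := by positivity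
    nlinarith [norm_nonneg (B w w)]
  · have h1 : ‖φ w - φ 0 - L w‖ ≤ ‖φ w‖ + ‖φ 0‖ + ‖L‖ * ‖w‖ :=
      (norm_sub_le _ _).trans (add_le_add (norm_sub_le _ _) (L.le_opNorm w))
    have h2 : 2 * M ≤ 2 * M / η ^ 2 * ‖w‖ ^ 2 := by
      rw [div_mul_eq_mul_div, le_div_iff₀ (by positivity)]
      gcongr
    have h3 : ‖L‖ * ‖w‖ ≤ ‖L‖ / η * ‖w‖ ^ 2 := by
      rw [div_mul_eq_mul_div, le_div_iff₀ (by positivity), mul_assoc, pow_two]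
      gcongr
    have h5 : 0 ≤ (1 + ‖B‖) * ‖w‖ ^ 2 := by positivity
    have := hM w
    have := hM 0
    rw [add_mul]
    linarith

lemma exp_lim (q : ℝ → ℝ) (q0 : ℝ) (hq : Tendsto q (nhdsWithin (0 : ℝ) (Set.Ioi 0)) (nhds q0)) :
    Tendsto (fun δ : ℝ => (Real.exp (-δ * q δ) - 1) / δ) (nhdsWithin (0 : ℝ) (Set.Ioi 0))
      (nhds (-q0)) := by
  have hid : Tendsto (fun δ : ℝ => δ) (nhdsWithin (0 : ℝ) (Set.Ioi 0)) (nhds 0) :=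
    tendsto_id.mono_left nhdsWithin_le_nhds
  have h0 : Tendsto (fun δ : ℝ => -δ * q δ) (nhdsWithin (0 : ℝ) (Set.Ioi 0)) (nhds 0) := by
    simpa using hid.neg.mul hq
  have hc : ContinuousAt (dslope Real.exp 0) 0 :=
    continuousAt_dslope_same.2 Real.differentiableAt_exp
  have h1 := hq.neg.mul (hc.tendsto.comp h0)
  simp only [dslope_same, Real.deriv_exp, Real.exp_zero, mul_one] at h1
  refine h1.congr' ?_
  filter_upwards [self_mem_nhdsWithin] with δ hδ
  have hδ : δ ≠ 0 := ne_of_gt hδ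
  have := sub_smul_dslope Real.exp 0 (-δ * q δ)
  simp only [sub_zero, smul_eq_mul, Real.exp_zero] at this
  rw [← this]
  simp only [Function.comp]
  field_simp

lemma main_lim (c : ℝ) (hc : 0 < c) (p : ℝ × ℝ) (φ : ℝ × ℝ → ℂ) (h : ContDiff ℝ 2 φ)
    (M : ℝ) (hM : ∀ w, ‖φ w‖ ≤ M) :
    Tendsto (fun δ : ℝ => (1 / (δ : ℂ)) * ∫ w : ℝ × ℝ, (gW c 0 2 w - gW c 2 0 w) *
      (φ (Real.sqrt δ • w) * ((Real.exp (-δ * ((p.1 + Real.sqrt δ * w.1) ^ 2 +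
        (p.2 + Real.sqrt δ * w.2) ^ 2)) : ℝ) : ℂ)))
      (nhdsWithin (0 : ℝ) (Set.Ioi 0))
      (nhds ((Real.pi / (2 * c ^ 3) : ℂ) * ((1 / 2 : ℂ) *
        (fderiv ℝ (fderiv ℝ φ) 0 (0, 1) (0, 1) - fderiv ℝ (fderiv ℝ φ) 0 (1, 0) (1, 0))))) := by
  have hM0 : 0 ≤ M := (norm_nonneg _).trans (hM 0)
  have hφc : Continuous φ := h.continuous
  have hcc : (c : ℂ) ≠ 0 := by exact_mod_cast hc.ne'
  obtain ⟨C, hC0, hC⟩ := quot_bound φ h M hM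
  have hlim := quot_lim φ h
  set L := fderiv ℝ φ 0
  set B := fderiv ℝ (fderiv ℝ φ) 0
  set W : ℝ × ℝ → ℂ := fun w => gW c 0 2 w - gW c 2 0 w with hW
  have hgc : ∀ m n, Continuous (gW c m n) := fun m n => by unfold gW; fun_prop
  have hWc : Continuous W := (hgc 0 2).sub (hgc 2 0)
  have hWi : Integrable W := (gW_int c hc 0 2).sub (gW_int c hc 2 0)
  have hW0 : ∫ w, W w = 0 := by
    rw [hW, integral_sub (gW_int c hc 0 2) (gW_int c hc 2 0)]
    simp only [gW_integral]
    ring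
  have hLw : ∀ w : ℝ × ℝ, L w = (w.1 : ℂ) * L (1, 0) + (w.2 : ℂ) * L (0, 1) := by
    intro w
    have : w = w.1 • ((1 : ℝ), (0 : ℝ)) + w.2 • ((0 : ℝ), (1 : ℝ)) := by ext <;> simp
    conv_lhs => rw [this]
    simp only [map_add, map_smul, Complex.real_smul]
  have hBw : ∀ w : ℝ × ℝ, B w w = (w.1 : ℂ) ^ 2 * B (1, 0) (1, 0) +
      (w.1 : ℂ) * (w.2 : ℂ) * (B (1, 0) (0, 1) + B (0, 1) (1, 0)) +
      (w.2 : ℂ) ^ 2 * B (0, 1) (0, 1) := by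
    intro w
    have : w = w.1 • ((1 : ℝ), (0 : ℝ)) + w.2 • ((0 : ℝ), (1 : ℝ)) := by ext <;> simp
    conv_lhs => rw [this]
    simp only [map_add, map_smul, Complex.real_smul, _root_.add_apply, _root_.smul_apply]
    ring
  -- the linear term
  have hWLe : (fun w => W w * L w) = fun w => (L (1, 0) * gW c 1 2 w - L (1, 0) * gW c 3 0 w) +
      (L (0, 1) * gW c 0 3 w - L (0, 1) * gW c 2 1 w) := by
    ext w
    rw [hLw]
    simp only [hW, gW]
    ring
  have i1 := (gW_int c hc 1 2).const_mul (L (1, 0))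
  have i2 := (gW_int c hc 3 0).const_mul (L (1, 0))
  have i3 := (gW_int c hc 0 3).const_mul (L (0, 1))
  have i4 := (gW_int c hc 2 1).const_mul (L (0, 1))
  have hWLi : Integrable (fun w => W w * L w) := by
    rw [hWLe]
    exact (i1.sub i2).add (i3.sub i4)
  have J1 : JJ c 0 1 = 0 := by rw [JJ_one c 0 hc]; simp
  have J3 : JJ c 0 3 = 0 := JJ_three c hc
  have hWL0 : ∫ w, W w * L w = 0 := by
    rw [hWLe, integral_add (by exact i1.sub i2) (by exact i3.sub i4), integral_sub i1 i2,
      integral_sub i3 i4]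
    simp only [integral_const_mul, gW_integral, J1, J3]
    ring
  -- the limit
  have k1 := (gW_int c hc 2 2).const_mul ((1 / 2 : ℂ) * (B (1, 0) (1, 0) - B (0, 1) (0, 1)))
  have k2 := (gW_int c hc 4 0).const_mul ((1 / 2 : ℂ) * B (1, 0) (1, 0))
  have k3 := (gW_int c hc 0 4).const_mul ((1 / 2 : ℂ) * B (0, 1) (0, 1))
  have k4 := (gW_int c hc 1 3).const_mul ((1 / 2 : ℂ) * (B (1, 0) (0, 1) + B (0, 1) (1, 0)))
  have k5 := (gW_int c hc 3 1).const_mul ((1 / 2 : ℂ) * (B (1, 0) (0, 1) + B (0, 1) (1, 0)))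
  have k6 := hWi.const_mul (φ 0 * ((-(p.1 ^ 2 + p.2 ^ 2) : ℝ) : ℂ))
  have hval : ∫ w, W w * ((1 / 2 : ℂ) * B w w + φ 0 * ((-(p.1 ^ 2 + p.2 ^ 2) : ℝ) : ℂ)) =
      (Real.pi / (2 * c ^ 3) : ℂ) * ((1 / 2 : ℂ) * (B (0, 1) (0, 1) - B (1, 0) (1, 0))) := by
    have e : (fun w => W w * ((1 / 2 : ℂ) * B w w + φ 0 * ((-(p.1 ^ 2 + p.2 ^ 2) : ℝ) : ℂ))) =
        fun w => ((((((1 / 2 : ℂ) * (B (1, 0) (1, 0) - B (0, 1) (0, 1))) * gW c 2 2 w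
          - ((1 / 2 : ℂ) * B (1, 0) (1, 0)) * gW c 4 0 w)
          + ((1 / 2 : ℂ) * B (0, 1) (0, 1)) * gW c 0 4 w)
          + ((1 / 2 : ℂ) * (B (1, 0) (0, 1) + B (0, 1) (1, 0))) * gW c 1 3 w)
          - ((1 / 2 : ℂ) * (B (1, 0) (0, 1) + B (0, 1) (1, 0))) * gW c 3 1 w)
          + (φ 0 * ((-(p.1 ^ 2 + p.2 ^ 2) : ℝ) : ℂ)) * W w := by
      ext w
      rw [hBw]
      simp only [hW, gW]
      ring
    rw [e, integral_add (by exact (((k1.sub k2).add k3).add k4).sub k5) k6,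
      integral_sub (by exact ((k1.sub k2).add k3).add k4) k5,
      integral_add (by exact (k1.sub k2).add k3) k4,
      integral_add (by exact k1.sub k2) k3, integral_sub k1 k2]
    simp only [integral_const_mul, gW_integral, J1, J3, hW0]
    have hJ0 : JJ c 0 0 * JJ c 0 0 = Real.pi / c := by
      rw [JJ_zero c 0 hc]
      simp only [Complex.ofReal_zero, ne_eq, OfNat.ofNat_ne_zero, not_false_eq_true, zero_pow,
        neg_zero, zero_div, Complex.exp_zero, mul_one]
      rw [← Complex.ofReal_mul, Real.mul_self_sqrt (by positivity)]
      push_cast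
      rfl
    rw [JJ_four c hc, JJ_two c 0 hc]
    simp only [Complex.ofReal_zero]
    have e1 : (Real.pi : ℂ) = c * (JJ c 0 0 * JJ c 0 0) := by rw [hJ0]; field_simp
    rw [e1]
    field_simp
    ring
  rw [← hval]
  -- dominated convergence
  have hX1 : ∀ (δ : ℝ), 0 < δ → ∀ w : ℝ × ℝ, Real.exp (-δ * ((p.1 + Real.sqrt δ * w.1) ^ 2 +
        (p.2 + Real.sqrt δ * w.2) ^ 2)) ≤ 1 := by
    intro δ hδ w
    rw [Real.exp_le_one_iff]
    have : 0 ≤ δ * ((p.1 + Real.sqrt δ * w.1) ^ 2 + (p.2 + Real.sqrt δ * w.2) ^ 2) := by positivity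
    linarith
  set X : ℝ → ℝ × ℝ → ℝ := fun δ w => Real.exp (-δ * ((p.1 + Real.sqrt δ * w.1) ^ 2 +
        (p.2 + Real.sqrt δ * w.2) ^ 2)) with hX
  have hXc : ∀ δ, Continuous (X δ) := fun δ => by simp only [hX]; fun_prop
  have hDCT : Tendsto (fun δ : ℝ => ∫ w, W w * ((1 / (δ : ℂ)) *
      (φ (Real.sqrt δ • w) - φ 0 - (Real.sqrt δ : ℂ) * L w) +
        φ (Real.sqrt δ • w) * (((X δ w - 1) / δ : ℝ) : ℂ))) (nhdsWithin (0 : ℝ) (Set.Ioi 0))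
      (nhds (∫ w, W w * ((1 / 2 : ℂ) * B w w + φ 0 * ((-(p.1 ^ 2 + p.2 ^ 2) : ℝ) : ℂ)))) := by
    refine tendsto_integral_filter_of_dominated_convergence
      (fun w => ‖W w * (((C + 2 * M) * (w.1 ^ 2 + w.2 ^ 2) + 2 * M * (p.1 ^ 2 + p.2 ^ 2) : ℝ) : ℂ)‖)
      ?_ ?_ ?_ ?_
    · refine Eventually.of_forall fun δ => Continuous.aestronglyMeasurable ?_
      have := hXc δ
      fun_prop
    · have hlt : ∀ᶠ δ : ℝ in nhdsWithin (0 : ℝ) (Set.Ioi 0), δ < 1 :=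
        nhdsWithin_le_nhds (Iio_mem_nhds one_pos)
      filter_upwards [hlt, self_mem_nhdsWithin] with δ hδ1 hδ0
      refine Eventually.of_forall fun w => ?_
      have hδ : (0 : ℝ) < δ := hδ0
      rw [norm_mul, norm_mul]
      refine mul_le_mul_of_nonneg_left ?_ (norm_nonneg _)
      have hsq : Real.sqrt δ ^ 2 = δ := Real.sq_sqrt hδ.le
      have hb1 : ‖(1 / (δ : ℂ)) * (φ (Real.sqrt δ • w) - φ 0 - (Real.sqrt δ : ℂ) * L w)‖ ≤
          C * (w.1 ^ 2 + w.2 ^ 2) := by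
        have h1 := hC (Real.sqrt δ • w)
        have e2 : ‖Real.sqrt δ • w‖ ^ 2 = δ * ‖w‖ ^ 2 := by
          rw [norm_smul, mul_pow, Real.norm_eq_abs, sq_abs, Real.sq_sqrt hδ.le]
        rw [e2, map_smul, Complex.real_smul] at h1
        have e3 : ‖(1 / (δ : ℂ))‖ = 1 / δ := by simp [abs_of_pos hδ]
        have hn : ‖w‖ ^ 2 ≤ w.1 ^ 2 + w.2 ^ 2 := by
          rw [Prod.norm_def]
          rcases max_choice ‖w.1‖ ‖w.2‖ with hm | hm <;> rw [hm, Real.norm_eq_abs, sq_abs] <;>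
            nlinarith [sq_nonneg w.1, sq_nonneg w.2]
        rw [norm_mul, e3]
        calc _ ≤ 1 / δ * (C * (δ * ‖w‖ ^ 2)) := by gcongr
          _ = C * ‖w‖ ^ 2 := by field_simp
          _ ≤ _ := by gcongr
      have hb2 : ‖φ (Real.sqrt δ • w) * (((X δ w - 1) / δ : ℝ) : ℂ)‖ ≤
          M * (2 * (w.1 ^ 2 + w.2 ^ 2) + 2 * (p.1 ^ 2 + p.2 ^ 2)) := by
        rw [norm_mul]
        refine mul_le_mul (hM _) ?_ (norm_nonneg _) hM0
        rw [Complex.norm_real, Real.norm_eq_abs, abs_div, abs_of_pos hδ, div_le_iff₀ hδ,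
          abs_sub_comm, abs_of_nonneg (by linarith [hX1 δ hδ w])]
        have h1 := Real.add_one_le_exp (-δ * ((p.1 + Real.sqrt δ * w.1) ^ 2 +
          (p.2 + Real.sqrt δ * w.2) ^ 2))
        have h2 : (p.1 + Real.sqrt δ * w.1) ^ 2 + (p.2 + Real.sqrt δ * w.2) ^ 2 ≤
            2 * (w.1 ^ 2 + w.2 ^ 2) + 2 * (p.1 ^ 2 + p.2 ^ 2) := by
          have a1 : (p.1 + Real.sqrt δ * w.1) ^ 2 ≤ 2 * p.1 ^ 2 + 2 * (δ * w.1 ^ 2) := by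
            rw [← hsq]
            simp only [hsq]
            nlinarith [sq_nonneg (p.1 - Real.sqrt δ * w.1)]
          have a2 : (p.2 + Real.sqrt δ * w.2) ^ 2 ≤ 2 * p.2 ^ 2 + 2 * (δ * w.2 ^ 2) := by
            nlinarith [sq_nonneg (p.2 - Real.sqrt δ * w.2)]
          nlinarith [sq_nonneg w.1, sq_nonneg w.2]
        have h3 := mul_le_mul_of_nonneg_left h2 hδ.le
        simp only [hX]
        linarith
      refine (norm_add_le _ _).trans ((add_le_add hb1 hb2).trans ?_)
      rw [Complex.norm_real, Real.norm_eq_abs]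
      refine le_trans (le_of_eq ?_) (le_abs_self _)
      ring
    · refine Integrable.norm ?_
      have e : (fun w : ℝ × ℝ => W w *
          (((C + 2 * M) * (w.1 ^ 2 + w.2 ^ 2) + 2 * M * (p.1 ^ 2 + p.2 ^ 2) : ℝ) : ℂ)) =
          fun w => ((C + 2 * M : ℝ) : ℂ) * gW c 0 4 w - ((C + 2 * M : ℝ) : ℂ) * gW c 4 0 w +
            ((2 * M * (p.1 ^ 2 + p.2 ^ 2) : ℝ) : ℂ) * W w := by
        ext w
        simp only [hW, gW]
        push_cast
        ring
      rw [e]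
      exact (((gW_int c hc 0 4).const_mul _).sub ((gW_int c hc 4 0).const_mul _)).add
        (hWi.const_mul _)
    · refine Eventually.of_forall fun w => ?_
      refine Tendsto.const_mul _ ((hlim w).add (Tendsto.mul ?_ ?_))
      · have : Continuous (fun δ : ℝ => φ (Real.sqrt δ • w)) := by fun_prop
        have := this.tendsto 0
        simp only [Real.sqrt_zero, zero_smul] at this
        exact this.mono_left nhdsWithin_le_nhds
      · refine (Complex.continuous_ofReal.tendsto _).comp (exp_lim _ _ ?_)
        have : Continuous (fun δ : ℝ => (p.1 + Real.sqrt δ * w.1) ^ 2 +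
          (p.2 + Real.sqrt δ * w.2) ^ 2) := by fun_prop
        have := this.tendsto 0
        simp only [Real.sqrt_zero, zero_mul, add_zero] at this
        exact this.mono_left nhdsWithin_le_nhds
  refine hDCT.congr' ?_
  filter_upwards [self_mem_nhdsWithin] with δ hδ0
  have hδ : (0 : ℝ) < δ := hδ0
  have hδc : (δ : ℂ) ≠ 0 := by exact_mod_cast hδ.ne'
  have m1 : Integrable (fun w => W w * (φ (Real.sqrt δ • w) * ((X δ w : ℝ) : ℂ))) := by
    refine hWi.mul_bdd (c := M) (Continuous.aestronglyMeasurable ?_)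
      (Eventually.of_forall fun w => ?_)
    · have := hXc δ
      fun_prop
    · rw [norm_mul, Complex.norm_real, Real.norm_eq_abs, abs_of_nonneg (Real.exp_nonneg _)]
      calc _ ≤ M * 1 := mul_le_mul (hM _) (hX1 δ hδ w) (Real.exp_nonneg _) hM0
        _ = M := mul_one _
  have m1' := m1.const_mul (1 / (δ : ℂ))
  have m2 := hWi.const_mul (φ 0 / (δ : ℂ))
  have m3 := hWLi.const_mul ((Real.sqrt δ : ℂ) / (δ : ℂ))
  have e : (fun w => W w * ((1 / (δ : ℂ)) *
      (φ (Real.sqrt δ • w) - φ 0 - (Real.sqrt δ : ℂ) * L w) +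
        φ (Real.sqrt δ • w) * (((X δ w - 1) / δ : ℝ) : ℂ))) = fun w =>
      ((1 / (δ : ℂ)) * (W w * (φ (Real.sqrt δ • w) * ((X δ w : ℝ) : ℂ))) - (φ 0 / (δ : ℂ)) * W w)
        - ((Real.sqrt δ : ℂ) / (δ : ℂ)) * (W w * L w) := by
    ext w
    push_cast
    field_simp
    ring
  rw [e, integral_sub (by exact m1'.sub m2) m3, integral_sub m1' m2]
  simp only [integral_const_mul, hW0, hWL0, mul_zero, sub_zero]
  rfl

lemma inner_eq (E δ : ℝ) (hδ : 0 < δ) (u v : ℝ) :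
    ∫ q : ℝ × ℝ, Hfun q * (Complex.exp (-(δ : ℂ) * (q.1 : ℂ) ^ 2 + Complex.I * ((E * u : ℝ) : ℂ) * q.1) *
      Complex.exp (-(δ : ℂ) * (q.2 : ℂ) ^ 2 + Complex.I * ((-(E * v) : ℝ) : ℂ) * q.2)) =
    (1 / 2 : ℂ) * ((Real.pi / δ : ℂ) * ((E : ℂ) ^ 2 / (4 * δ ^ 2) * (((u : ℂ) ^ 2 - (v : ℂ) ^ 2) *
      Complex.exp (-(E : ℂ) ^ 2 * ((u : ℂ) ^ 2 + (v : ℂ) ^ 2) / (4 * δ))))) := by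
  have hδc : (δ : ℂ) ≠ 0 := by exact_mod_cast hδ.ne'
  have key : ∀ m n : ℕ, ∫ q : ℝ × ℝ,
      ((q.1 : ℂ) ^ m * Complex.exp (-(δ : ℂ) * (q.1 : ℂ) ^ 2 + Complex.I * ((E * u : ℝ) : ℂ) * q.1)) *
      ((q.2 : ℂ) ^ n * Complex.exp (-(δ : ℂ) * (q.2 : ℂ) ^ 2 + Complex.I * ((-(E * v) : ℝ) : ℂ) * q.2))
      = JJ δ (E * u) m * JJ δ (-(E * v)) n := fun m n =>
    integral_prod_mul (μ := (volume : Measure ℝ)) (ν := (volume : Measure ℝ))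
      (fun a : ℝ => (a : ℂ) ^ m * Complex.exp (-(δ : ℂ) * (a : ℂ) ^ 2 + Complex.I * ((E * u : ℝ) : ℂ) * a))
      (fun a : ℝ => (a : ℂ) ^ n *
        Complex.exp (-(δ : ℂ) * (a : ℂ) ^ 2 + Complex.I * ((-(E * v) : ℝ) : ℂ) * a))
  have hi : ∀ m n : ℕ, Integrable (fun q : ℝ × ℝ =>
      ((q.1 : ℂ) ^ m * Complex.exp (-(δ : ℂ) * (q.1 : ℂ) ^ 2 + Complex.I * ((E * u : ℝ) : ℂ) * q.1)) *
      ((q.2 : ℂ) ^ n * Complex.exp (-(δ : ℂ) * (q.2 : ℂ) ^ 2 + Complex.I * ((-(E * v) : ℝ) : ℂ) * q.2)))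
      := fun m n => (JJ_int δ (E * u) hδ m).mul_prod (JJ_int δ (-(E * v)) hδ n)
  have e : ∀ q : ℝ × ℝ,
      Hfun q * (Complex.exp (-(δ : ℂ) * (q.1 : ℂ) ^ 2 + Complex.I * ((E * u : ℝ) : ℂ) * q.1) *
      Complex.exp (-(δ : ℂ) * (q.2 : ℂ) ^ 2 + Complex.I * ((-(E * v) : ℝ) : ℂ) * q.2)) =
      (1 / 2 : ℂ) * (
      ((q.1 : ℂ) ^ 0 * Complex.exp (-(δ : ℂ) * (q.1 : ℂ) ^ 2 + Complex.I * ((E * u : ℝ) : ℂ) * q.1)) *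
      ((q.2 : ℂ) ^ 2 * Complex.exp (-(δ : ℂ) * (q.2 : ℂ) ^ 2 + Complex.I * ((-(E * v) : ℝ) : ℂ) * q.2))
      -
      ((q.1 : ℂ) ^ 2 * Complex.exp (-(δ : ℂ) * (q.1 : ℂ) ^ 2 + Complex.I * ((E * u : ℝ) : ℂ) * q.1)) *
      ((q.2 : ℂ) ^ 0 * Complex.exp (-(δ : ℂ) * (q.2 : ℂ) ^ 2 + Complex.I * ((-(E * v) : ℝ) : ℂ) * q.2)))
      := by
    intro q
    simp only [Hfun]
    ring
  simp only [e]
  rw [integral_const_mul, integral_sub (hi 0 2) (hi 2 0), key, key, JJ_two _ _ hδ, JJ_two _ _ hδ]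
  have h0 : JJ δ (E * u) 0 * JJ δ (-(E * v)) 0 = (Real.pi / δ : ℂ) *
      Complex.exp (-(E : ℂ) ^ 2 * ((u : ℂ) ^ 2 + (v : ℂ) ^ 2) / (4 * δ)) := by
    rw [JJ_zero _ _ hδ, JJ_zero _ _ hδ]
    have : ((Real.sqrt (Real.pi / δ) : ℝ) : ℂ) * ((Real.sqrt (Real.pi / δ) : ℝ) : ℂ) =
        (Real.pi / δ : ℂ) := by
      rw [← Complex.ofReal_mul, Real.mul_self_sqrt (by positivity)]
      push_cast
      rfl
    rw [mul_mul_mul_comm, this, ← Complex.exp_add]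
    congr 2
    push_cast
    ring
  push_cast
  linear_combination (1 / 2 : ℂ) * ((E : ℂ) ^ 2 / (4 * δ ^ 2) * (((u : ℂ) ^ 2 - (v : ℂ) ^ 2))) * h0

lemma star_eq (E : ℝ) (hE : E ≠ 0) (f : SchwartzMap (ℝ × ℝ) ℂ) (t x δ : ℝ) (hδ : 0 < δ) :
    starInt (2 / E) δ Hfun (fun p => f p) t x = ((E : ℂ) ^ 4 / (32 * Real.pi)) *
    ((1 / (δ : ℂ)) * ∫ w : ℝ × ℝ, (gW (E ^ 2 / 4) 0 2 w - gW (E ^ 2 / 4) 2 0 w) *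
      ((f ((t, x) + Real.sqrt δ • w) * Complex.exp (Complex.I * E *
        (x * ((Real.sqrt δ • w).1 : ℂ) - t * ((Real.sqrt δ • w).2 : ℂ)))) *
        ((Real.exp (-δ * ((t + Real.sqrt δ * w.1) ^ 2 +
        (x + Real.sqrt δ * w.2) ^ 2)) : ℝ) : ℂ))) := by
  have hδc : (δ : ℂ) ≠ 0 := by exact_mod_cast hδ.ne'
  have hEc : (E : ℂ) ≠ 0 := by exact_mod_cast hE
  have hpi : (Real.pi : ℂ) ≠ 0 := by exact_mod_cast Real.pi_ne_zero
  -- rewrite the integrand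
  set Cf : ℝ × ℝ → ℂ := fun y => f y * ((Real.exp (-δ * (y.1 ^ 2 + y.2 ^ 2)) : ℝ) : ℂ) *
    Complex.exp (Complex.I * E * (x * ((y.1 - t : ℝ) : ℂ) - t * ((y.2 - x : ℝ) : ℂ))) with hCf
  have e1 : ∀ q : (ℝ × ℝ) × (ℝ × ℝ),
      ((Real.exp (-δ * (q.1.1 ^ 2 + q.1.2 ^ 2 + q.2.1 ^ 2 + q.2.2 ^ 2)) : ℝ) : ℂ) *
        Hfun q.1 * f q.2 *
        Complex.exp ((2 * Complex.I / ((2 / E : ℝ) : ℂ)) *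
          (((q.1.1 - t : ℝ) : ℂ) * ((q.2.2 - x : ℝ) : ℂ)
            - ((q.1.2 - x : ℝ) : ℂ) * ((q.2.1 - t : ℝ) : ℂ))) =
      Cf q.2 * (Hfun q.1 *
        (Complex.exp (-(δ : ℂ) * (q.1.1 : ℂ) ^ 2 + Complex.I * ((E * (q.2.2 - x) : ℝ) : ℂ) * q.1.1) *
      Complex.exp (-(δ : ℂ) * (q.1.2 : ℂ) ^ 2 + Complex.I * ((-(E * (q.2.1 - t)) : ℝ) : ℂ) * q.1.2)))
      := by
    intro q
    have : 2 * Complex.I / ((2 / E : ℝ) : ℂ) = Complex.I * E := by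
      push_cast
      field_simp
    rw [this]
    simp only [hCf]
    have hexp : ((Real.exp (-δ * (q.1.1 ^ 2 + q.1.2 ^ 2 + q.2.1 ^ 2 + q.2.2 ^ 2)) : ℝ) : ℂ) *
        Complex.exp (Complex.I * E * (((q.1.1 - t : ℝ) : ℂ) * ((q.2.2 - x : ℝ) : ℂ)
            - ((q.1.2 - x : ℝ) : ℂ) * ((q.2.1 - t : ℝ) : ℂ))) =
        ((Real.exp (-δ * (q.2.1 ^ 2 + q.2.2 ^ 2)) : ℝ) : ℂ) *
        Complex.exp (Complex.I * E * (x * ((q.2.1 - t : ℝ) : ℂ) - t * ((q.2.2 - x : ℝ) : ℂ))) *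
        (Complex.exp (-(δ : ℂ) * (q.1.1 : ℂ) ^ 2 + Complex.I * ((E * (q.2.2 - x) : ℝ) : ℂ) * q.1.1) *
      Complex.exp (-(δ : ℂ) * (q.1.2 : ℂ) ^ 2 + Complex.I * ((-(E * (q.2.1 - t)) : ℝ) : ℂ) * q.1.2))
      := by
      rw [Complex.ofReal_exp, Complex.ofReal_exp, ← Complex.exp_add, ← Complex.exp_add,
        ← Complex.exp_add, ← Complex.exp_add]
      congr 1
      push_cast
      ring
    linear_combination (Hfun q.1 * f q.2) * hexp
  have hfc : Continuous (fun p => f p) := f.continuous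
  -- integrability
  have hHi : Integrable (fun y : ℝ × ℝ => (1 / 2 : ℂ) * (gW δ 0 2 y - gW δ 2 0 y)) :=
    ((gW_int δ hδ 0 2).sub (gW_int δ hδ 2 0)).const_mul _
  have hint : Integrable (fun q : (ℝ × ℝ) × (ℝ × ℝ) => Cf q.2 * (Hfun q.1 *
        (Complex.exp (-(δ : ℂ) * (q.1.1 : ℂ) ^ 2 + Complex.I * ((E * (q.2.2 - x) : ℝ) : ℂ) * q.1.1) *
      Complex.exp (-(δ : ℂ) * (q.1.2 : ℂ) ^ 2 + Complex.I * ((-(E * (q.2.1 - t)) : ℝ) : ℂ) * q.1.2))))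
      := by
    have h0 := hHi.mul_prod (f.integrable (μ := volume))
    refine h0.mono ?_ (Eventually.of_forall fun q => ?_)
    · refine Continuous.aestronglyMeasurable ?_
      simp only [hCf, Hfun]
      fun_prop
    · have a1 : ‖Cf q.2‖ ≤ ‖f q.2‖ := by
        simp only [hCf]
        rw [norm_mul, norm_mul, Complex.norm_exp, Complex.norm_real, Real.norm_eq_abs,
          abs_of_nonneg (Real.exp_nonneg _)]
        have b1 : (Complex.I * E * (x * ((q.2.1 - t : ℝ) : ℂ) - t * ((q.2.2 - x : ℝ) : ℂ))).re = 0 := by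
          simp
        have b2 : Real.exp (-δ * (q.2.1 ^ 2 + q.2.2 ^ 2)) ≤ 1 := by
          rw [Real.exp_le_one_iff]
          have : 0 ≤ δ * (q.2.1 ^ 2 + q.2.2 ^ 2) := by positivity
          linarith
        rw [b1, Real.exp_zero, mul_one]
        exact mul_le_of_le_one_right (norm_nonneg _) b2
      have a2 : ‖Hfun q.1 *
        (Complex.exp (-(δ : ℂ) * (q.1.1 : ℂ) ^ 2 + Complex.I * ((E * (q.2.2 - x) : ℝ) : ℂ) * q.1.1) *
        Complex.exp (-(δ : ℂ) * (q.1.2 : ℂ) ^ 2 + Complex.I * ((-(E * (q.2.1 - t)) : ℝ) : ℂ) * q.1.2))‖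
        = ‖(1 / 2 : ℂ) * (gW δ 0 2 q.1 - gW δ 2 0 q.1)‖ := by
        have : (1 / 2 : ℂ) * (gW δ 0 2 q.1 - gW δ 2 0 q.1) =
          Hfun q.1 * Complex.exp (-(δ : ℂ) * ((q.1.1 : ℂ) ^ 2 + (q.1.2 : ℂ) ^ 2)) := by
          simp only [gW, Hfun]
          ring
        rw [this, ← Complex.exp_add, norm_mul, norm_mul, Complex.norm_exp, Complex.norm_exp]
        congr 2
        simp [pow_two]
        ring
      rw [norm_mul, a2, mul_comm]
      refine (mul_le_mul_of_nonneg_left a1 (norm_nonneg _)).trans (le_of_eq ?_)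
      exact (norm_mul _ _).symm
  have hF : ∫ q : (ℝ × ℝ) × (ℝ × ℝ), Cf q.2 * (Hfun q.1 *
        (Complex.exp (-(δ : ℂ) * (q.1.1 : ℂ) ^ 2 + Complex.I * ((E * (q.2.2 - x) : ℝ) : ℂ) * q.1.1) *
      Complex.exp (-(δ : ℂ) * (q.1.2 : ℂ) ^ 2 + Complex.I * ((-(E * (q.2.1 - t)) : ℝ) : ℂ) * q.1.2)))
      = ∫ y : ℝ × ℝ, Cf y * ((1 / 2 : ℂ) * ((Real.pi / δ : ℂ) * ((E : ℂ) ^ 2 / (4 * δ ^ 2) *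
      ((((y.2 - x : ℝ) : ℂ) ^ 2 - ((y.1 - t : ℝ) : ℂ) ^ 2) *
      Complex.exp (-(E : ℂ) ^ 2 * (((y.2 - x : ℝ) : ℂ) ^ 2 + ((y.1 - t : ℝ) : ℂ) ^ 2) / (4 * δ))))))
      := by
    refine (integral_prod_symm _ hint).trans ?_
    congr 1
    ext y
    simp only [integral_const_mul]
    rw [inner_eq E δ hδ]
  unfold starInt
  simp only [e1]
  rw [hF]
  set G : ℝ × ℝ → ℂ := fun y => Cf y * ((1 / 2 : ℂ) * ((Real.pi / δ : ℂ) * ((E : ℂ) ^ 2 / (4 * δ ^ 2) *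
      ((((y.2 - x : ℝ) : ℂ) ^ 2 - ((y.1 - t : ℝ) : ℂ) ^ 2) *
      Complex.exp (-(E : ℂ) ^ 2 * (((y.2 - x : ℝ) : ℂ) ^ 2 + ((y.1 - t : ℝ) : ℂ) ^ 2) / (4 * δ))))))
    with hG
  have hsq : Real.sqrt δ ^ 2 = δ := Real.sq_sqrt hδ.le
  have hsqc : ((Real.sqrt δ : ℝ) : ℂ) ^ 2 = δ := by exact_mod_cast hsq
  have hsub : ∫ y, G y = (δ : ℂ) * ∫ w : ℝ × ℝ, G ((t, x) + Real.sqrt δ • w) := by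
    have h1 := integral_add_left_eq_self (μ := (volume : Measure (ℝ × ℝ))) G (t, x)
    have h2 := Measure.integral_comp_smul (volume : Measure (ℝ × ℝ)) (fun y => G ((t, x) + y))
      (Real.sqrt δ)
    rw [h1] at h2
    have hf : Module.finrank ℝ (ℝ × ℝ) = 2 := by simp
    rw [hf, hsq, abs_of_pos (by positivity)] at h2
    rw [h2, Complex.real_smul]
    push_cast
    field_simp
  rw [hsub]
  have hGw : ∀ w : ℝ × ℝ, G ((t, x) + Real.sqrt δ • w) = (Real.pi * (E : ℂ) ^ 2 / (8 * δ ^ 2)) *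
      ((gW (E ^ 2 / 4) 0 2 w - gW (E ^ 2 / 4) 2 0 w) *
      ((f ((t, x) + Real.sqrt δ • w) * Complex.exp (Complex.I * E *
        (x * ((Real.sqrt δ • w).1 : ℂ) - t * ((Real.sqrt δ • w).2 : ℂ)))) *
        ((Real.exp (-δ * ((t + Real.sqrt δ * w.1) ^ 2 +
        (x + Real.sqrt δ * w.2) ^ 2)) : ℝ) : ℂ))) := by
    intro w
    simp only [hG, hCf, gW, Prod.fst_add, Prod.snd_add, Prod.smul_fst, Prod.smul_snd, smul_eq_mul,
      add_sub_cancel_left]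
    have hexp : Complex.exp (-(E : ℂ) ^ 2 * (((Real.sqrt δ * w.2 : ℝ) : ℂ) ^ 2 +
        ((Real.sqrt δ * w.1 : ℝ) : ℂ) ^ 2) / (4 * δ)) =
        Complex.exp (-((E ^ 2 / 4 : ℝ) : ℂ) * ((w.1 : ℂ) ^ 2 + (w.2 : ℂ) ^ 2)) := by
      congr 1
      push_cast
      rw [mul_pow, mul_pow, hsqc]
      field_simp
      ring
    rw [hexp]
    have h2 : ((Real.sqrt δ * w.2 : ℝ) : ℂ) ^ 2 - ((Real.sqrt δ * w.1 : ℝ) : ℂ) ^ 2 =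
        δ * ((w.2 : ℂ) ^ 2 - (w.1 : ℂ) ^ 2) := by
      push_cast
      rw [mul_pow, mul_pow, hsqc]
      ring
    rw [h2]
    field_simp
    ring
  simp only [hGw, integral_const_mul]
  push_cast
  field_simp
  ring

lemma star_lim (E : ℝ) (hE : E ≠ 0) (f : SchwartzMap (ℝ × ℝ) ℂ) (t x : ℝ) :
    Filter.Tendsto (fun δ : ℝ => starInt (2 / E) δ Hfun (fun p => f p) t x)
        (nhdsWithin (0 : ℝ) (Set.Ioi 0))
        (nhds ((1 / (E : ℂ) ^ 2) * D2 E (fun a b => f (a, b)) t x)) := by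
  have hEc : (E : ℂ) ≠ 0 := by exact_mod_cast hE
  have hpi : (Real.pi : ℂ) ≠ 0 := by exact_mod_cast Real.pi_ne_zero
  set φ : ℝ × ℝ → ℂ := fun w => f ((t, x) + w) * Complex.exp (Complex.I * E *
        (x * (w.1 : ℂ) - t * (w.2 : ℂ))) with hφ
  have hf2 : ContDiff ℝ 2 (fun p => f p) := f.smooth 2
  have hof : ContDiff ℝ 2 (fun a : ℝ => (a : ℂ)) := Complex.ofRealCLM.contDiff
  have hcd : ContDiff ℝ 2 φ := by
    refine (hf2.comp (contDiff_const.add contDiff_id)).mul (ContDiff.cexp ?_)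
    exact contDiff_const.mul ((contDiff_const.mul (hof.comp contDiff_fst)).sub
      (contDiff_const.mul (hof.comp contDiff_snd)))
  obtain ⟨M, hM⟩ : ∃ M, ∀ p, ‖f p‖ ≤ M := by
    obtain ⟨M, hM⟩ := f.decay 0 0
    exact ⟨M, fun p => by simpa using hM.2 p⟩
  have hφM : ∀ w, ‖φ w‖ ≤ M := by
    intro w
    simp only [hφ]
    rw [norm_mul, Complex.norm_exp]
    have : (Complex.I * E * (x * (w.1 : ℂ) - t * (w.2 : ℂ))).re = 0 := by simp
    rw [this, Real.exp_zero, mul_one]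
    exact hM _
  have hml := (main_lim (E ^ 2 / 4) (by positivity) (t, x) φ hcd M hφM).const_mul
    ((E : ℂ) ^ 4 / (32 * Real.pi))
  have d1 : fderiv ℝ (fderiv ℝ φ) 0 (1, 0) (1, 0) = dT (dT (fun a b => f (a, b))) t x
      + 2 * (Complex.I * E * x) * dT (fun a b => f (a, b)) t x
      + (Complex.I * E * x) ^ 2 * f (t, x) := by
    rw [second_dir φ hcd]
    refine Eq.trans ?_ (second_exp (fun a => f (a, x)) (hf2.comp (by fun_prop)) t (Complex.I * E * x))
    congr 2
    ext v
    simp [hφ]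
    left
    ring_nf
  have d2 : fderiv ℝ (fderiv ℝ φ) 0 (0, 1) (0, 1) = dX (dX (fun a b => f (a, b))) t x
      + 2 * (-(Complex.I * E * t)) * dX (fun a b => f (a, b)) t x
      + (-(Complex.I * E * t)) ^ 2 * f (t, x) := by
    rw [second_dir φ hcd]
    refine Eq.trans ?_ (second_exp (fun a => f (t, a)) (hf2.comp (by fun_prop)) x (-(Complex.I * E * t)))
    congr 2
    ext v
    simp [hφ]
    left
    ring_nf
  have hval : ((E : ℂ) ^ 4 / (32 * Real.pi)) * ((Real.pi / (2 * ((E ^ 2 / 4 : ℝ) : ℂ) ^ 3) : ℂ) *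
      ((1 / 2 : ℂ) * (fderiv ℝ (fderiv ℝ φ) 0 (0, 1) (0, 1) - fderiv ℝ (fderiv ℝ φ) 0 (1, 0) (1, 0))))
      = (1 / (E : ℂ) ^ 2) * D2 E (fun a b => f (a, b)) t x := by
    rw [d1, d2, D2]
    have h3 : ((E : ℂ) ^ 4 / (32 * Real.pi)) * (Real.pi / (2 * ((E ^ 2 / 4 : ℝ) : ℂ) ^ 3) : ℂ) =
        1 / (E : ℂ) ^ 2 := by
      push_cast
      field_simp
      norm_num
    rw [← mul_assoc, h3]
    linear_combination (1 / (E : ℂ) ^ 2) * (1 / 2 : ℂ) * (E : ℂ) ^ 2 *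
      ((t : ℂ) ^ 2 - (x : ℂ) ^ 2) * f (t, x) * Complex.I_sq
  rw [hval] at hml
  refine hml.congr' ?_
  filter_upwards [self_mem_nhdsWithin] with δ hδ
  exact (star_eq E hE f t x δ hδ).symm

/-- at the self-dual point `θ = 2/E`, the regularized star
products `H ⋆_θ f` and `f ⋆_θ H` exist and equal `(1/E²)D²f` and `(1/E²)D̃²f`
respectively. -/
theorem star_with_H_gives_KleinGordon (E : ℝ) (hE : 0 < E)
    (f : SchwartzMap (ℝ × ℝ) ℂ) (t x : ℝ) :
    Filter.Tendsto (fun δ : ℝ => starInt (2 / E) δ Hfun (fun p => f p) t x)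
        (nhdsWithin (0 : ℝ) (Set.Ioi 0))
        (nhds ((1 / (E : ℂ) ^ 2) * D2 E (fun a b => f (a, b)) t x))
      ∧ Filter.Tendsto (fun δ : ℝ => starInt (2 / E) δ (fun p => f p) Hfun t x)
          (nhdsWithin (0 : ℝ) (Set.Ioi 0))
          (nhds ((1 / (E : ℂ) ^ 2) * Dt2 E (fun a b => f (a, b)) t x)) := by
  refine ⟨star_lim E hE.ne' f t x, ?_⟩
  have h := star_lim (-E) (neg_ne_zero.2 hE.ne') f t x
  have e : (1 / ((-E : ℝ) : ℂ) ^ 2) * D2 (-E) (fun a b => f (a, b)) t x =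
      (1 / (E : ℂ) ^ 2) * Dt2 E (fun a b => f (a, b)) t x := by
    simp only [D2, Dt2]
    push_cast
    ring
  rw [e] at h
  refine h.congr fun δ => ?_
  unfold starInt
  have hp : (1 / (Real.pi ^ 2 * (2 / -E) ^ 2) : ℝ) = 1 / (Real.pi ^ 2 * (2 / E) ^ 2) := by
    rw [div_neg, neg_sq]
  rw [hp]
  congr 1
  refine Eq.trans ?_ (integral_prod_swap (μ := (volume : Measure (ℝ × ℝ)))
    (ν := (volume : Measure (ℝ × ℝ))) _)
  refine integral_congr_ae (Eventually.of_forall fun q => ?_)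
  simp only [Prod.swap]
  have h1 : -δ * (q.1.1 ^ 2 + q.1.2 ^ 2 + q.2.1 ^ 2 + q.2.2 ^ 2) =
    -δ * (q.2.1 ^ 2 + q.2.2 ^ 2 + q.1.1 ^ 2 + q.1.2 ^ 2) := by ring
  rw [h1, mul_right_comm _ (Hfun q.1)]
  congr 2
  push_cast
  rw [div_neg]
  ring
end

section
/- For every E′ > 0 and all n, m ∈ ℕ₀, the resonance eigenfunctions satisfy the bi-orthonormality relation lim_{ε→0⁺} ∫_ℝ e^{−εq²} conj(f_n^+(q)) f_m^−(q) dq = δ_{nm}, and likewise lim_{ε→0⁺} ∫_ℝ e^{−εq²} conj(f_n^−(q)) f_m^+(q) dq = δ_{nm}. -/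
open MeasureTheory Filter Complex

/-- Physicists' Hermite polynomials. -/
noncomputable def hermitePoly : ℕ → ℂ → ℂ
  | 0, _ => 1
  | 1, y => 2 * y
  | (n + 2), y => 2 * y * hermitePoly (n + 1) y - 2 * (n + 1) * hermitePoly n y

/-- The generalized (resonance) eigenfunctions `f_n^±` (sign `s = ±1`). -/
noncomputable def fres (E' s : ℝ) (n : ℕ) (q : ℝ) : ℂ :=
  (((E' / Real.pi) ^ ((1 : ℝ) / 4) : ℝ) : ℂ) *
    (((Real.sqrt (2 ^ n * n.factorial) : ℝ) : ℂ))⁻¹ *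
    Complex.exp ((s : ℂ) * Complex.I * (Real.pi : ℂ) / 8) *
    Complex.exp (-(s : ℂ) * Complex.I * ((E' / 2 : ℝ) : ℂ) * (q : ℂ) ^ 2) *
    hermitePoly n (Complex.exp ((s : ℂ) * Complex.I * (Real.pi : ℂ) / 4) *
      ((Real.sqrt E' : ℝ) : ℂ) * (q : ℂ))

open Polynomial in
/-- Hermite polynomials as polynomials. -/
noncomputable def hermP : ℕ → Polynomial ℂ
  | 0 => 1
  | 1 => 2 * X
  | (n + 2) => 2 * X * hermP (n + 1) - 2 * ((n : Polynomial ℂ) + 1) * hermP n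

theorem hermP_eval (n : ℕ) (y : ℂ) : (hermP n).eval y = hermitePoly n y := by
  induction n using Nat.twoStepInduction with
  | zero => simp [hermP, hermitePoly]
  | one => simp [hermP, hermitePoly]
  | more n h1 h2 => simp [hermP, hermitePoly, h1, h2]

theorem hermP_deriv (n : ℕ) :
    Polynomial.derivative (hermP (n + 1)) = 2 * ((n : Polynomial ℂ) + 1) * hermP n := by
  induction n using Nat.twoStepInduction with
  | zero => simp [hermP]
  | one =>
    simp [hermP]
    ring
  | more n h1 h2 =>
    have e : hermP (n + 2 + 1) = 2 * Polynomial.X * hermP (n + 2)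
        - 2 * (((n + 1 : ℕ) : Polynomial ℂ) + 1) * hermP (n + 1) := rfl
    have e' : hermP (n + 2) = 2 * Polynomial.X * hermP (n + 1)
        - 2 * ((n : Polynomial ℂ) + 1) * hermP n := rfl
    rw [e]
    simp only [Polynomial.derivative_sub, Polynomial.derivative_mul, h1, h2,
      Polynomial.derivative_X, Polynomial.derivative_ofNat, Polynomial.derivative_add,
      Polynomial.derivative_natCast, Polynomial.derivative_one]
    rw [e']
    push_cast
    ring

theorem hermP_succ (n : ℕ) :
    hermP (n + 1) = 2 * Polynomial.X * hermP n - Polynomial.derivative (hermP n) := by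
  cases n with
  | zero => simp [hermP]
  | succ n => rw [hermP_deriv]; rfl

/-- Normalised Gaussian moments. -/
noncomputable def gmom : ℕ → ℂ
  | 0 => 1
  | 1 => 0
  | (k + 2) => ((k : ℂ) + 1) / 2 * gmom k

/-- The Gaussian functional. -/
noncomputable def gL : Polynomial ℂ →ₗ[ℂ] ℂ :=
  Polynomial.lsum (fun k => gmom k • (LinearMap.id : ℂ →ₗ[ℂ] ℂ))

theorem gL_monomial (k : ℕ) (a : ℂ) : gL (Polynomial.monomial k a) = gmom k * a := by
  simp [gL, Polynomial.lsum_apply]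

theorem gL_apply (p : Polynomial ℂ) :
    gL p = ∑ k ∈ p.support, gmom k * p.coeff k := by
  simp [gL, Polynomial.lsum_apply, Polynomial.sum]

theorem gL_deriv (p : Polynomial ℂ) :
    gL (Polynomial.derivative p) = gL (2 * Polynomial.X * p) := by
  induction p using Polynomial.induction_on' with
  | add p q hp hq => simp [mul_add, hp, hq]
  | monomial k a =>
    have : (2 * Polynomial.X * Polynomial.monomial k a : Polynomial ℂ)
        = Polynomial.monomial (k + 1) (2 * a) := by
      rw [mul_assoc, Polynomial.X_mul_monomial, two_mul, two_mul, map_add]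
    rw [this, Polynomial.derivative_monomial, gL_monomial, gL_monomial]
    rcases k with _ | k
    · simp [gmom]
    · simp [gmom]; ring

theorem gL_step (n : ℕ) (p : Polynomial ℂ) :
    gL (hermP (n + 1) * p) = gL (hermP n * Polynomial.derivative p) := by
  have h := gL_deriv (hermP n * p)
  rw [Polynomial.derivative_mul, map_add] at h
  rw [hermP_succ, sub_mul, map_sub, mul_assoc, ← h]
  ring

theorem gL_orth (n m : ℕ) :
    gL (hermP n * hermP m) = if n = m then (2 : ℂ) ^ n * n.factorial else 0 := by
  induction n generalizing m with
  | zero =>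
    cases m with
    | zero =>
      have : (hermP 0 * hermP 0 : Polynomial ℂ) = Polynomial.monomial 0 1 := by simp [hermP]
      rw [this, gL_monomial]; simp [gmom]
    | succ m =>
      rw [mul_comm, gL_step]
      simp [hermP]
  | succ n ih =>
    rw [gL_step]
    cases m with
    | zero => simp [hermP]
    | succ m =>
      have : hermP n * Polynomial.derivative (hermP (m + 1))
          = (2 * ((m : ℂ) + 1)) • (hermP n * hermP m) := by
        have hc : (Polynomial.C (2 : ℂ)) = 2 := rfl
        rw [hermP_deriv, Polynomial.smul_eq_C_mul]
        simp [hc]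
        ring
      rw [this, map_smul, ih]
      by_cases h : n = m
      · subst h
        simp [Nat.factorial_succ, pow_succ]
        ring
      · simp [h]

theorem integrable_pow_gauss {b : ℂ} (hb : 0 < b.re) (k : ℕ) :
    Integrable (fun q : ℝ => (q : ℂ) ^ k * Complex.exp (-b * (q : ℂ) ^ 2)) := by
  have h := (integrable_rpow_mul_exp_neg_mul_sq hb (s := (k : ℝ))
    (by have : (0 : ℝ) ≤ k := Nat.cast_nonneg k
        linarith)).norm
  refine h.mono' (by fun_prop) (ae_of_all _ fun q => le_of_eq ?_)
  simp only [norm_mul, norm_pow, Real.rpow_natCast, Complex.norm_exp, Complex.norm_real,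
    Real.norm_eq_abs, Real.abs_exp]
  congr 2
  rw [← Complex.ofReal_pow, Complex.re_mul_ofReal]
  simp

theorem hasDerivAt_gauss (b : ℂ) (q : ℝ) :
    HasDerivAt (fun q : ℝ => Complex.exp (-b * (q : ℂ) ^ 2))
      (-(2 * b) * ((q : ℂ) ^ 1 * Complex.exp (-b * (q : ℂ) ^ 2))) q := by
  have h : HasDerivAt (fun z : ℂ => Complex.exp (-b * z ^ 2))
      (-(2 * b) * ((q : ℂ) ^ 1 * Complex.exp (-b * (q : ℂ) ^ 2))) (q : ℂ) := by
    have := (((hasDerivAt_id (q : ℂ)).pow 2).const_mul (-b)).cexp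
    convert! this using 1
    simp
    ring
  exact h.comp_ofReal

theorem gauss_moment {b : ℂ} (hb : 0 < b.re) (k : ℕ) :
    ∫ q : ℝ, (q : ℂ) ^ k * Complex.exp (-b * (q : ℂ) ^ 2)
      = ((Real.pi : ℂ) / b) ^ (1 / 2 : ℂ) * (gmom k * (b⁻¹) ^ (k / 2)) := by
  have hb0 : b ≠ 0 := by
    rintro rfl
    simp at hb
  induction k using Nat.twoStepInduction with
  | zero => simpa [gmom] using integral_gaussian_complex hb
  | one =>
    have h := integral_eq_zero_of_hasDerivAt_of_integrable (hasDerivAt_gauss b)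
      ((integrable_pow_gauss hb 1).const_mul _) (by simpa using integrable_pow_gauss hb 0)
    rw [integral_const_mul] at h
    have h2 : (-(2 * b)) ≠ 0 := by simp [hb0]
    rw [(mul_eq_zero.mp h).resolve_left h2]
    simp [gmom]
  | more k ih _ =>
    have hd : ∀ q : ℝ, HasDerivAt
        (fun q : ℝ => (q : ℂ) ^ (k + 1) * Complex.exp (-b * (q : ℂ) ^ 2))
        (((k : ℂ) + 1) * ((q : ℂ) ^ k * Complex.exp (-b * (q : ℂ) ^ 2))
          - (2 * b) * ((q : ℂ) ^ (k + 2) * Complex.exp (-b * (q : ℂ) ^ 2))) q := by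
      intro q
      have h1 : HasDerivAt (fun q : ℝ => (q : ℂ) ^ (k + 1)) (((k + 1 : ℕ) : ℂ) * (q : ℂ) ^ k) q :=
        (hasDerivAt_pow (k + 1) (q : ℂ)).comp_ofReal
      convert! h1.mul (hasDerivAt_gauss b q) using 1
      push_cast
      ring
    have i1 := (integrable_pow_gauss hb k).const_mul ((k : ℂ) + 1)
    have i2 := (integrable_pow_gauss hb (k + 2)).const_mul (2 * b)
    have h := integral_eq_zero_of_hasDerivAt_of_integrable hd (i1.sub i2)
      (integrable_pow_gauss hb (k + 1))
    rw [integral_sub i1 i2, integral_const_mul, integral_const_mul, ih] at h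
    have hk : (k + 2) / 2 = k / 2 + 1 := by omega
    rw [hk, pow_succ]
    have h3 := (sub_eq_zero.mp h).symm
    have h2 : (2 * b) ≠ 0 := by simp [hb0]
    apply mul_left_cancel₀ h2
    rw [h3]
    simp only [gmom]
    field_simp

theorem gauss_poly {b : ℂ} (hb : 0 < b.re) (a : ℂ) (p : Polynomial ℂ) :
    ∫ q : ℝ, p.eval (a * (q : ℂ)) * Complex.exp (-b * (q : ℂ) ^ 2)
      = ((Real.pi : ℂ) / b) ^ (1 / 2 : ℂ) *
        ∑ k ∈ p.support, p.coeff k * (a ^ k * (gmom k * (b⁻¹) ^ (k / 2))) := by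
  have : ∀ q : ℝ, p.eval (a * (q : ℂ)) * Complex.exp (-b * (q : ℂ) ^ 2)
      = ∑ k ∈ p.support, (p.coeff k * a ^ k) *
          ((q : ℂ) ^ k * Complex.exp (-b * (q : ℂ) ^ 2)) := by
    intro q
    rw [Polynomial.eval_eq_sum, Polynomial.sum, Finset.sum_mul]
    refine Finset.sum_congr rfl fun k _ => ?_
    rw [mul_pow]; ring
  simp_rw [this]
  rw [integral_finsetSum _ fun k _ => (integrable_pow_gauss hb k).const_mul _, Finset.mul_sum]
  refine Finset.sum_congr rfl fun k _ => ?_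
  rw [integral_const_mul, gauss_moment hb]
  ring

theorem gmom_odd (k : ℕ) : gmom (2 * k + 1) = 0 := by
  induction k with
  | zero => rfl
  | succ k ih =>
    have : gmom (2 * (k + 1) + 1) = (((2 * k + 1 : ℕ) : ℂ) + 1) / 2 * gmom (2 * k + 1) := rfl
    rw [this, ih, mul_zero]

theorem gmom_scale {a : ℂ} (ha : a ≠ 0) (k : ℕ) :
    a ^ k * (gmom k * ((a ^ 2)⁻¹) ^ (k / 2)) = gmom k := by
  rcases Nat.even_or_odd' k with ⟨j, rfl | rfl⟩
  · have : 2 * j / 2 = j := by omega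
    rw [this, pow_mul, inv_pow]
    field_simp
  · simp [gmom_odd]

theorem gauss_limit {a : ℂ} (hre : (a ^ 2).re = 0) (him : (a ^ 2).im ≠ 0) (p : Polynomial ℂ) :
    Tendsto (fun ε : ℝ => ∫ q : ℝ, p.eval (a * (q : ℂ)) *
        Complex.exp (-((ε : ℂ) + a ^ 2) * (q : ℂ) ^ 2))
      (nhdsWithin (0 : ℝ) (Set.Ioi 0))
      (nhds (((Real.pi : ℂ) / a ^ 2) ^ (1 / 2 : ℂ) * gL p)) := by
  have ha2 : a ^ 2 ≠ 0 := by
    intro h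
    rw [h] at him
    simp at him
  have ha : a ≠ 0 := by
    rintro rfl
    simp at ha2
  have hev : ∀ ε ∈ Set.Ioi (0 : ℝ), _ = _ := fun ε (hε : 0 < ε) =>
    gauss_poly (b := (ε : ℂ) + a ^ 2) (by simpa [hre] using hε) a p
  rw [tendsto_congr' (eventually_nhdsWithin_of_forall hev)]
  have hb : Tendsto (fun ε : ℝ => (ε : ℂ) + a ^ 2) (nhdsWithin (0 : ℝ) (Set.Ioi 0))
      (nhds (a ^ 2)) := by
    have : Continuous (fun ε : ℝ => (ε : ℂ) + a ^ 2) := by fun_prop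
    have := this.tendsto 0
    simp only [Complex.ofReal_zero, zero_add] at this
    exact this.mono_left nhdsWithin_le_nhds
  have hinv := hb.inv₀ ha2
  refine Tendsto.mul ?_ ?_
  · have h1 : Tendsto (fun ε : ℝ => (Real.pi : ℂ) / ((ε : ℂ) + a ^ 2))
        (nhdsWithin (0 : ℝ) (Set.Ioi 0)) (nhds ((Real.pi : ℂ) / a ^ 2)) := Tendsto.div tendsto_const_nhds hb ha2
    refine h1.cpow tendsto_const_nhds ?_
    right
    rw [Complex.div_im]
    simp [him, ha2, Real.pi_ne_zero, -map_pow]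
  · have : gL p = ∑ k ∈ p.support, p.coeff k * (a ^ k * (gmom k * ((a ^ 2)⁻¹) ^ (k / 2))) := by
      rw [gL_apply]
      refine Finset.sum_congr rfl fun k _ => ?_
      rw [gmom_scale ha, mul_comm]
    rw [this]
    refine tendsto_finsetSum _ fun k _ => ?_
    exact ((((hinv.pow _).const_mul _).const_mul _).const_mul _)

theorem conj_hermitePoly (n : ℕ) (y : ℂ) :
    (starRingEnd ℂ) (hermitePoly n y) = hermitePoly n ((starRingEnd ℂ) y) := by
  have c2 : (starRingEnd ℂ) 2 = 2 := map_ofNat _ 2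
  induction n using Nat.twoStepInduction with
  | zero => simp [hermitePoly]
  | one => simp [hermitePoly, c2]
  | more n h1 h2 => simp [hermitePoly, h1, h2, c2]

theorem conj_fres (E' s : ℝ) (n : ℕ) (q : ℝ) :
    (starRingEnd ℂ) (fres E' s n q) = fres E' (-s) n q := by
  unfold fres
  simp only [map_mul, conj_hermitePoly, ← Complex.exp_conj, map_inv₀, Complex.conj_ofReal,
    map_div₀, map_neg, map_pow, Complex.conj_I, Complex.ofReal_neg, map_ofNat]
  simp only [neg_mul, mul_neg, neg_neg]

theorem phase_sq (t : ℝ) (ht : t = 1 ∨ t = -1) :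
    Complex.exp ((t : ℂ) * Complex.I * (Real.pi : ℂ) / 4) ^ 2 = t * Complex.I := by
  rw [← Complex.exp_nat_mul]
  rcases ht with rfl | rfl
  · rw [show ((2 : ℕ) : ℂ) * (((1 : ℝ) : ℂ) * Complex.I * (Real.pi : ℂ) / 4)
      = (Real.pi : ℂ) / 2 * Complex.I by push_cast; ring, Complex.exp_pi_div_two_mul_I]
    simp
  · rw [show ((2 : ℕ) : ℂ) * (((-1 : ℝ) : ℂ) * Complex.I * (Real.pi : ℂ) / 4)
      = -((Real.pi : ℂ) / 2 * Complex.I) by push_cast; ring, Complex.exp_neg,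
      Complex.exp_pi_div_two_mul_I]
    simp

theorem root_val (E' : ℝ) (hE' : 0 < E') (t : ℝ) (ht : t = 1 ∨ t = -1) :
    ((Real.pi : ℂ) / (t * Complex.I * E')) ^ (1 / 2 : ℂ)
      = (Real.sqrt (Real.pi / E') : ℂ) *
        Complex.exp (-((t : ℂ) * Complex.I * (Real.pi : ℂ) / 4)) := by
  have hpos : 0 < Real.pi / E' := div_pos Real.pi_pos hE'
  have hE : (E' : ℂ) ≠ 0 := by exact_mod_cast hE'.ne'
  have h1 : (Real.pi : ℂ) / (t * Complex.I * E') = ((Real.pi / E' : ℝ) : ℂ) * (-(t * Complex.I)) := by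
    push_cast
    rcases ht with rfl | rfl <;> field_simp <;> simp
  have hne : -((t : ℂ) * Complex.I) ≠ 0 := by rcases ht with rfl | rfl <;> simp
  have hpc : ((Real.pi / E' : ℝ) : ℂ) ≠ 0 := by exact_mod_cast hpos.ne'
  have h2 : (((Real.pi / E' : ℝ) : ℂ) * (-(t * Complex.I))) ^ (1 / 2 : ℂ)
      = ((Real.pi / E' : ℝ) : ℂ) ^ (1 / 2 : ℂ) * (-(t * Complex.I)) ^ (1 / 2 : ℂ) := by
    rw [Complex.cpow_def_of_ne_zero (mul_ne_zero hpc hne), Complex.cpow_def_of_ne_zero hpc,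
      Complex.cpow_def_of_ne_zero hne, Complex.log_ofReal_mul hpos hne, ← Complex.exp_add,
      Complex.ofReal_log hpos.le]
    congr 1
    ring
  rw [h1, h2]
  congr 1
  · rw [Real.sqrt_eq_rpow, Complex.ofReal_cpow hpos.le]
    simp
  · rw [Complex.cpow_def_of_ne_zero (by rcases ht with rfl | rfl <;> simp)]
    congr 1
    rcases ht with rfl | rfl
    · simp [Complex.log_neg_I]; ring
    · simp [Complex.log_I]; ring

theorem fres_limit (E' : ℝ) (hE' : 0 < E') (t : ℝ) (ht : t = 1 ∨ t = -1) (n m : ℕ) :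
    Tendsto (fun ε : ℝ => ∫ q : ℝ,
          ((Real.exp (-(ε * q ^ 2)) : ℝ) : ℂ) * fres E' t n q * fres E' t m q)
        (nhdsWithin (0 : ℝ) (Set.Ioi 0)) (nhds (if n = m then 1 else 0)) := by
  set a : ℂ := Complex.exp ((t : ℂ) * Complex.I * (Real.pi : ℂ) / 4) *
      ((Real.sqrt E' : ℝ) : ℂ) with ha
  have ha2 : a ^ 2 = t * Complex.I * E' := by
    rw [ha, mul_pow, phase_sq t ht, ← Complex.ofReal_pow, Real.sq_sqrt hE'.le]
  set N : ℕ → ℂ := fun n => (((Real.sqrt (2 ^ n * n.factorial) : ℝ) : ℂ))⁻¹ with hN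
  have hpos : 0 < E' / Real.pi := div_pos hE' Real.pi_pos
  have hquart : (((E' / Real.pi) ^ ((1 : ℝ) / 4) : ℝ) : ℂ) * (((E' / Real.pi) ^ ((1 : ℝ) / 4) : ℝ) : ℂ)
      = (Real.sqrt (E' / Real.pi) : ℂ) := by
    rw [← Complex.ofReal_mul, ← Real.rpow_add hpos, Real.sqrt_eq_rpow]
    norm_num
  have hph : Complex.exp ((t : ℂ) * Complex.I * (Real.pi : ℂ) / 8) *
      Complex.exp ((t : ℂ) * Complex.I * (Real.pi : ℂ) / 8)
      = Complex.exp ((t : ℂ) * Complex.I * (Real.pi : ℂ) / 4) := by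
    rw [← Complex.exp_add]
    congr 1
    ring
  set K : ℂ := (Real.sqrt (E' / Real.pi) : ℂ) *
    Complex.exp ((t : ℂ) * Complex.I * (Real.pi : ℂ) / 4) * (N n * N m) with hK
  have hint : ∀ ε q : ℝ, ((Real.exp (-(ε * q ^ 2)) : ℝ) : ℂ) * fres E' t n q * fres E' t m q
      = K * ((hermP n * hermP m).eval (a * (q : ℂ)) *
        Complex.exp (-((ε : ℂ) + a ^ 2) * (q : ℂ) ^ 2)) := by
    intro ε q
    have hg : Complex.exp (-((ε : ℂ) + a ^ 2) * (q : ℂ) ^ 2)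
        = ((Real.exp (-(ε * q ^ 2)) : ℝ) : ℂ) *
          (Complex.exp (-(t : ℂ) * Complex.I * ((E' / 2 : ℝ) : ℂ) * (q : ℂ) ^ 2) *
          Complex.exp (-(t : ℂ) * Complex.I * ((E' / 2 : ℝ) : ℂ) * (q : ℂ) ^ 2)) := by
      rw [Complex.ofReal_exp, ← Complex.exp_add, ← Complex.exp_add, ha2]
      congr 1
      push_cast
      ring
    rw [hg, Polynomial.eval_mul, hermP_eval, hermP_eval, hK, ← hquart, ← hph]
    unfold fres
    rw [← ha]
    ring
  simp_rw [hint, integral_const_mul]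
  have hl := (gauss_limit (a := a) (by rw [ha2]; simp)
    (by rw [ha2]; rcases ht with rfl | rfl <;> simp [hE'.ne']) (hermP n * hermP m)).const_mul K
  convert hl using 2
  rw [ha2, root_val E' hE' t ht, gL_orth, hK]
  have hs : (Real.sqrt (E' / Real.pi) : ℂ) * (Real.sqrt (Real.pi / E') : ℂ) = 1 := by
    rw [← Complex.ofReal_mul, ← Real.sqrt_mul hpos.le]
    have : E' / Real.pi * (Real.pi / E') = 1 := by
      have := Real.pi_ne_zero
      field_simp
    simp [this]
  have he : Complex.exp ((t : ℂ) * Complex.I * (Real.pi : ℂ) / 4) *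
      Complex.exp (-((t : ℂ) * Complex.I * (Real.pi : ℂ) / 4)) = 1 := by
    rw [← Complex.exp_add]; simp
  by_cases h : n = m
  · subst h
    simp only [if_true]
    have hf : (0 : ℝ) < 2 ^ n * n.factorial := by positivity
    have hNN : N n * N n * ((2 : ℂ) ^ n * n.factorial) = 1 := by
      have h2 : ((2 : ℂ) ^ n * n.factorial) = ((2 ^ n * n.factorial : ℝ) : ℂ) := by push_cast; rfl
      rw [hN, h2]
      simp only
      rw [← mul_inv, ← Complex.ofReal_mul, Real.mul_self_sqrt hf.le]
      exact inv_mul_cancel₀ (by exact_mod_cast hf.ne')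
    linear_combination (-1 : ℂ) * hNN - (N n * N n * ((2 : ℂ) ^ n * n.factorial)) * he
      - (N n * N n * ((2 : ℂ) ^ n * n.factorial)) *
        (Complex.exp ((t : ℂ) * Complex.I * (Real.pi : ℂ) / 4) *
        Complex.exp (-((t : ℂ) * Complex.I * (Real.pi : ℂ) / 4))) * hs
  · simp [h]

/-- bi-orthonormality of the resonance eigenfunctions:
`lim_{ε→0⁺} ∫ e^{−εq²} conj(f_n^+) f_m^− dq = δ_{nm}`, and likewise with the
signs interchanged. -/
theorem fres_biorthonormal (E' : ℝ) (hE' : 0 < E') (n m : ℕ) :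
    Filter.Tendsto
        (fun ε : ℝ => ∫ q : ℝ,
          ((Real.exp (-(ε * q ^ 2)) : ℝ) : ℂ) *
            (starRingEnd ℂ) (fres E' 1 n q) * fres E' (-1) m q)
        (nhdsWithin (0 : ℝ) (Set.Ioi 0)) (nhds (if n = m then 1 else 0))
      ∧ Filter.Tendsto
          (fun ε : ℝ => ∫ q : ℝ,
            ((Real.exp (-(ε * q ^ 2)) : ℝ) : ℂ) *
              (starRingEnd ℂ) (fres E' (-1) n q) * fres E' 1 m q)
          (nhdsWithin (0 : ℝ) (Set.Ioi 0)) (nhds (if n = m then 1 else 0)) := by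
  simp_rw [conj_fres]
  refine ⟨fres_limit E' hE' (-1) (Or.inr rfl) n m, ?_⟩
  simpa using fres_limit E' hE' 1 (Or.inl rfl) n m
end

section
/- Let E > 0, E′ := E/2, and let m ≥ n ≥ 0 be integers. For every (t,x) ∈ ℝ² and both signs, the regularized Wigner-transform integral converges and equals the explicit Laguerre-type expression: lim_{ε→0⁺} (1/2π) ∫_ℝ e^{−εk²} e^{ikx} f_m^±(t − k/E) f_n^±(t + k/E) dk = F^±_{m,n}(t,x). (The left-hand side is the Wigner distribution of |f_m^±⟩⟨f_n^∓| at noncommutativity parameter θ = 2/E, using conj(f_n^∓) = f_n^±.) -/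
open MeasureTheory Filter Complex

/-- The explicit Laguerre-type expression `F^±_{m,n}` for `m ≥ n` (sign `s = ±1`):
`F^±_{m,n}(t,x) = (E/2π) √(m!n!) e^{∓iE(t²−x²)/2} (e^{±iπ/4}√E)^{m−n} (t∓x)^{m−n}
Σ_{p=0}^{n} (±iE(t²−x²))^{n−p} (−1)^p / ((m−p)!(n−p)!p!)`. -/
noncomputable def Fge (E s : ℝ) (m n : ℕ) (t x : ℝ) : ℂ :=
  ((E / (2 * Real.pi) : ℝ) : ℂ) * ((Real.sqrt (m.factorial * n.factorial) : ℝ) : ℂ) *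
    Complex.exp (-(s : ℂ) * Complex.I * (E : ℂ) * ((t : ℂ) ^ 2 - (x : ℂ) ^ 2) / 2) *
    (Complex.exp ((s : ℂ) * Complex.I * (Real.pi : ℂ) / 4) * ((Real.sqrt E : ℝ) : ℂ)) ^ (m - n) *
    ((t : ℂ) - (s : ℂ) * (x : ℂ)) ^ (m - n) *
    ∑ p ∈ Finset.range (n + 1),
      ((s : ℂ) * Complex.I * (E : ℂ) * ((t : ℂ) ^ 2 - (x : ℂ) ^ 2)) ^ (n - p) * (-1 : ℂ) ^ p /
        (((m - p).factorial : ℂ) * ((n - p).factorial : ℂ) * (p.factorial : ℂ))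

/-- `F^±_{m,n}` for all `m, n`, with `F^±_{m,n} := conj(F^∓_{n,m})` when `m < n`. -/
noncomputable def Fmn (E s : ℝ) (m n : ℕ) (t x : ℝ) : ℂ :=
  if n ≤ m then Fge E s m n t x else (starRingEnd ℂ) (Fge E (-s) n m t x)

open MeasureTheory Filter Complex Polynomial in
/-- Hermite polynomials composed with an affine map, as polynomials. -/
noncomputable def hpAff (α β : ℂ) : ℕ → Polynomial ℂ
  | 0 => 1
  | (n + 1) => 2 * (C α + C β * X) * hpAff α β n - 2 * (n : Polynomial ℂ) * hpAff α β (n - 1)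

open Polynomial in
theorem hpAff_eval (α β : ℂ) (k : ℂ) : ∀ n : ℕ,
    (hpAff α β n).eval k = hermitePoly n (α + β * k)
  | 0 => by simp [hpAff, hermitePoly]
  | 1 => by simp [hpAff, hermitePoly]
  | (n + 2) => by
      rw [hpAff]
      simp only [hermitePoly, eval_sub, eval_mul, eval_add, eval_C, eval_X, eval_natCast,
        eval_ofNat, Nat.add_sub_cancel, hpAff_eval α β k (n + 1), hpAff_eval α β k n]
      push_cast
      ring

open Polynomial in
theorem hpAff_deriv (α β : ℂ) : ∀ n : ℕ,
    derivative (hpAff α β n) = 2 * (n : Polynomial ℂ) * C β * hpAff α β (n - 1)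
  | 0 => by simp [hpAff]
  | 1 => by simp [hpAff]
  | (n + 2) => by
      rw [hpAff]
      have h1 := hpAff_deriv α β (n + 1)
      have h2 := hpAff_deriv α β n
      have e : hpAff α β (n + 1) = 2 * (C α + C β * X) * hpAff α β n
        - 2 * (n : Polynomial ℂ) * hpAff α β (n - 1) := by rw [hpAff]
      simp only [Nat.add_sub_cancel] at h1 ⊢
      simp only [derivative_sub, derivative_mul, derivative_add, derivative_C, derivative_X,
        derivative_natCast, derivative_ofNat, h1, h2, Nat.add_succ_sub_one]
      push_cast
      rw [e]
      ring

/-- The moment functional. -/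
noncomputable def Jf (b c : ℂ) (P : Polynomial ℂ) : ℂ :=
  ∫ k : ℝ, P.eval (k : ℂ) * Complex.exp (-b * (k : ℂ) ^ 2 + c * (k : ℂ))

theorem Jf_integrable (b c : ℂ) (hb : 0 < b.re) (hc : c.re = 0) (P : Polynomial ℂ) :
    Integrable (fun k : ℝ => P.eval (k : ℂ) * Complex.exp (-b * (k : ℂ) ^ 2 + c * (k : ℂ))) := by
  induction P using Polynomial.induction_on' with
  | add p q hp hq =>
    simp only [Polynomial.eval_add, add_mul]
    exact hp.add hq
  | monomial n a =>
    have h := (integrable_rpow_mul_exp_neg_mul_sq hb (s := (n : ℝ))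
      (by have : (0 : ℝ) ≤ n := Nat.cast_nonneg n
          linarith)).norm.const_mul ‖a‖
    refine h.mono' (by
      apply Continuous.aestronglyMeasurable
      simp only [Polynomial.eval_monomial]
      fun_prop) (Filter.Eventually.of_forall fun k => ?_)
    have hre : (-b * (k : ℂ) ^ 2 + c * (k : ℂ)).re = -b.re * k ^ 2 := by
      rw [show -b * (k : ℂ) ^ 2 + c * (k : ℂ) = ((k ^ 2 : ℝ) : ℂ) * (-b) + ((k : ℝ) : ℂ) * c by
        push_cast; ring, Complex.add_re, Complex.re_ofReal_mul, Complex.re_ofReal_mul, hc,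
        Complex.neg_re]
      ring
    rw [Polynomial.eval_monomial, norm_mul, Complex.norm_exp, hre]
    simp [abs_of_pos (Real.exp_pos _), mul_assoc]

theorem Jf_add (b c : ℂ) (hb : 0 < b.re) (hc : c.re = 0) (P Q : Polynomial ℂ) :
    Jf b c (P + Q) = Jf b c P + Jf b c Q := by
  unfold Jf
  rw [← integral_add (Jf_integrable b c hb hc P) (Jf_integrable b c hb hc Q)]
  simp only [Polynomial.eval_add, add_mul]

theorem Jf_C_mul (b c : ℂ) (a : ℂ) (P : Polynomial ℂ) :
    Jf b c (Polynomial.C a * P) = a * Jf b c P := by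
  unfold Jf
  rw [← integral_const_mul]
  simp only [Polynomial.eval_mul, Polynomial.eval_C, mul_assoc]

theorem Jf_X_mul (b c : ℂ) (hb : 0 < b.re) (hc : c.re = 0) (P : Polynomial ℂ) :
    Jf b c (Polynomial.X * P) =
      c / (2 * b) * Jf b c P + 1 / (2 * b) * Jf b c (Polynomial.derivative P) := by
  have hb0 : b ≠ 0 := by
    rintro rfl
    simp at hb
  have key : Jf b c (Polynomial.derivative P + (Polynomial.C c * P +
      Polynomial.C (-2 * b) * (Polynomial.X * P))) = 0 := by
    unfold Jf
    refine integral_eq_zero_of_hasDerivAt_of_integrable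
      (f := fun k : ℝ => P.eval (k : ℂ) * Complex.exp (-b * (k : ℂ) ^ 2 + c * (k : ℂ)))
      (fun k => ?_) (Jf_integrable b c hb hc _) (Jf_integrable b c hb hc P)
    have h1 : HasDerivAt (fun z : ℂ => P.eval z * Complex.exp (-b * z ^ 2 + c * z))
        ((Polynomial.derivative P).eval (k : ℂ) * Complex.exp (-b * (k : ℂ) ^ 2 + c * (k : ℂ))
          + P.eval (k : ℂ) * (Complex.exp (-b * (k : ℂ) ^ 2 + c * (k : ℂ)) *
            (-b * (2 * (k : ℂ)) + c))) (k : ℂ) := by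
      refine (P.hasDerivAt (k : ℂ)).mul (HasDerivAt.cexp ?_)
      have : HasDerivAt (fun z : ℂ => -b * z ^ 2 + c * z)
          (-b * ((2 : ℕ) * (k : ℂ) ^ (2 - 1)) + c * 1) (k : ℂ) :=
        ((hasDerivAt_pow 2 (k : ℂ)).const_mul (-b)).add
        ((hasDerivAt_id (k : ℂ)).const_mul c)
      exact this.congr_deriv (by simp)
    refine h1.comp_ofReal.congr_deriv ?_
    simp only [Polynomial.eval_mul, Polynomial.eval_C, Polynomial.eval_X, Polynomial.eval_add]
    ring
  rw [Jf_add b c hb hc, Jf_add b c hb hc, Jf_C_mul, Jf_C_mul] at key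
  field_simp
  linear_combination -key

/-- Algebraic limit values. -/
noncomputable def Wf (A B : ℂ) : ℕ → ℕ → ℂ
  | 0, n => (2 * B) ^ n
  | (m + 1), n => 2 * A * Wf A B m n - 2 * n * Wf A B m (n - 1)

theorem Wf_closed (A B : ℂ) (m : ℕ) : ∀ n : ℕ, Wf A B m n =
    ∑ p ∈ Finset.range (n + 1), (m.choose p : ℂ) * (n.choose p) * (p.factorial) *
      (2 * A) ^ (m - p) * (2 * B) ^ (n - p) * (-2) ^ p := by
  induction m with
  | zero =>
    intro n
    rw [Finset.sum_range_succ']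
    simp [Wf]
  | succ m ih =>
    intro n
    rw [Wf, ih n]
    have hs1 : ∀ p : ℕ, 2 * A * ((m.choose p : ℂ) * (2 * A) ^ (m - p)) =
        (m.choose p : ℂ) * (2 * A) ^ (m + 1 - p) := by
      intro p
      rcases le_or_gt p m with h | h
      · rw [Nat.succ_sub h, pow_succ]; ring
      · simp [Nat.choose_eq_zero_of_lt h]
    have hL : 2 * A * ∑ p ∈ Finset.range (n + 1), (m.choose p : ℂ) * (n.choose p) *
        (p.factorial) * (2 * A) ^ (m - p) * (2 * B) ^ (n - p) * (-2) ^ p =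
        ∑ p ∈ Finset.range (n + 1), (m.choose p : ℂ) * (n.choose p) *
        (p.factorial) * (2 * A) ^ (m + 1 - p) * (2 * B) ^ (n - p) * (-2) ^ p := by
      rw [Finset.mul_sum]
      refine Finset.sum_congr rfl fun p _ => ?_
      linear_combination (n.choose p : ℂ) * (p.factorial) * (2 * B) ^ (n - p) * (-2) ^ p * hs1 p
    rw [hL]
    cases n with
    | zero => simp
    | succ n =>
      rw [Nat.add_sub_cancel, ih n, Finset.sum_range_succ', Finset.sum_range_succ' _ (n + 1),
        Finset.mul_sum, add_sub_right_comm, ← Finset.sum_sub_distrib]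
      congr 1
      · refine Finset.sum_congr rfl fun p _ => ?_
        have h1 : ((m + 1).choose (p + 1) : ℂ) = m.choose p + m.choose (p + 1) := by
          rw [Nat.choose_succ_succ]; push_cast; ring
        have h2 : ((n + 1 : ℕ) : ℂ) * n.choose p = (n + 1).choose (p + 1) * (p + 1 : ℕ) := by
          exact_mod_cast Nat.add_one_mul_choose_eq n p
        rw [h1, Nat.factorial_succ, Nat.add_sub_add_right, Nat.add_sub_add_right]
        push_cast at h2 ⊢
        linear_combination (-2 * (m.choose p : ℂ) * p.factorial *
          (2 * A) ^ (m - p) * (2 * B) ^ (n - p) * (-2) ^ p) * h2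
      · simp

open Polynomial in
theorem Jf_rec_left (b c : ℂ) (hb : 0 < b.re) (hc : c.re = 0) (α β αb βb : ℂ) (m n : ℕ) :
    Jf b c (hpAff α β (m + 1) * hpAff αb βb n) =
      2 * (α + β * (c / (2 * b))) * Jf b c (hpAff α β m * hpAff αb βb n)
      + 2 * m * (2 * β * β * (1 / (2 * b)) - 1) * Jf b c (hpAff α β (m - 1) * hpAff αb βb n)
      + 2 * n * (2 * β * βb * (1 / (2 * b))) * Jf b c (hpAff α β m * hpAff αb βb (n - 1)) := by
  have e : hpAff α β (m + 1) * hpAff αb βb n =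
      C (2 * α) * (hpAff α β m * hpAff αb βb n) +
      (C (2 * β) * (X * (hpAff α β m * hpAff αb βb n)) +
        C (-2 * (m : ℂ)) * (hpAff α β (m - 1) * hpAff αb βb n)) := by
    rw [hpAff]
    simp only [map_mul, map_neg, map_ofNat, map_natCast]
    ring
  have e2 : derivative (hpAff α β m * hpAff αb βb n) =
      C (2 * m * β) * (hpAff α β (m - 1) * hpAff αb βb n) +
      C (2 * n * βb) * (hpAff α β m * hpAff αb βb (n - 1)) := by
    rw [derivative_mul, hpAff_deriv, hpAff_deriv]
    simp only [map_mul, map_ofNat, map_natCast]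
    ring
  rw [e, Jf_add b c hb hc, Jf_add b c hb hc, Jf_C_mul, Jf_C_mul, Jf_C_mul, Jf_X_mul b c hb hc, e2,
    Jf_add b c hb hc, Jf_C_mul, Jf_C_mul]
  ring

theorem Jf_tendsto (b₀ c K α β αb : ℂ) (hb : b₀.re = 0) (hb0 : b₀ ≠ 0) (hc : c.re = 0)
    (hβ : β * β = b₀)
    (h0 : Tendsto (fun ε : ℝ => Jf ((ε : ℂ) + b₀) c 1) (nhdsWithin 0 (Set.Ioi 0)) (nhds K))
    (m : ℕ) : ∀ n : ℕ,
    Tendsto (fun ε : ℝ => Jf ((ε : ℂ) + b₀) c (hpAff α (-β) m * hpAff αb β n))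
      (nhdsWithin 0 (Set.Ioi 0))
      (nhds (K * Wf (α - β * (c / (2 * b₀))) (αb + β * (c / (2 * b₀))) m n)) := by
  have hbt : Tendsto (fun ε : ℝ => 2 * ((ε : ℂ) + b₀)) (nhdsWithin 0 (Set.Ioi 0))
      (nhds (2 * b₀)) := by
    have : Continuous (fun ε : ℝ => 2 * ((ε : ℂ) + b₀)) := by fun_prop
    simpa using (this.tendsto 0).mono_left nhdsWithin_le_nhds
  have h2b : (2 * b₀) ≠ 0 := by simpa using hb0
  have hμ := (tendsto_const_nhds (x := c)).div hbt h2b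
  have hv := (tendsto_const_nhds (x := (1 : ℂ))).div hbt h2b
  have hpos : ∀ᶠ ε : ℝ in nhdsWithin 0 (Set.Ioi 0), 0 < ((ε : ℂ) + b₀).re := by
    filter_upwards [self_mem_nhdsWithin] with ε hε
    simpa [hb] using hε
  induction m using Nat.strong_induction_on with
  | _ m ih =>
  cases m with
  | zero =>
    intro n
    induction n using Nat.strong_induction_on with
    | _ n ihn =>
    cases n with
    | zero => simpa [hpAff, Wf] using h0
    | succ n =>
      have h1 := ihn n (by lia)
      have h2 := ihn (n - 1) (by lia)
      have h := (((tendsto_const_nhds (x := αb)).add (hμ.const_mul β)).const_mul 2 |>.mul h1).add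
        ((((hv.const_mul (2 * β * β)).sub (tendsto_const_nhds (x := (1 : ℂ)))).const_mul
          (2 * (n : ℂ))).mul h2)
      refine Tendsto.congr' ?_ (h.trans (le_of_eq ?_))
      · filter_upwards [hpos] with ε hε
        rw [mul_comm (hpAff α (-β) 0) (hpAff αb β (n + 1)), Jf_rec_left _ c hε hc]
        simp only [mul_comm (hpAff α (-β) 0), Nat.cast_zero, Pi.div_apply]
        ring
      · congr 1
        simp only [Wf]
        rw [show 2 * β * β * (1 / (2 * b₀)) = 1 by rw [← hβ] at hb0 ⊢; field_simp [left_ne_zero_of_mul hb0]]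
        ring
  | succ m =>
    intro n
    have h1 := ih m (by lia) n
    have h2 := ih (m - 1) (by lia) n
    have h3 := ih m (by lia) (n - 1)
    have h := ((((tendsto_const_nhds (x := α)).sub (hμ.const_mul β)).const_mul 2 |>.mul h1).add
        ((((hv.const_mul (2 * β * β)).sub (tendsto_const_nhds (x := (1 : ℂ)))).const_mul
          (2 * (m : ℂ))).mul h2)).sub
        (((hv.const_mul (2 * β * β)).const_mul (2 * (n : ℂ))).mul h3)
    refine Tendsto.congr' ?_ (h.trans (le_of_eq ?_))
    · filter_upwards [hpos] with ε hε
      rw [Jf_rec_left _ c hε hc]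
      simp only [Pi.div_apply]
      ring
    · congr 1
      rw [Wf]
      rw [show 2 * β * β * (1 / (2 * b₀)) = 1 by rw [← hβ] at hb0 ⊢; field_simp [left_ne_zero_of_mul hb0]]
      ring

theorem Jf_one (b c : ℂ) (hb : 0 < b.re) :
    Jf b c 1 = ((Real.pi : ℂ) / b) ^ ((1 : ℂ) / 2) * Complex.exp (c ^ 2 / (4 * b)) := by
  have h := integral_cexp_quadratic (b := -b) (by simpa using hb) c 0
  simp only [add_zero, neg_neg, zero_sub] at h
  unfold Jf
  simp only [Polynomial.eval_one, one_mul]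
  rw [h]
  congr 2
  rw [mul_neg, div_neg, neg_neg]

theorem Jf_one_tendsto (E s x : ℝ) (hE : 0 < E) (hs : s = 1 ∨ s = -1) :
    Tendsto (fun ε : ℝ => Jf ((ε : ℂ) + (s : ℂ) * Complex.I / (2 * E)) (Complex.I * x) 1)
      (nhdsWithin 0 (Set.Ioi 0))
      (nhds ((Real.sqrt (2 * Real.pi * E) : ℝ) * Complex.exp (-(s : ℂ) * Complex.I * Real.pi / 4) *
        Complex.exp ((s : ℂ) * Complex.I * E * x ^ 2 / 2))) := by
  have hE' : (E : ℂ) ≠ 0 := by exact_mod_cast hE.ne'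
  have hss : (s : ℂ) * s = 1 := by rcases hs with rfl | rfl <;> simp
  have hs0 : (s : ℂ) ≠ 0 := left_ne_zero_of_mul_eq_one hss
  have hII : Complex.I * Complex.I = -1 := Complex.I_mul_I
  have hpi := Real.pi_pos
  have hb0 : (s : ℂ) * Complex.I / (2 * E) ≠ 0 := by
    simp [hs0, hE']
  have hq : (Real.pi : ℂ) / ((s : ℂ) * Complex.I / (2 * E)) =
      (2 * Real.pi * E : ℝ) * (-(s : ℂ) * Complex.I) := by
    rw [div_eq_iff hb0]
    push_cast
    field_simp
    linear_combination hss * Complex.I ^ 2 + Complex.I_sq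
  have hr : 0 < 2 * Real.pi * E := by positivity
  have hexp : (Real.pi : ℂ) / ((s : ℂ) * Complex.I / (2 * E)) =
      Complex.exp (Real.log (2 * Real.pi * E) + (-(s : ℂ) * Complex.I * Real.pi / 2)) := by
    rw [hq, Complex.exp_add, ← Complex.ofReal_exp, Real.exp_log hr]
    congr 1
    rcases hs with rfl | rfl
    · rw [show -((1 : ℝ) : ℂ) * Complex.I * Real.pi / 2 = -(Real.pi / 2 * Complex.I) by
        push_cast; ring, Complex.exp_neg, Complex.exp_pi_div_two_mul_I]
      simp
    · rw [show -((-1 : ℝ) : ℂ) * Complex.I * Real.pi / 2 = (Real.pi / 2 * Complex.I) by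
        push_cast; ring, Complex.exp_pi_div_two_mul_I]
      simp
  have hval : ((Real.pi : ℂ) / ((s : ℂ) * Complex.I / (2 * E))) ^ ((1 : ℂ) / 2) =
      (Real.sqrt (2 * Real.pi * E) : ℝ) * Complex.exp (-(s : ℂ) * Complex.I * Real.pi / 4) := by
    rw [hexp, Complex.cpow_def_of_ne_zero (Complex.exp_ne_zero _), Complex.log_exp,
      Real.sqrt_eq_rpow, Real.rpow_def_of_pos hr, Complex.ofReal_exp, ← Complex.exp_add]
    · congr 1
      push_cast
      ring
    · rcases hs with rfl | rfl <;> simp <;> linarith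
    · rcases hs with rfl | rfl <;> simp <;> linarith
  have hslit : (Real.pi : ℂ) / ((s : ℂ) * Complex.I / (2 * E)) ∈ Complex.slitPlane := by
    rw [hq, Complex.mem_slitPlane_iff]
    right
    rcases hs with rfl | rfl <;> simp [hE.ne', hpi.ne']
  have hbt : Tendsto (fun ε : ℝ => ((ε : ℂ) + (s : ℂ) * Complex.I / (2 * E)))
      (nhdsWithin 0 (Set.Ioi 0)) (nhds ((s : ℂ) * Complex.I / (2 * E))) := by
    have : Continuous (fun ε : ℝ => ((ε : ℂ) + (s : ℂ) * Complex.I / (2 * E))) := by fun_prop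
    simpa using (this.tendsto 0).mono_left nhdsWithin_le_nhds
  have t1 := ((tendsto_const_nhds (x := (Real.pi : ℂ))).div hbt hb0).cpow
    (tendsto_const_nhds (x := (1 : ℂ) / 2)) hslit
  have t2 := ((tendsto_const_nhds (x := (Complex.I * x) ^ 2)).div (hbt.const_mul 4)
    (by simpa using hb0)).cexp
  rw [hval] at t1
  refine Tendsto.congr' ?_ ((t1.mul t2).trans (le_of_eq ?_))
  · filter_upwards [self_mem_nhdsWithin] with ε hε
    rw [Jf_one]
    · simp
    · have : ((s : ℂ) * Complex.I / (2 * E)).re = 0 := by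
        rw [show (s : ℂ) * Complex.I / (2 * E) = ((s / (2 * E) : ℝ) : ℂ) * Complex.I by
          push_cast; ring, Complex.re_ofReal_mul]
        simp
      simpa [this] using hε
  · congr 3
    field_simp
    linear_combination -4 * (x : ℂ) ^ 2 * hss

theorem wigner_of_resonance_eigenfunctions (E : ℝ) (hE : 0 < E) (m n : ℕ)
    (hmn : n ≤ m) (s : ℝ) (hs : s = 1 ∨ s = -1) (t x : ℝ) :
    Filter.Tendsto
      (fun ε : ℝ => ((1 / (2 * Real.pi) : ℝ) : ℂ) *
        ∫ k : ℝ,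
          ((Real.exp (-(ε * k ^ 2)) : ℝ) : ℂ) * Complex.exp (Complex.I * (k : ℂ) * (x : ℂ)) *
            fres (E / 2) s m (t - k / E) * fres (E / 2) s n (t + k / E))
      (nhdsWithin (0 : ℝ) (Set.Ioi 0)) (nhds (Fmn E s m n t x)) := by
  have hE' : (E : ℂ) ≠ 0 := by exact_mod_cast hE.ne'
  have hss : (s : ℂ) * s = 1 := by rcases hs with rfl | rfl <;> simp
  have hs0 : (s : ℂ) ≠ 0 := left_ne_zero_of_mul_eq_one hss
  have hpi := Real.pi_pos
  -- the phase
  obtain ⟨w, hw⟩ : ∃ w, w = Complex.exp ((s : ℂ) * Complex.I * (Real.pi : ℂ) / 4) := ⟨_, rfl⟩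
  have hw2 : w * w = s * Complex.I := by
    rw [hw, ← Complex.exp_add]
    rcases hs with rfl | rfl
    · rw [show ((1 : ℝ) : ℂ) * Complex.I * Real.pi / 4 + ((1 : ℝ) : ℂ) * Complex.I * Real.pi / 4
        = (Real.pi / 2 * Complex.I) by push_cast; ring, Complex.exp_pi_div_two_mul_I]
      simp
    · rw [show ((-1 : ℝ) : ℂ) * Complex.I * Real.pi / 4 + ((-1 : ℝ) : ℂ) * Complex.I * Real.pi / 4
        = -(Real.pi / 2 * Complex.I) by push_cast; ring, Complex.exp_neg,
        Complex.exp_pi_div_two_mul_I]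
      simp
  have hw8 : Complex.exp ((s : ℂ) * Complex.I * (Real.pi : ℂ) / 8) *
      Complex.exp ((s : ℂ) * Complex.I * (Real.pi : ℂ) / 8) = w := by
    rw [hw, ← Complex.exp_add]; congr 1; ring
  have hwinv : w * Complex.exp (-(s : ℂ) * Complex.I * Real.pi / 4) = 1 := by
    rw [hw, ← Complex.exp_add, ← Complex.exp_zero]; congr 1; ring
  obtain ⟨r, hr⟩ : ∃ r : ℝ, r = Real.sqrt (E / 2) := ⟨_, rfl⟩
  have hr2 : r * r = E / 2 := by rw [hr]; exact Real.mul_self_sqrt (by positivity)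
  have hr2' : (r : ℂ) * r = E / 2 := by exact_mod_cast hr2
  set b₀ : ℂ := (s : ℂ) * Complex.I / (2 * E) with hb₀
  have hb0 : b₀ ≠ 0 := by simp [hb₀, hs0, hE']
  have hbre : b₀.re = 0 := by
    rw [hb₀, show (s : ℂ) * Complex.I / (2 * E) = ((s / (2 * E) : ℝ) : ℂ) * Complex.I by
      push_cast; ring, Complex.re_ofReal_mul]
    simp
  have hβ : (w * r / E) * (w * r / E) = b₀ := by
    rw [hb₀]
    field_simp
    linear_combination 2 * (r : ℂ) ^ 2 * hw2 + 2 * (s : ℂ) * Complex.I * hr2'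
  have hT := Jf_tendsto b₀ (Complex.I * x) _ (w * r * t) (w * r / E) (w * r * t) hbre hb0
    (by simp) hβ (Jf_one_tendsto E s x hE hs) m n
  have hμ : Complex.I * x / (2 * b₀) = s * x * E := by
    rw [hb₀]
    field_simp
    linear_combination -(x : ℂ) * hss
  rw [hμ] at hT
  set Q : ℂ := (((E / 2 / Real.pi) ^ ((1 : ℝ) / 4) : ℝ) : ℂ) with hQ
  have hQ2 : Q * Q = (Real.sqrt (E / 2 / Real.pi) : ℝ) := by
    rw [hQ, ← Complex.ofReal_mul, ← Real.rpow_add (by positivity), Real.sqrt_eq_rpow]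
    norm_num
  set Nm : ℂ := ((Real.sqrt (2 ^ m * m.factorial) : ℝ) : ℂ) with hNm
  set Nn : ℂ := ((Real.sqrt (2 ^ n * n.factorial) : ℝ) : ℂ) with hNn
  have hT2 := hT.const_mul (((1 / (2 * Real.pi) : ℝ) : ℂ) * (Q * Q * Nm⁻¹ * Nn⁻¹ * w *
    Complex.exp (-(s : ℂ) * Complex.I * E * t ^ 2 / 2)))
  refine Tendsto.congr (fun ε => ?_) (hT2.trans (le_of_eq ?_))
  · rw [mul_assoc]
    congr 1
    unfold Jf
    rw [← integral_const_mul]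
    refine integral_congr_ae (Filter.Eventually.of_forall fun k => ?_)
    simp only [fres, Polynomial.eval_mul, hpAff_eval, ← hQ, ← hNm, ← hNn, ← hw, ← hr]
    have ha1 : w * r * t + -(w * r / E) * k = w * r * ((t - k / E : ℝ) : ℂ) := by
      push_cast; ring
    have ha2 : w * r * t + (w * r / E) * k = w * r * ((t + k / E : ℝ) : ℂ) := by
      push_cast; ring
    rw [ha1, ha2]
    have he : Complex.exp (-(s : ℂ) * Complex.I * E * t ^ 2 / 2) *
        Complex.exp (-((ε : ℂ) + b₀) * k ^ 2 + Complex.I * x * k) =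
        ((Real.exp (-(ε * k ^ 2)) : ℝ) : ℂ) * Complex.exp (Complex.I * (k : ℂ) * (x : ℂ)) *
        Complex.exp (-(s : ℂ) * Complex.I * ((E / 2 / 2 : ℝ) : ℂ) * ((t - k / E : ℝ) : ℂ) ^ 2) *
        Complex.exp (-(s : ℂ) * Complex.I * ((E / 2 / 2 : ℝ) : ℂ) * ((t + k / E : ℝ) : ℂ) ^ 2) := by
      rw [Complex.ofReal_exp, ← Complex.exp_add, ← Complex.exp_add, ← Complex.exp_add,
        ← Complex.exp_add]
      congr 1
      rw [hb₀]
      push_cast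
      field_simp
      ring
    generalize hermitePoly m (w * r * ((t - k / E : ℝ) : ℂ)) = HM
    generalize hermitePoly n (w * r * ((t + k / E : ℝ) : ℂ)) = HN
    rw [← hw8]
    linear_combination (Q * Q * Nm⁻¹ * Nn⁻¹ * (Complex.exp ((s : ℂ) * Complex.I * (Real.pi : ℂ) / 8) *
      Complex.exp ((s : ℂ) * Complex.I * (Real.pi : ℂ) / 8)) *
      HM * HN) * he
  · congr 1
    rw [Fmn, if_pos hmn, Fge, ← hw]
    have hA : w * r * t - w * r / E * (s * x * E) = w * r * (t - s * x) := by
      field_simp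
    have hB : w * r * t + w * r / E * (s * x * E) = w * r * (t + s * x) := by
      field_simp
    rw [hA, hB, Wf_closed]
    -- square roots
    have hsqE : ((Real.sqrt E : ℝ) : ℂ) = (Real.sqrt 2 : ℝ) * r := by
      rw [← Complex.ofReal_mul, hr, ← Real.sqrt_mul (by norm_num)]
      congr 3; ring
    have h22 : ((Real.sqrt 2 : ℝ) : ℂ) * (Real.sqrt 2 : ℝ) = 2 := by
      rw [← Complex.ofReal_mul, Real.mul_self_sqrt (by norm_num)]; norm_num
    set d : ℂ := ((Real.sqrt 2 : ℝ) : ℂ) with hd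
    set M : ℂ := ((Real.sqrt m.factorial : ℝ) : ℂ) with hM
    set N : ℂ := ((Real.sqrt n.factorial : ℝ) : ℂ) with hN
    have hd0 : d ≠ 0 := by rw [hd]; exact_mod_cast (by positivity : Real.sqrt 2 ≠ 0)
    have hM0 : M ≠ 0 := by
      rw [hM]; exact_mod_cast (by positivity : Real.sqrt (m.factorial : ℝ) ≠ 0)
    have hN0 : N ≠ 0 := by
      rw [hN]; exact_mod_cast (by positivity : Real.sqrt (n.factorial : ℝ) ≠ 0)
    have hMM : M * M = m.factorial := by
      rw [hM, ← Complex.ofReal_mul, Real.mul_self_sqrt (by positivity)]; simp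
    have hNN : N * N = n.factorial := by
      rw [hN, ← Complex.ofReal_mul, Real.mul_self_sqrt (by positivity)]; simp
    have hpw : ∀ j : ℕ, Real.sqrt (2 ^ j) = Real.sqrt 2 ^ j := by
      intro j
      rw [Real.sqrt_eq_iff_mul_self_eq (by positivity) (by positivity), ← mul_pow,
        Real.mul_self_sqrt (by norm_num)]
    have hNm' : Nm = d ^ m * M := by
      rw [hNm, Real.sqrt_mul (by positivity), hpw]; push_cast; rfl
    have hNn' : Nn = d ^ n * N := by
      rw [hNn, Real.sqrt_mul (by positivity), hpw]; push_cast; rfl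
    have hMN : ((Real.sqrt (m.factorial * n.factorial) : ℝ) : ℂ) = M * N := by
      rw [Real.sqrt_mul (by positivity)]; push_cast; rfl
    have hQE : Q * Q * (Real.sqrt (2 * Real.pi * E) : ℝ) = E := by
      rw [hQ2, ← Complex.ofReal_mul, ← Real.sqrt_mul (by positivity)]
      congr 1
      rw [show E / 2 / Real.pi * (2 * Real.pi * E) = E * E by field_simp]
      exact Real.sqrt_mul_self hE.le
    have hee : Complex.exp (-(s : ℂ) * Complex.I * E * t ^ 2 / 2) *
        Complex.exp ((s : ℂ) * Complex.I * E * x ^ 2 / 2) =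
        Complex.exp (-(s : ℂ) * Complex.I * E * (t ^ 2 - x ^ 2) / 2) := by
      rw [← Complex.exp_add]; congr 1; ring
    rw [hNm', hNn', hMN, hsqE, ← hee]
    -- sum identity
    have hsum : (d ^ m * M)⁻¹ * (d ^ n * N)⁻¹ * (∑ p ∈ Finset.range (n + 1),
        (m.choose p : ℂ) * (n.choose p) * (p.factorial) *
        (2 * (w * r * (t - s * x))) ^ (m - p) * (2 * (w * r * (t + s * x))) ^ (n - p) * (-2) ^ p) =
        M * N * ((w * (d * r)) ^ (m - n) * (t - s * x) ^ (m - n) * ∑ p ∈ Finset.range (n + 1),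
        ((s : ℂ) * Complex.I * (E : ℂ) * ((t : ℂ) ^ 2 - (x : ℂ) ^ 2)) ^ (n - p) * (-1 : ℂ) ^ p /
        (((m - p).factorial : ℂ) * ((n - p).factorial : ℂ) * (p.factorial : ℂ))) := by
      rw [Finset.mul_sum, Finset.mul_sum, Finset.mul_sum]
      refine Finset.sum_congr rfl fun p hp => ?_
      have hpn : p ≤ n := by simpa [Nat.lt_succ_iff] using hp
      have hc1 : (m.choose p : ℂ) * p.factorial * (m - p).factorial = M * M := by
        rw [hMM]; exact_mod_cast Nat.choose_mul_factorial_mul_factorial (hpn.trans hmn)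
      have hc2 : (n.choose p : ℂ) * p.factorial * (n - p).factorial = N * N := by
        rw [hNN]; exact_mod_cast Nat.choose_mul_factorial_mul_factorial hpn
      have f1 : (p.factorial : ℂ) ≠ 0 := by exact_mod_cast p.factorial_ne_zero
      have f2 : ((m - p).factorial : ℂ) ≠ 0 := by exact_mod_cast (m - p).factorial_ne_zero
      have f3 : ((n - p).factorial : ℂ) ≠ 0 := by exact_mod_cast (n - p).factorial_ne_zero
      have hc1' : (m.choose p : ℂ) = M * M / (p.factorial * (m - p).factorial) := by
        rw [eq_div_iff (mul_ne_zero f1 f2), ← hc1]; ring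
      have hc2' : (n.choose p : ℂ) = N * N / (p.factorial * (n - p).factorial) := by
        rw [eq_div_iff (mul_ne_zero f1 f3), ← hc2]; ring
      rw [hc1', hc2']
      obtain ⟨j, rfl⟩ := Nat.exists_eq_add_of_le hpn
      obtain ⟨l, rfl⟩ := Nat.exists_eq_add_of_le hmn
      have i1 : p + j + l - (p + j) = l := by lia
      have i2 : p + j + l - p = l + j := by lia
      have i3 : p + j - p = j := by lia
      rw [i1, i3]
      rw [i2] at f2 ⊢
      rw [i3] at f3
      have hXY : (s : ℂ) * Complex.I * E * (t ^ 2 - x ^ 2) =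
          (d * (w * r * (t - s * x))) * (d * (w * r * (t + s * x))) := by
        have e1 : ((t : ℂ) ^ 2 - x ^ 2) = (t - s * x) * (t + s * x) := by
          linear_combination (x : ℂ) ^ 2 * hss
        rw [e1]
        linear_combination -((t : ℂ) - s * x) * (t + s * x) * (w * w * r * r) * h22 -
          2 * ((t : ℂ) - s * x) * (t + s * x) * (r * r) * hw2 -
          2 * ((t : ℂ) - s * x) * (t + s * x) * (s * Complex.I) * hr2'
      have h2A : 2 * (w * r * (t - s * x)) = d * (d * (w * r * (t - s * x))) := by
        linear_combination -(w * r * ((t : ℂ) - s * x)) * h22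
      have h2B : 2 * (w * r * (t + s * x)) = d * (d * (w * r * (t + s * x))) := by
        linear_combination -(w * r * ((t : ℂ) + s * x)) * h22
      have h2 : (-2 : ℂ) = d * d * (-1) := by linear_combination h22
      have hAl : (w * (d * r)) ^ l * (t - s * x) ^ l = (d * (w * r * (t - s * x))) ^ l := by
        rw [← mul_pow]; congr 1; ring
      rw [hXY, h2A, h2B, h2, hAl]
      generalize d * (w * r * ((t : ℂ) - s * x)) = X
      generalize d * (w * r * ((t : ℂ) + s * x)) = Y
      simp only [mul_pow, pow_add]
      field_simp
    have hpi' : (((1 / (2 * Real.pi) : ℝ)) : ℂ) * E = ((E / (2 * Real.pi) : ℝ) : ℂ) := by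
      push_cast; ring
    rw [← hpi']
    generalize Complex.exp (-(s : ℂ) * Complex.I * E * t ^ 2 / 2) = e1
    generalize Complex.exp ((s : ℂ) * Complex.I * E * x ^ 2 / 2) = e2
    generalize Complex.exp (-(s : ℂ) * Complex.I * Real.pi / 4) = wi at *
    generalize (∑ p ∈ Finset.range (n + 1),
        (m.choose p : ℂ) * (n.choose p) * (p.factorial) *
        (2 * (w * r * (t - s * x))) ^ (m - p) * (2 * (w * r * (t + s * x))) ^ (n - p) * (-2) ^ p)
        = S at *
    generalize (∑ p ∈ Finset.range (n + 1),
        ((s : ℂ) * Complex.I * (E : ℂ) * ((t : ℂ) ^ 2 - (x : ℂ) ^ 2)) ^ (n - p) * (-1 : ℂ) ^ p /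
        (((m - p).factorial : ℂ) * ((n - p).factorial : ℂ) * (p.factorial : ℂ))) = S2 at *
    generalize (d ^ m * M)⁻¹ = u1 at *
    generalize (d ^ n * N)⁻¹ = u2 at *
    generalize ((1 / (2 * Real.pi) : ℝ) : ℂ) = pp at *
    generalize ((Real.sqrt (2 * Real.pi * E) : ℝ) : ℂ) = sq at *
    calc _ = pp * (Q * Q * sq) * (w * wi) * (e1 * e2) * (u1 * u2 * S) := by ring
      _ = _ := by
        rw [hQE, hwinv, hsum]; ring
end

section
/- Let E > 0 and θ := 2/E. For all n, m, k, l ∈ ℕ₀ and each fixed sign s ∈ {+,−}, the regularized twisted-convolution star products exist pointwise and satisfy the matrix-unit (projector) relations F^s_{n,m} ⋆_θ F^s_{k,l} = (E/4π) δ_{mk} F^s_{n,l} on ℝ²; equivalently, the rescaled functions (4π/E) F^s_{n,m} satisfy ((4π/E)F^s_{n,m}) ⋆_θ ((4π/E)F^s_{k,l}) = δ_{mk} (4π/E)F^s_{n,l}. -/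
open MeasureTheory Filter Complex

/-- Haar probability measure on the unit circle. -/
noncomputable abbrev hU : Measure UnitAddCircle := AddCircle.haarAddCircle

/-- The standard character. -/
noncomputable def ee (z : UnitAddCircle) : ℂ := fourier 1 z

/-- The `n`-th power of the conjugate character. -/
noncomputable def en (n : ℕ) (z : UnitAddCircle) : ℂ := fourier (-(n : ℤ)) z

lemma ee_cont : Continuous ee := (fourier (T := 1) 1).continuous
lemma en_cont (n : ℕ) : Continuous (en n) := (fourier (T := 1) (-(n : ℤ))).continuous
lemma ee_norm (z : UnitAddCircle) : ‖ee z‖ = 1 := by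
  unfold ee; rw [fourier_apply]; exact Circle.norm_coe _
lemma en_norm (n : ℕ) (z : UnitAddCircle) : ‖en n z‖ = 1 := by
  unfold en; rw [fourier_apply]; exact Circle.norm_coe _

lemma ee_pow (n : ℕ) (z : UnitAddCircle) : ee z ^ n = fourier (n : ℤ) z := by
  induction n with
  | zero => simp
  | succ n ih => rw [pow_succ, ih]; unfold ee; rw [← fourier_add]; push_cast; rfl

lemma int_fourier (k : ℤ) : ∫ z, (fourier k z : ℂ) ∂hU = if k = 0 then 1 else 0 := by
  split_ifs with h
  · simp [h]
  · exact integral_eq_zero_of_add_right_eq_neg (μ := AddCircle.haarAddCircle)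
      (fourier_add_half_inv_index h one_pos)

lemma int_en_pow (n p : ℕ) : ∫ z, en n z * ee z ^ p ∂hU = if p = n then 1 else 0 := by
  have : ∀ z, en n z * ee z ^ p = fourier ((p : ℤ) - n) z := by
    intro z
    rw [ee_pow, en, ← fourier_add]; congr 1; congr 1; ring
  simp_rw [this, int_fourier]
  congr 1
  rw [sub_eq_zero]; norm_cast

lemma cont_integrable {X : Type*} [TopologicalSpace X] [CompactSpace X] [MeasurableSpace X]
    [BorelSpace X] [SecondCountableTopology X] (μ : Measure X) [IsFiniteMeasure μ] {f : X → ℂ}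
    (hf : Continuous f) : Integrable f μ :=
  hf.integrable_of_hasCompactSupport (HasCompactSupport.of_compactSpace f)

lemma int_en_exp (n p : ℕ) (w : ℂ) :
    ∫ z, en n z * ee z ^ p * cexp (ee z * w) ∂hU
      = if p ≤ n then w ^ (n - p) / (n - p).factorial else 0 := by
  let F : ℕ → UnitAddCircle → ℂ := fun j z => en n z * ee z ^ p * ((ee z * w) ^ j / j.factorial)
  have hnorm : ∀ j z, ‖F j z‖ = ‖w‖ ^ j / j.factorial := by
    intro j z
    simp [F, en_norm, ee_norm]
  have hsum : ∀ z, HasSum (fun j => F j z) (en n z * ee z ^ p * cexp (ee z * w)) := by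
    intro z
    refine HasSum.mul_left _ ?_
    rw [Complex.exp_eq_exp_ℂ]
    exact NormedSpace.expSeries_div_hasSum_exp (ee z * w)
  have hi : ∀ j, ∫ z, F j z ∂hU = (w ^ j / j.factorial) * (if p + j = n then 1 else 0) := by
    intro j
    rw [← int_en_pow, ← integral_const_mul]
    congr 1; ext z; simp only [F]; rw [pow_add, mul_pow]; ring
  have H := hasSum_integral_of_summable_integral_norm (μ := hU) (F := F)
    (fun j => cont_integrable _ (by
      have := ee_cont; have := en_cont n
      simp only [F]; fun_prop))
    (by simp only [hnorm]; simp; exact Real.summable_pow_div_factorial ‖w‖)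
  have h2 : ∀ z, ∑' j, F j z = en n z * ee z ^ p * cexp (ee z * w) := fun z => (hsum z).tsum_eq
  simp_rw [h2, hi] at H
  refine H.unique ?_
  split_ifs with hpn
  · have := hasSum_single (f := fun j => (w ^ j / (j.factorial : ℂ)) * (if p + j = n then 1 else 0))
      (n - p) (by intro j hj; rw [if_neg (by omega), mul_zero])
    simpa [show p + (n - p) = n by omega] using this
  · convert hasSum_zero using 2 with j
    rw [if_neg (by omega), mul_zero]

/-- Polynomial part of the matrix-basis functions. -/
noncomputable def Csum (m n : ℕ) (a b : ℂ) : ℂ :=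
  ∑ p ∈ Finset.range (min m n + 1), (-1 : ℂ) ^ p * a ^ (m - p) * b ^ (n - p) /
    ((m - p).factorial * (n - p).factorial * p.factorial)

lemma Csum_comm (m n : ℕ) (a b : ℂ) : Csum m n a b = Csum n m b a := by
  unfold Csum; rw [min_comm]; refine Finset.sum_congr rfl fun p _ => ?_
  congr 1 <;> ring

lemma int_gen (m n : ℕ) (a b : ℂ) :
    ∫ z : UnitAddCircle × UnitAddCircle, en m z.1 * en n z.2 *
      cexp (ee z.1 * a + ee z.2 * b - ee z.1 * ee z.2) ∂(hU.prod hU) = Csum m n a b := by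
  have h1 := ee_cont; have h2 := en_cont m; have h3 := en_cont n
  rw [integral_prod _ (cont_integrable _ (by fun_prop))]
  have inner : ∀ u : UnitAddCircle, ∫ v, en m u * en n v *
      cexp (ee u * a + ee v * b - ee u * ee v) ∂hU =
      ∑ p ∈ Finset.range (n + 1), ((-1 : ℂ) ^ p * b ^ (n - p) /
        ((n - p).factorial * p.factorial)) * (en m u * ee u ^ p * cexp (ee u * a)) := by
    intro u
    have := int_en_exp n 0 (b - ee u)
    simp only [pow_zero, mul_one, Nat.zero_le, if_true, Nat.sub_zero] at this
    have e : ∀ v, en m u * en n v * cexp (ee u * a + ee v * b - ee u * ee v) =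
        (en m u * cexp (ee u * a)) * (en n v * cexp (ee v * (b - ee u))) := by
      intro v
      rw [show ee u * a + ee v * b - ee u * ee v = ee u * a + ee v * (b - ee u) by ring,
        Complex.exp_add]; ring
    simp_rw [e]
    rw [integral_const_mul, this, sub_eq_add_neg, add_comm b, add_pow, Finset.sum_div,
      Finset.mul_sum]
    refine Finset.sum_congr rfl fun p hp => ?_
    have hp' : p ≤ n := by simpa [Nat.lt_succ_iff] using hp
    rw [Nat.cast_choose ℂ hp', neg_pow]
    have := Nat.factorial_ne_zero n
    have := Nat.factorial_ne_zero p
    have := Nat.factorial_ne_zero (n - p)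
    field_simp
  simp_rw [inner]
  rw [integral_finsetSum _ (fun p _ => cont_integrable _ (by fun_prop))]
  simp_rw [integral_const_mul, int_en_exp, mul_ite, mul_zero]
  rw [← Finset.sum_filter, Csum]
  refine Finset.sum_congr ?_ fun p _ => ?_
  · ext p; simp; omega
  · have := Nat.factorial_ne_zero (m - p)
    have := Nat.factorial_ne_zero p
    have := Nat.factorial_ne_zero (n - p)
    field_simp

lemma int_delta (m k : ℕ) :
    ∫ z : UnitAddCircle × UnitAddCircle, en m z.1 * en k z.2 *
      cexp (ee z.1 * ee z.2) ∂(hU.prod hU) = if m = k then 1 / (m.factorial : ℂ) else 0 := by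
  have h1 := ee_cont; have h2 := en_cont m; have h3 := en_cont k
  rw [integral_prod_symm _ (cont_integrable _ (by fun_prop))]
  have inner : ∀ v : UnitAddCircle, ∫ u, en m u * en k v * cexp (ee u * ee v) ∂hU =
      (1 / (m.factorial : ℂ)) * (en k v * ee v ^ m) := by
    intro v
    have := int_en_exp m 0 (ee v)
    simp only [pow_zero, mul_one, Nat.zero_le, if_true, Nat.sub_zero] at this
    have e : ∀ u, en m u * en k v * cexp (ee u * ee v) =
        en k v * (en m u * cexp (ee u * ee v)) := by
      intro u; ring
    simp_rw [e]
    rw [integral_const_mul, this]; ring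
  simp_rw [inner]
  rw [integral_const_mul, int_en_pow]; simp

lemma half_cpow_mul {z w : ℂ} (hz : 0 < z.re) (hw : 0 < w.re) {R : ℝ} (hR : 0 ≤ R)
    (h : z * w = ((R ^ 2 : ℝ) : ℂ)) : z ^ (1 / 2 : ℂ) * w ^ (1 / 2 : ℂ) = R := by
  have hz0 : z ≠ 0 := by rintro rfl; simp at hz
  have hw0 : w ≠ 0 := by rintro rfl; simp at hw
  have a1 := Complex.abs_arg_lt_pi_div_two_iff.2 (Or.inl hz)
  have a2 := Complex.abs_arg_lt_pi_div_two_iff.2 (Or.inl hw)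
  rw [abs_lt] at a1 a2
  rw [cpow_def_of_ne_zero hz0, cpow_def_of_ne_zero hw0, ← Complex.exp_add, ← add_mul,
    ← Complex.log_mul hz0 hw0 ⟨by linarith, by linarith⟩, ← cpow_def_of_ne_zero (mul_ne_zero hz0 hw0),
    h]
  have : (1 / 2 : ℂ) = ((1 / 2 : ℝ) : ℂ) := by push_cast; rfl
  rw [this, ← Complex.ofReal_cpow (by positivity), ← Real.sqrt_eq_rpow, Real.sqrt_sq hR]

/-- Iterated two-dimensional Gaussian integral. -/
lemma gauss2 (E δ c : ℝ) (hE : 0 < E) (hδ : 0 < δ) (hc : c ^ 2 = E ^ 2 / 4) (D J K : ℂ)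
    (hD : D ^ 2 = -(E : ℂ) ^ 2) :
    ∫ t : ℝ, ∫ x : ℝ, cexp (-(δ + I * c) * (t : ℂ) ^ 2 - (δ - I * c) * (x : ℂ) ^ 2 + D * t * x
        + J * t + K * x)
      = ((Real.pi / Real.sqrt (δ ^ 2 + E ^ 2 / 2) : ℝ) : ℂ) *
        cexp (((δ - I * c) * J ^ 2 + D * J * K + (δ + I * c) * K ^ 2)
          / (4 * ((δ ^ 2 + E ^ 2 / 2 : ℝ) : ℂ))) := by
  set S : ℝ := δ ^ 2 + E ^ 2 / 2 with hS
  have hSpos : 0 < S := by positivity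
  set A : ℂ := δ + I * c with hA
  set B : ℂ := δ - I * c with hB
  have hBre : B.re = δ := by simp [hB]
  have hAre : A.re = δ := by simp [hA]
  have hB0 : B ≠ 0 := by intro h; rw [h] at hBre; simp at hBre; linarith
  have hS0 : (S : ℂ) ≠ 0 := by exact_mod_cast hSpos.ne'
  have hc' : (c : ℂ) ^ 2 = (E : ℂ) ^ 2 / 4 := by exact_mod_cast congrArg (fun r : ℝ => (r : ℂ)) hc
  have hAB : A * B = S - (E : ℂ) ^ 2 / 4 := by
    simp only [hA, hB, hS]; push_cast
    linear_combination (1 : ℂ) * hc' - (c : ℂ) ^ 2 * I_sq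
  have inner : ∀ t : ℝ, ∫ x : ℝ, cexp (-A * (t : ℂ) ^ 2 - B * (x : ℂ) ^ 2 + D * t * x
        + J * t + K * x) = (Real.pi / B) ^ (1 / 2 : ℂ) *
        cexp (-(S / B) * (t : ℂ) ^ 2 + (J + D * K / (2 * B)) * t + K ^ 2 / (4 * B)) := by
    intro t
    have := integral_cexp_quadratic (b := -B) (by simp [hBre, hδ]) (D * t + K)
      (-A * (t : ℂ) ^ 2 + J * t)
    rw [neg_neg] at this
    convert this using 3
    · congr 1; ring
    · field_simp
      linear_combination (8 * (t:ℂ)^2) * hAB - 2 * (t : ℂ) ^ 2 * hD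
  simp_rw [inner]
  have hre : 0 < (S / B).re := by
    rw [Complex.div_re]; simp [hBre]
    have : 0 < normSq B := normSq_pos.2 hB0
    positivity
  have hre2 : 0 < (Real.pi / B : ℂ).re := by
    rw [Complex.div_re]; simp [hBre]
    have : 0 < normSq B := normSq_pos.2 hB0
    have := Real.pi_pos
    positivity
  rw [integral_const_mul, integral_cexp_quadratic (by simpa using hre), neg_neg, ← mul_assoc]
  congr 1
  · refine half_cpow_mul hre2 ?_ (by positivity) ?_
    · have : (Real.pi / (S / B) : ℂ) = ((Real.pi / S : ℝ) : ℂ) * B := by push_cast; field_simp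
      rw [this, re_ofReal_mul, hBre]; have := Real.pi_pos; positivity
    · rw [div_pow, Real.sq_sqrt hSpos.le]; push_cast; field_simp
  · congr 1
    field_simp
    linear_combination (-K^2 * 4) * hAB + K ^ 2 * hD

lemma swap4 {X : Type*} [MeasurableSpace X] (μ : Measure X) [SFinite μ] (f g : X → X → ℂ)
    (h : Integrable (fun q : (X × X) × (X × X) => f q.1.1 q.2.2 * g q.1.2 q.2.1)
      ((μ.prod μ).prod (μ.prod μ))) :
    ∫ q : (X × X) × (X × X), f q.1.1 q.2.2 * g q.1.2 q.2.1 ∂((μ.prod μ).prod (μ.prod μ))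
      = (∫ a, ∫ d, f a d ∂μ ∂μ) * (∫ b, ∫ c, g b c ∂μ ∂μ) := by
  rw [integral_prod _ h, ← integral_prod_mul]
  congr 1; ext p
  have : ∀ r : X × X, f p.1 r.2 * g p.2 r.1 = g p.2 r.1 * f p.1 r.2 := fun r => mul_comm _ _
  simp only [this]
  rw [integral_prod_mul (fun c => g p.2 c) (fun d => f p.1 d), mul_comm]

lemma integrable_g (δ C : ℝ) (hδ : 0 < δ) :
    Integrable (fun t : ℝ => Real.exp (-δ * t ^ 2 + C * |t|)) := by
  refine Integrable.mono' (g := fun t => Real.exp (C ^ 2 / (2 * δ)) * Real.exp (-(δ / 2) * t ^ 2))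
    ((integrable_exp_neg_mul_sq (by positivity)).const_mul _)
    (by fun_prop : Continuous _).aestronglyMeasurable (ae_of_all _ fun t => ?_)
  rw [Real.norm_of_nonneg (Real.exp_pos _).le, ← Real.exp_add]
  apply Real.exp_le_exp.2
  have h : 0 ≤ (C - δ * |t|) ^ 2 / (2 * δ) := by positivity
  have e : (C - δ * |t|) ^ 2 / (2 * δ) = C ^ 2 / (2 * δ) - C * |t| + δ / 2 * t ^ 2 := by
    rw [← sq_abs t]; field_simp; ring
  nlinarith

/-- The quadratic exponent on one two-dimensional block. -/
noncomputable def blk (δ c : ℝ) (D J K : ℂ) (t x : ℝ) : ℂ :=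
  -(δ + I * c) * (t : ℂ) ^ 2 - (δ - I * c) * (x : ℂ) ^ 2 + D * t * x + J * t + K * x

lemma blk_norm (δ c e : ℝ) (J K : ℂ) (C : ℝ) (hJ : ‖J‖ ≤ C) (hK : ‖K‖ ≤ C) (t x : ℝ) :
    ‖cexp (blk δ c (I * e) J K t x)‖ ≤
      Real.exp (-δ * t ^ 2 + C * |t|) * Real.exp (-δ * x ^ 2 + C * |x|) := by
  rw [Complex.norm_exp, ← Real.exp_add]
  apply Real.exp_le_exp.2
  have h1 : (J * t).re ≤ C * |t| := by
    refine (re_le_norm _).trans ?_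
    rw [norm_mul, norm_real, Real.norm_eq_abs]; gcongr
  have h2 : (K * x).re ≤ C * |x| := by
    refine (re_le_norm _).trans ?_
    rw [norm_mul, norm_real, Real.norm_eq_abs]; gcongr
  have h3 : (blk δ c (I * e) J K t x).re = -δ * t ^ 2 - δ * x ^ 2 + (J * t).re + (K * x).re := by
    unfold blk
    simp [← ofReal_pow]
  rw [h3]; linarith

section torus
set_option linter.unusedSectionVars false
variable {Z : Type*} [TopologicalSpace Z] [CompactSpace Z] [MeasurableSpace Z] [BorelSpace Z]
  [SecondCountableTopology Z] (μ : Measure Z) [IsFiniteMeasure μ]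

lemma exists_bd {f : Z → ℂ} (hf : Continuous f) : ∃ C, ∀ z, ‖f z‖ ≤ C := by
  obtain ⟨C, hC⟩ := isCompact_univ.exists_bound_of_continuousOn hf.continuousOn
  exact ⟨C, fun z => hC z trivial⟩

lemma integrable_big (δ c e : ℝ) (hδ : 0 < δ) {N J1 K1 J2 K2 : Z → ℂ}
    (hN : Continuous N) (hJ1 : Continuous J1) (hK1 : Continuous K1) (hJ2 : Continuous J2)
    (hK2 : Continuous K2) :
    Integrable (fun p : ((ℝ × ℝ) × (ℝ × ℝ)) × Z => N p.2 *
      (cexp (blk δ c (I * e) (J1 p.2) (K1 p.2) p.1.1.1 p.1.2.2) *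
       cexp (blk δ (-c) (I * (-e : ℝ)) (J2 p.2) (K2 p.2) p.1.1.2 p.1.2.1)))
      ((volume : Measure ((ℝ × ℝ) × (ℝ × ℝ))).prod μ) := by
  obtain ⟨C0, h0⟩ := exists_bd hN
  obtain ⟨C1, h1⟩ := exists_bd hJ1
  obtain ⟨C2, h2⟩ := exists_bd hK1
  obtain ⟨C3, h3⟩ := exists_bd hJ2
  obtain ⟨C4, h4⟩ := exists_bd hK2
  set C := max (max C1 C2) (max C3 C4)
  set g : ℝ → ℝ := fun t => Real.exp (-δ * t ^ 2 + C * |t|) with hg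
  have gi : Integrable g := integrable_g δ C hδ
  have Gi : Integrable (fun q : (ℝ × ℝ) × (ℝ × ℝ) => C0 * ((g q.1.1 * g q.1.2) * (g q.2.1 * g q.2.2))) :=
    ((gi.mul_prod gi).mul_prod (gi.mul_prod gi)).const_mul C0
  refine Integrable.mono' (Gi.comp_fst μ) ?_ (ae_of_all _ fun p => ?_)
  · refine Continuous.aestronglyMeasurable ?_
    unfold blk; fun_prop
  · have b1 := blk_norm δ c e (J1 p.2) (K1 p.2) C ((h1 _).trans (by simp [C]))
      ((h2 _).trans (by simp [C])) p.1.1.1 p.1.2.2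
    have b2 := blk_norm δ (-c) (-e) (J2 p.2) (K2 p.2) C ((h3 _).trans (by simp [C]))
      ((h4 _).trans (by simp [C])) p.1.1.2 p.1.2.1
    rw [norm_mul, norm_mul]
    have hC0 : 0 ≤ C0 := (norm_nonneg _).trans (h0 p.2)
    calc _ ≤ C0 * ((g p.1.1.1 * g p.1.2.2) * (g p.1.1.2 * g p.1.2.1)) := by
          gcongr
          exact h0 _
      _ = _ := by ring

lemma gauss_torus (E δ c : ℝ) (hE : 0 < E) (hδ : 0 < δ) (hc : c ^ 2 = E ^ 2 / 4)
    {N J1 K1 J2 K2 : Z → ℂ}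
    (hN : Continuous N) (hJ1 : Continuous J1) (hK1 : Continuous K1) (hJ2 : Continuous J2)
    (hK2 : Continuous K2) :
    ∫ q : (ℝ × ℝ) × (ℝ × ℝ), ∫ z, N z *
      (cexp (blk δ c (I * E) (J1 z) (K1 z) q.1.1 q.2.2) *
       cexp (blk δ (-c) (I * (-E : ℝ)) (J2 z) (K2 z) q.1.2 q.2.1)) ∂μ
    = ∫ z, N z * (((Real.pi ^ 2 / (δ ^ 2 + E ^ 2 / 2) : ℝ) : ℂ) *
        cexp ((((δ - I * c) * J1 z ^ 2 + I * E * J1 z * K1 z + (δ + I * c) * K1 z ^ 2) +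
          ((δ + I * c) * J2 z ^ 2 - I * E * J2 z * K2 z + (δ - I * c) * K2 z ^ 2))
          / (4 * ((δ ^ 2 + E ^ 2 / 2 : ℝ) : ℂ)))) ∂μ := by
  rw [integral_integral_swap (integrable_big μ δ c E hδ hN hJ1 hK1 hJ2 hK2)]
  congr 1; ext z
  rw [integral_const_mul]
  congr 1
  have hint : Integrable (fun q : (ℝ × ℝ) × (ℝ × ℝ) =>
      cexp (blk δ c (I * E) (J1 z) (K1 z) q.1.1 q.2.2) *
       cexp (blk δ (-c) (I * (-E : ℝ)) (J2 z) (K2 z) q.1.2 q.2.1)) := by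
    have := integrable_big (Z := Unit) (Measure.dirac ()) δ c E hδ (N := fun _ => 1)
      (J1 := fun _ => J1 z) (K1 := fun _ => K1 z) (J2 := fun _ => J2 z) (K2 := fun _ => K2 z)
      (by fun_prop) (by fun_prop) (by fun_prop) (by fun_prop) (by fun_prop)
    simpa using this.integral_prod_left
  have h4 := swap4 (volume : Measure ℝ) (fun a d => cexp (blk δ c (I * E) (J1 z) (K1 z) a d))
    (fun b c' => cexp (blk δ (-c) (I * (-E : ℝ)) (J2 z) (K2 z) b c')) hint
  refine h4.trans ?_
  unfold blk
  rw [gauss2 E δ c hE hδ hc _ _ _ (by rw [mul_pow, I_sq]; ring),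
    gauss2 E δ (-c) hE hδ (by rw [neg_sq, hc]) _ _ _ (by rw [mul_pow, I_sq]; push_cast; ring)]
  have hS : 0 < δ ^ 2 + E ^ 2 / 2 := by positivity
  rw [mul_mul_mul_comm, ← Complex.exp_add, ← ofReal_mul]
  congr 1
  · congr 1
    rw [div_mul_div_comm, Real.mul_self_sqrt hS.le]; ring
  · congr 1; rw [← add_div]; congr 1; push_cast; ring

lemma cont_torus (E c : ℝ) (hE : 0 < E)
    {N J1 K1 J2 K2 : Z → ℂ}
    (hN : Continuous N) (hJ1 : Continuous J1) (hK1 : Continuous K1) (hJ2 : Continuous J2)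
    (hK2 : Continuous K2) :
    Continuous fun δ : ℝ => ∫ z, N z * (((Real.pi ^ 2 / (δ ^ 2 + E ^ 2 / 2) : ℝ) : ℂ) *
        cexp ((((δ - I * c) * J1 z ^ 2 + I * E * J1 z * K1 z + (δ + I * c) * K1 z ^ 2) +
          ((δ + I * c) * J2 z ^ 2 - I * E * J2 z * K2 z + (δ - I * c) * K2 z ^ 2))
          / (4 * ((δ ^ 2 + E ^ 2 / 2 : ℝ) : ℂ)))) ∂μ := by
  have h0 : ∀ δ : ℝ, δ ^ 2 + E ^ 2 / 2 ≠ 0 := fun δ => by positivity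
  have h1 : ∀ δ : ℝ, (4 * ((δ ^ 2 + E ^ 2 / 2 : ℝ) : ℂ)) ≠ 0 := fun δ =>
    mul_ne_zero (by norm_num) (by exact_mod_cast h0 δ)
  have := continuous_parametric_integral_of_continuous (μ := μ) (X := ℝ)
    (f := fun δ z => N z * (((Real.pi ^ 2 / (δ ^ 2 + E ^ 2 / 2) : ℝ) : ℂ) *
        cexp ((((δ - I * c) * J1 z ^ 2 + I * E * J1 z * K1 z + (δ + I * c) * K1 z ^ 2) +
          ((δ + I * c) * J2 z ^ 2 - I * E * J2 z * K2 z + (δ - I * c) * K2 z ^ 2))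
          / (4 * ((δ ^ 2 + E ^ 2 / 2 : ℝ) : ℂ))))) (by
      simp only [Function.uncurry_def]
      refine Continuous.mul (by fun_prop) (Continuous.mul (continuous_ofReal.comp ?_)
        (Complex.continuous_exp.comp ?_))
      · exact Continuous.div (by fun_prop) (by fun_prop) (fun p => h0 p.1)
      · exact Continuous.div (by fun_prop) (by fun_prop) (fun p => h1 p.1)) isCompact_univ
  simpa using this
end torus

/-- The square root of `s i E`. -/
noncomputable def rr (E s : ℝ) : ℂ :=
  Complex.exp ((s : ℂ) * I * (Real.pi : ℂ) / 4) * ((Real.sqrt E : ℝ) : ℂ)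

lemma rr_sq (E s : ℝ) (hE : 0 < E) (hs : s = 1 ∨ s = -1) : rr E s ^ 2 = s * I * E := by
  unfold rr
  rw [mul_pow, ← ofReal_pow, Real.sq_sqrt hE.le, ← Complex.exp_nat_mul]
  congr 1
  rcases hs with rfl | rfl
  · rw [show ((2 : ℕ) : ℂ) * (((1 : ℝ) : ℂ) * I * Real.pi / 4) = Real.pi / 2 * I by push_cast; ring,
      Complex.exp_pi_div_two_mul_I]; simp
  · rw [show ((2 : ℕ) : ℂ) * (((-1 : ℝ) : ℂ) * I * Real.pi / 4) = -Real.pi / 2 * I by push_cast; ring,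
      Complex.exp_neg_pi_div_two_mul_I]; simp

lemma sq_s {s : ℝ} (hs : s = 1 ∨ s = -1) : (s : ℂ) ^ 2 = 1 := by
  rcases hs with rfl | rfl <;> simp

lemma Fge_eq (E s : ℝ) (hE : 0 < E) (hs : s = 1 ∨ s = -1) (m n : ℕ) (h : n ≤ m) (t x : ℝ) :
    Fge E s m n t x = ((E / (2 * Real.pi) : ℝ) : ℂ) *
      ((Real.sqrt (m.factorial * n.factorial) : ℝ) : ℂ) *
      cexp (-(s : ℂ) * I * E * ((t : ℂ) ^ 2 - (x : ℂ) ^ 2) / 2) *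
      Csum m n (rr E s * (t - s * x)) (rr E s * (t + s * x)) := by
  unfold Fge Csum
  rw [min_eq_right h]
  change _ * _ * _ * rr E s ^ (m - n) * _ * _ = _
  rw [mul_assoc, mul_assoc]
  congr 1
  rw [← mul_assoc, ← mul_pow, Finset.mul_sum]
  refine Finset.sum_congr rfl fun p hp => ?_
  have hp' : p ≤ n := by simpa [Nat.lt_succ_iff] using hp
  have e : (s : ℂ) * I * E * ((t : ℂ) ^ 2 - (x : ℂ) ^ 2) =
      (rr E s * (t - s * x)) * (rr E s * (t + s * x)) := by
    linear_combination (-((t : ℂ) ^ 2 - (x : ℂ) ^ 2)) * rr_sq E s hE hs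
      + rr E s ^ 2 * (x : ℂ) ^ 2 * sq_s hs
  rw [e, mul_pow (rr E s * (t - s * x)) (rr E s * (t + s * x)),
    show m - p = (m - n) + (n - p) by omega, pow_add]
  ring

lemma Fmn_eq (E s : ℝ) (hE : 0 < E) (hs : s = 1 ∨ s = -1) (m n : ℕ) (t x : ℝ) :
    Fmn E s m n t x = ((E / (2 * Real.pi) : ℝ) : ℂ) *
      ((Real.sqrt (m.factorial * n.factorial) : ℝ) : ℂ) *
      cexp (-(s : ℂ) * I * E * ((t : ℂ) ^ 2 - (x : ℂ) ^ 2) / 2) *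
      Csum m n (rr E s * (t - s * x)) (rr E s * (t + s * x)) := by
  unfold Fmn
  split_ifs with h
  · exact Fge_eq E s hE hs m n h t x
  · have hs' : -s = 1 ∨ -s = -1 := by rcases hs with rfl | rfl <;> simp
    rw [Fge_eq E (-s) hE hs' n m (by omega)]
    have hr : (starRingEnd ℂ) (rr E (-s)) = rr E s := by
      unfold rr
      rw [map_mul, conj_ofReal, ← Complex.exp_conj]
      congr 2
      simp [map_ofNat]
    have hC : ∀ a b, (starRingEnd ℂ) (Csum n m a b) =
        Csum n m ((starRingEnd ℂ) a) ((starRingEnd ℂ) b) := by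
      intro a b; unfold Csum; simp [map_sum]
    rw [map_mul, hC, map_mul, map_mul, conj_ofReal, conj_ofReal, ← Complex.exp_conj, Csum_comm,
      mul_comm (m.factorial : ℝ)]
    congr 1
    · congr 2; simp [map_ofNat]
    · congr 1
      · rw [map_mul, hr]; congr 1; simp; ring
      · rw [map_mul, hr]; congr 1; simp

/-- The torus parametrizing generating functions. -/
abbrev TT : Type := (UnitAddCircle × UnitAddCircle) × (UnitAddCircle × UnitAddCircle)

/-- Haar probability measure on `TT`. -/
noncomputable abbrev muT : Measure TT := (hU.prod hU).prod (hU.prod hU)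

/-- Source-independent factor. -/
noncomputable def NN (n m k l : ℕ) (z : TT) : ℂ :=
  en n z.1.1 * en m z.1.2 * (en k z.2.1 * en l z.2.2) *
    cexp (-(ee z.1.1 * ee z.1.2) - ee z.2.1 * ee z.2.2)

/-- Sources. -/
noncomputable def JJ1 (E s x : ℝ) (z : TT) : ℂ := rr E s * (ee z.1.1 + ee z.1.2) - I * E * x
/-- Sources. -/
noncomputable def KK1 (E s t : ℝ) (z : TT) : ℂ := rr E s * s * (ee z.2.2 - ee z.2.1) - I * E * t
/-- Sources. -/
noncomputable def JJ2 (E s t : ℝ) (z : TT) : ℂ := rr E s * s * (ee z.1.2 - ee z.1.1) + I * E * t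
/-- Sources. -/
noncomputable def KK2 (E s x : ℝ) (z : TT) : ℂ := rr E s * (ee z.2.1 + ee z.2.2) + I * E * x

lemma NN_cont (n m k l : ℕ) : Continuous (NN n m k l) := by
  have h1 := ee_cont
  have h2 := en_cont n
  have h3 := en_cont m
  have h4 := en_cont k
  have h5 := en_cont l
  unfold NN; fun_prop
lemma JJ1_cont (E s x : ℝ) : Continuous (JJ1 E s x) := by
  have h1 := ee_cont
  unfold JJ1; fun_prop
lemma KK1_cont (E s x : ℝ) : Continuous (KK1 E s x) := by
  have h1 := ee_cont
  unfold KK1; fun_prop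
lemma JJ2_cont (E s x : ℝ) : Continuous (JJ2 E s x) := by
  have h1 := ee_cont
  unfold JJ2; fun_prop
lemma KK2_cont (E s x : ℝ) : Continuous (KK2 E s x) := by
  have h1 := ee_cont
  unfold KK2; fun_prop

lemma integrand_eq (E s δ : ℝ) (hE : 0 < E) (hs : s = 1 ∨ s = -1) (n m k l : ℕ) (t x : ℝ)
    (q : (ℝ × ℝ) × (ℝ × ℝ)) :
    ((Real.exp (-δ * (q.1.1 ^ 2 + q.1.2 ^ 2 + q.2.1 ^ 2 + q.2.2 ^ 2)) : ℝ) : ℂ) *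
        Fmn E s n m q.1.1 q.1.2 * Fmn E s k l q.2.1 q.2.2 *
        Complex.exp ((2 * Complex.I / ((2 / E : ℝ) : ℂ)) *
          (((q.1.1 - t : ℝ) : ℂ) * ((q.2.2 - x : ℝ) : ℂ)
            - ((q.1.2 - x : ℝ) : ℂ) * ((q.2.1 - t : ℝ) : ℂ)))
    = (((E / (2 * Real.pi) : ℝ) : ℂ) ^ 2 * ((Real.sqrt (n.factorial * m.factorial) : ℝ) : ℂ) *
        ((Real.sqrt (k.factorial * l.factorial) : ℝ) : ℂ)) *
      ∫ z, NN n m k l z *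
      (cexp (blk δ (s * E / 2) (I * E) (JJ1 E s x z) (KK1 E s t z) q.1.1 q.2.2) *
       cexp (blk δ (-(s * E / 2)) (I * (-E : ℝ)) (JJ2 E s t z) (KK2 E s x z) q.1.2 q.2.1)) ∂muT := by
  rw [Fmn_eq E s hE hs, Fmn_eq E s hE hs, ← int_gen, ← int_gen]
  have hE0 : (E : ℂ) ≠ 0 := by exact_mod_cast hE.ne'
  have hk : (2 * Complex.I / ((2 / E : ℝ) : ℂ)) = I * E := by push_cast; field_simp
  rw [hk]
  set e1 := cexp (-(s : ℂ) * I * E * ((q.1.1 : ℂ) ^ 2 - (q.1.2 : ℂ) ^ 2) / 2) with he1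
  set e2 := cexp (-(s : ℂ) * I * E * ((q.2.1 : ℂ) ^ 2 - (q.2.2 : ℂ) ^ 2) / 2) with he2
  set e3 := cexp ((I * E) * (((q.1.1 - t : ℝ) : ℂ) * ((q.2.2 - x : ℝ) : ℂ)
            - ((q.1.2 - x : ℝ) : ℂ) * ((q.2.1 - t : ℝ) : ℂ))) with he3
  rw [Complex.ofReal_exp]
  set e4 := cexp ((-δ * (q.1.1 ^ 2 + q.1.2 ^ 2 + q.2.1 ^ 2 + q.2.2 ^ 2) : ℝ)) with he4
  have hz : ∀ z : TT, NN n m k l z *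
      (cexp (blk δ (s * E / 2) (I * E) (JJ1 E s x z) (KK1 E s t z) q.1.1 q.2.2) *
       cexp (blk δ (-(s * E / 2)) (I * (-E : ℝ)) (JJ2 E s t z) (KK2 E s x z) q.1.2 q.2.1))
      = (e1 * e2 * e3 * e4) * ((en n z.1.1 * en m z.1.2 *
      cexp (ee z.1.1 * (rr E s * (q.1.1 - s * q.1.2)) + ee z.1.2 * (rr E s * (q.1.1 + s * q.1.2))
        - ee z.1.1 * ee z.1.2)) * (en k z.2.1 * en l z.2.2 *
      cexp (ee z.2.1 * (rr E s * (q.2.1 - s * q.2.2)) + ee z.2.2 * (rr E s * (q.2.1 + s * q.2.2))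
        - ee z.2.1 * ee z.2.2))) := by
    intro z
    have key : cexp (-(ee z.1.1 * ee z.1.2) - ee z.2.1 * ee z.2.2) *
      (cexp (blk δ (s * E / 2) (I * E) (JJ1 E s x z) (KK1 E s t z) q.1.1 q.2.2) *
       cexp (blk δ (-(s * E / 2)) (I * (-E : ℝ)) (JJ2 E s t z) (KK2 E s x z) q.1.2 q.2.1))
       = (e1 * e2 * e3 * e4) * (
      cexp (ee z.1.1 * (rr E s * (q.1.1 - s * q.1.2)) + ee z.1.2 * (rr E s * (q.1.1 + s * q.1.2))
        - ee z.1.1 * ee z.1.2) *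
      cexp (ee z.2.1 * (rr E s * (q.2.1 - s * q.2.2)) + ee z.2.2 * (rr E s * (q.2.1 + s * q.2.2))
        - ee z.2.1 * ee z.2.2)) := by
      simp only [he1, he2, he3, he4, ← Complex.exp_add]
      congr 1
      simp only [blk, JJ1, KK1, JJ2, KK2]
      push_cast
      ring
    unfold NN
    linear_combination (en n z.1.1 * en m z.1.2 * (en k z.2.1 * en l z.2.2)) * key
  simp_rw [hz]
  rw [integral_const_mul]
  have hp := integral_prod_mul (μ := hU.prod hU) (ν := hU.prod hU)
    (fun z : UnitAddCircle × UnitAddCircle => en n z.1 * en m z.2 *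
      cexp (ee z.1 * (rr E s * (q.1.1 - s * q.1.2)) + ee z.2 * (rr E s * (q.1.1 + s * q.1.2))
        - ee z.1 * ee z.2))
    (fun z : UnitAddCircle × UnitAddCircle => en k z.1 * en l z.2 *
      cexp (ee z.1 * (rr E s * (q.2.1 - s * q.2.2)) + ee z.2 * (rr E s * (q.2.1 + s * q.2.2))
        - ee z.1 * ee z.2))
  rw [hp]
  ring

lemma limit_eq (E s : ℝ) (hE : 0 < E) (hs : s = 1 ∨ s = -1) (n m k l : ℕ) (t x : ℝ) :
    ∫ z, NN n m k l z * (((Real.pi ^ 2 / ((0 : ℝ) ^ 2 + E ^ 2 / 2) : ℝ) : ℂ) *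
        cexp (((((0 : ℝ) - I * (s * E / 2 : ℝ)) * JJ1 E s x z ^ 2 + I * E * JJ1 E s x z * KK1 E s t z
          + ((0 : ℝ) + I * (s * E / 2 : ℝ)) * KK1 E s t z ^ 2) +
          (((0 : ℝ) + I * (s * E / 2 : ℝ)) * JJ2 E s t z ^ 2 - I * E * JJ2 E s t z * KK2 E s x z
          + ((0 : ℝ) - I * (s * E / 2 : ℝ)) * KK2 E s x z ^ 2))
          / (4 * (((0 : ℝ) ^ 2 + E ^ 2 / 2 : ℝ) : ℂ)))) ∂muT
    = ((2 * Real.pi ^ 2 / E ^ 2 : ℝ) : ℂ) *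
      cexp (-(s : ℂ) * I * E * ((t : ℂ) ^ 2 - (x : ℂ) ^ 2) / 2) *
      (Csum n l (rr E s * (t - s * x)) (rr E s * (t + s * x)) *
        (if m = k then 1 / (m.factorial : ℂ) else 0)) := by
  have hE0 : (E : ℂ) ≠ 0 := by exact_mod_cast hE.ne'
  have hr := rr_sq E s hE hs
  have h1 := ee_cont
  have h2 := en_cont n
  have h3 := en_cont m
  have h4 := en_cont k
  have h5 := en_cont l
  set f : UnitAddCircle → UnitAddCircle → ℂ := fun u v => en n u * en l v *
    cexp (ee u * (rr E s * (t - s * x)) + ee v * (rr E s * (t + s * x)) - ee u * ee v) with hf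
  set g : UnitAddCircle → UnitAddCircle → ℂ := fun u v => en m u * en k v * cexp (ee u * ee v) with hg
  have hz : ∀ z : TT, NN n m k l z * (((Real.pi ^ 2 / ((0 : ℝ) ^ 2 + E ^ 2 / 2) : ℝ) : ℂ) *
        cexp (((((0 : ℝ) - I * (s * E / 2 : ℝ)) * JJ1 E s x z ^ 2 + I * E * JJ1 E s x z * KK1 E s t z
          + ((0 : ℝ) + I * (s * E / 2 : ℝ)) * KK1 E s t z ^ 2) +
          (((0 : ℝ) + I * (s * E / 2 : ℝ)) * JJ2 E s t z ^ 2 - I * E * JJ2 E s t z * KK2 E s x z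
          + ((0 : ℝ) - I * (s * E / 2 : ℝ)) * KK2 E s x z ^ 2))
          / (4 * (((0 : ℝ) ^ 2 + E ^ 2 / 2 : ℝ) : ℂ))))
      = (((2 * Real.pi ^ 2 / E ^ 2 : ℝ) : ℂ) *
        cexp (-(s : ℂ) * I * E * ((t : ℂ) ^ 2 - (x : ℂ) ^ 2) / 2)) *
        (f z.1.1 z.2.2 * g z.1.2 z.2.1) := by
    intro z
    have c1 : ((Real.pi ^ 2 / ((0 : ℝ) ^ 2 + E ^ 2 / 2) : ℝ) : ℂ) =
        ((2 * Real.pi ^ 2 / E ^ 2 : ℝ) : ℂ) := by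
      congr 1; field_simp; ring
    rw [c1]
    have key : cexp (-(ee z.1.1 * ee z.1.2) - ee z.2.1 * ee z.2.2) *
        cexp (((((0 : ℝ) - I * (s * E / 2 : ℝ)) * JJ1 E s x z ^ 2 + I * E * JJ1 E s x z * KK1 E s t z
          + ((0 : ℝ) + I * (s * E / 2 : ℝ)) * KK1 E s t z ^ 2) +
          (((0 : ℝ) + I * (s * E / 2 : ℝ)) * JJ2 E s t z ^ 2 - I * E * JJ2 E s t z * KK2 E s x z
          + ((0 : ℝ) - I * (s * E / 2 : ℝ)) * KK2 E s x z ^ 2))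
          / (4 * (((0 : ℝ) ^ 2 + E ^ 2 / 2 : ℝ) : ℂ)))
        = cexp (-(s : ℂ) * I * E * ((t : ℂ) ^ 2 - (x : ℂ) ^ 2) / 2) *
          (cexp (ee z.1.1 * (rr E s * (t - s * x)) + ee z.2.2 * (rr E s * (t + s * x))
            - ee z.1.1 * ee z.2.2) * cexp (ee z.1.2 * ee z.2.1)) := by
      simp only [← Complex.exp_add]
      congr 1
      simp only [JJ1, KK1, JJ2, KK2]
      generalize ee z.1.1 = a1
      generalize ee z.1.2 = b1
      generalize ee z.2.1 = a2
      generalize ee z.2.2 = b2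
      generalize rr E s = r at hr
      have hI := I_sq
      generalize I = i at hI hr
      push_cast
      have hden : (4 * ((0 : ℂ) ^ 2 + (E : ℂ) ^ 2 / 2)) = 2 * (E : ℂ) ^ 2 := by ring
      rw [hden, ← eq_sub_iff_add_eq', div_eq_iff (mul_ne_zero two_ne_zero (pow_ne_zero 2 hE0))]
      generalize (E : ℂ) = e at *
      rcases hs with rfl | rfl
      · push_cast at hr ⊢
        clear * - hr hI
        grind
      · push_cast at hr ⊢
        clear * - hr hI
        grind
    unfold NN
    simp only [hf, hg]
    linear_combination (en n z.1.1 * en m z.1.2 * (en k z.2.1 * en l z.2.2)) *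
      ((2 * Real.pi ^ 2 / E ^ 2 : ℝ) : ℂ) * key
  simp_rw [hz]
  rw [integral_const_mul, swap4 hU f g (cont_integrable _ (by simp only [hf, hg]; fun_prop))]
  congr 2
  · rw [← int_gen, integral_prod _ (cont_integrable _ (by fun_prop))]
  · rw [← int_delta, integral_prod _ (cont_integrable _ (by fun_prop))]

lemma const_eq (E : ℝ) (hE : 0 < E) (n m l : ℕ) :
    (1 / (Real.pi ^ 2 * (2 / E) ^ 2)) * ((E / (2 * Real.pi)) ^ 2 *
      Real.sqrt (n.factorial * m.factorial) * Real.sqrt (m.factorial * l.factorial)) *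
      (2 * Real.pi ^ 2 / E ^ 2) * (1 / (m.factorial : ℝ)) =
    E / (4 * Real.pi) * (E / (2 * Real.pi)) * Real.sqrt (n.factorial * l.factorial) := by
  have hm : (0 : ℝ) < m.factorial := by positivity
  have h : Real.sqrt (n.factorial * m.factorial) * Real.sqrt (m.factorial * l.factorial)
      = m.factorial * Real.sqrt (n.factorial * l.factorial) := by
    rw [← Real.sqrt_mul (by positivity), show (n.factorial * m.factorial : ℝ) *
      (m.factorial * l.factorial) = m.factorial ^ 2 * (n.factorial * l.factorial) by ring,
      Real.sqrt_mul (by positivity), Real.sqrt_sq hm.le]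
  rw [mul_assoc ((E / (2 * Real.pi)) ^ 2), h]
  have := Real.pi_pos
  field_simp
  ring

/-- matrix-unit (projector) relations at the self-dual point
`θ = 2/E`: the regularized star products exist pointwise and satisfy
`F^s_{n,m} ⋆_θ F^s_{k,l} = (E/4π) δ_{mk} F^s_{n,l}`. -/
theorem Fmn_star_projector (E : ℝ) (hE : 0 < E) (n m k l : ℕ) (s : ℝ)
    (hs : s = 1 ∨ s = -1) (t x : ℝ) :
    Filter.Tendsto
      (fun δ : ℝ => starInt (2 / E) δ
        (fun p => Fmn E s n m p.1 p.2) (fun p => Fmn E s k l p.1 p.2) t x)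
      (nhdsWithin (0 : ℝ) (Set.Ioi 0))
      (nhds (((E / (4 * Real.pi) : ℝ) : ℂ) * (if m = k then 1 else 0) * Fmn E s n l t x)) := by
  have hcont := cont_torus muT E (s * E / 2) hE (NN_cont n m k l) (JJ1_cont E s x) (KK1_cont E s t)
    (JJ2_cont E s t) (KK2_cont E s x)
  set A : ℂ := ((1 / (Real.pi ^ 2 * (2 / E) ^ 2) : ℝ) : ℂ) with hA
  set B : ℂ := (((E / (2 * Real.pi) : ℝ) : ℂ) ^ 2 *
    ((Real.sqrt (n.factorial * m.factorial) : ℝ) : ℂ) *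
    ((Real.sqrt (k.factorial * l.factorial) : ℝ) : ℂ)) with hB
  have hlim := ((hcont.const_mul (A * B)).tendsto 0).mono_left
    (nhdsWithin_le_nhds (s := Set.Ioi (0 : ℝ)))
  rw [limit_eq E s hE hs n m k l t x] at hlim
  refine (hlim.congr' ?_).trans (le_of_eq ?_)
  · filter_upwards [self_mem_nhdsWithin] with δ hδ
    have hδ' : 0 < δ := hδ
    rw [← gauss_torus muT E δ (s * E / 2) hE hδ' (by rcases hs with rfl | rfl <;> ring)
      (NN_cont n m k l) (JJ1_cont E s x) (KK1_cont E s t) (JJ2_cont E s t) (KK2_cont E s x)]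
    unfold starInt
    simp_rw [integrand_eq E s δ hE hs n m k l t x]
    rw [integral_const_mul, mul_assoc]
  · congr 1
    rw [Fmn_eq E s hE hs]
    split_ifs with h
    · subst h
      have hc := congrArg (fun r : ℝ => (r : ℂ)) (const_eq E hE n m l)
      simp only [ofReal_mul] at hc
      have e1 : ((1 / (m.factorial : ℝ) : ℝ) : ℂ) = 1 / (m.factorial : ℂ) := by push_cast; rfl
      rw [e1, ← hA] at hc
      rw [hB, mul_one]
      simp only [ofReal_pow] at hc
      linear_combination (cexp (-(s : ℂ) * I * E * ((t : ℂ) ^ 2 - (x : ℂ) ^ 2) / 2) *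
        Csum n l (rr E s * (t - s * x)) (rr E s * (t + s * x))) * hc
    · simp
end
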